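/- Let R be the t×n Hankel determinantal ring over a field F of characteristic p > 0, with 2 ≤ t ≤ n, and m_R its homogeneous maximal ideal. Then the F-pure threshold of m_R in R equals 2(t-1)/(n-t+2); moreover, for each q = p^e, ν_e(m_R) = (t-1)·⌊2(q-1)/(n-t+2)⌋. -/

import Mathlib

set_option synthInstance.maxHeartbeats 1000000
set_option maxHeartbeats 1000000

open MvPolynomial Matrix Filter

/-- The `q`-th Frobenius power of an ideal: the ideal generated by `q`-th powers of its
elements. -/
def frobeniusPower {R : Type*} [CommRing R] (q : ℕ) (I : Ideal R) : Ideal R :=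
  Ideal.span ((fun x => x ^ q) '' (I : Set R))

namespace HK

/-- Weight of an exponent vector. -/
noncomputable def wgt {σ : Type*} (w : σ → ℤ) (m : σ →₀ ℕ) : ℤ := Finsupp.weight w m

section DLsec
variable {σ τ F : Type*} [Field F]

lemma wgt_add (w : σ → ℤ) (m m' : σ →₀ ℕ) : wgt w (m + m') = wgt w m + wgt w m' := by
  simp [wgt]

lemma wgt_zero (w : σ → ℤ) : wgt w 0 = 0 := by simp [wgt]

lemma wgt_single (w : σ → ℤ) (i : σ) (k : ℕ) : wgt w (Finsupp.single i k) = k * w i := by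
  simp [wgt, Finsupp.weight_single]

lemma wgt_eq_sum [Fintype σ] (w : σ → ℤ) (m : σ →₀ ℕ) : wgt w m = ∑ i, (m i : ℤ) * w i := by
  simp [wgt, Finsupp.weight_apply, Finsupp.sum_fintype]

/-- All monomials of `f` have weight at most `j`. -/
def DL (w : σ → ℤ) (j : ℤ) (f : MvPolynomial σ F) : Prop :=
  ∀ m, coeff m f ≠ 0 → wgt w m ≤ j

lemma DL.mono {w : σ → ℤ} {i j : ℤ} {f : MvPolynomial σ F} (h : DL w i f) (hij : i ≤ j) :
    DL w j f := fun m hm => (h m hm).trans hij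

lemma DL.zero (w : σ → ℤ) (j : ℤ) : DL w j (0 : MvPolynomial σ F) := by
  intro m hm; simp at hm

lemma DL.add {w : σ → ℤ} {j : ℤ} {f g : MvPolynomial σ F} (hf : DL w j f) (hg : DL w j g) :
    DL w j (f + g) := by
  intro m hm
  by_cases h : coeff m f = 0
  · exact hg m (by rw [coeff_add, h, zero_add] at hm; exact hm)
  · exact hf m h

lemma DL.neg {w : σ → ℤ} {j : ℤ} {f : MvPolynomial σ F} (hf : DL w j f) :
    DL w j (-f) := by
  intro m hm
  exact hf m (by simpa using hm)

lemma DL.sub {w : σ → ℤ} {j : ℤ} {f g : MvPolynomial σ F} (hf : DL w j f) (hg : DL w j g) :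
    DL w j (f - g) := by
  rw [sub_eq_add_neg]; exact hf.add hg.neg

lemma DL.mul {w : σ → ℤ} {i j : ℤ} {f g : MvPolynomial σ F} (hf : DL w i f) (hg : DL w j g) :
    DL w (i + j) (f * g) := by
  classical
  intro m hm
  have := support_mul f g (mem_support_iff.mpr hm)
  obtain ⟨a, ha, b, hb, rfl⟩ := Finset.mem_add.mp this
  rw [wgt_add]
  exact add_le_add (hf a (mem_support_iff.mp ha)) (hg b (mem_support_iff.mp hb))

lemma DL.mul' {w : σ → ℤ} {i j k : ℤ} {f g : MvPolynomial σ F} (hf : DL w i f) (hg : DL w j g)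
    (h : i + j ≤ k) : DL w k (f * g) := (hf.mul hg).mono h

lemma DL.C (w : σ → ℤ) {j : ℤ} (hj : 0 ≤ j) (c : F) : DL w j (C c : MvPolynomial σ F) := by
  classical
  intro m hm
  rw [coeff_C] at hm
  split_ifs at hm with h
  · rw [← h, wgt_zero]; exact hj
  · exact absurd rfl hm

lemma DL.one (w : σ → ℤ) {j : ℤ} (hj : 0 ≤ j) : DL w j (1 : MvPolynomial σ F) := DL.C w hj 1

lemma DL.smul {w : σ → ℤ} {j : ℤ} {f : MvPolynomial σ F} (c : F) (hf : DL w j f) :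
    DL w j (c • f) := by
  rw [smul_eq_C_mul]
  simpa using (DL.C w le_rfl c).mul hf

lemma DL.X (w : σ → ℤ) {j : ℤ} (i : σ) (hj : w i ≤ j) : DL w j (X i : MvPolynomial σ F) := by
  classical
  intro m hm
  rw [coeff_X] at hm
  split_ifs at hm with h
  · rw [← h, wgt_single]; simpa using hj
  · exact absurd rfl hm

lemma DL.sum {ι : Type*} {w : σ → ℤ} {j : ℤ} (s : Finset ι) (f : ι → MvPolynomial σ F)
    (hf : ∀ i ∈ s, DL w j (f i)) : DL w j (∑ i ∈ s, f i) := by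
  classical
  induction s using Finset.induction_on with
  | empty => simpa using DL.zero w j
  | insert a s ha ih =>
    rw [Finset.sum_insert ha]
    exact (hf a (by simp)).add (ih fun i hi => hf i (by simp [hi]))

lemma DL.pow {w : σ → ℤ} {j : ℤ} {f : MvPolynomial σ F} (hf : DL w j f) (k : ℕ) :
    DL w (k * j) (f ^ k) := by
  induction k with
  | zero => simpa using DL.one w le_rfl
  | succ k ih => rw [pow_succ]; exact ih.mul' hf (by push_cast; linarith [add_mul (k:ℤ) 1 j])

lemma DL.prod {ι : Type*} {w : σ → ℤ} (s : Finset ι) (f : ι → MvPolynomial σ F) (j : ι → ℤ)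
    (hf : ∀ i ∈ s, DL w (j i) (f i)) : DL w (∑ i ∈ s, j i) (∏ i ∈ s, f i) := by
  classical
  induction s using Finset.induction_on with
  | empty => simpa using DL.one w le_rfl
  | insert a s ha ih =>
    rw [Finset.sum_insert ha, Finset.prod_insert ha]
    exact (hf a (by simp)).mul (ih fun i hi => hf i (by simp [hi]))

lemma DL.det {r : ℕ} {w : σ → ℤ} (M : Matrix (Fin r) (Fin r) (MvPolynomial σ F)) (j : ℤ)
    (hf : ∀ a b, DL w j (M a b)) : DL w (r * j) M.det := by
  rw [Matrix.det_apply]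
  refine DL.sum _ _ fun s _ => ?_
  have : DL w (r * j) (∏ i, M (s i) i) := by
    simpa using DL.prod Finset.univ (fun i => M (s i) i) (fun _ => j) (fun i _ => hf _ _)
  rcases Int.units_eq_one_or (Equiv.Perm.sign s) with h | h <;> rw [h]
  · simpa using this
  · simpa using this.neg

lemma DL.aeval {w : σ → ℤ} {v : τ → ℤ} {j : ℤ} (g : σ → MvPolynomial τ F)
    (hg : ∀ i, DL v (w i) (g i)) {f : MvPolynomial σ F} (hf : DL w j f) :
    DL v j (MvPolynomial.aeval g f) := by
  classical
  rw [f.as_sum, map_sum]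
  refine DL.sum _ _ fun m hm => ?_
  rw [aeval_monomial]
  have h1 := hf m (mem_support_iff.mp hm)
  refine (DL.C v le_rfl _ |>.mul (j := wgt w m) ?_).mono (by linarith)
  rw [Finsupp.prod]
  have : wgt w m = ∑ i ∈ m.support, (m i : ℤ) * w i := by
    simp [wgt, Finsupp.weight_apply, Finsupp.sum]
  rw [this]
  exact DL.prod _ _ _ fun i _ => (hg i).pow _

lemma exists_DL (w : σ → ℤ) (f : MvPolynomial σ F) : ∃ j : ℕ, DL w j f := by
  classical
  refine ⟨∑ m ∈ f.support, (wgt w m).toNat, fun m hm => ?_⟩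
  have := Finset.single_le_sum (f := fun m => (wgt w m).toNat) (fun _ _ => Nat.zero_le _)
    (mem_support_iff.mpr hm)
  have h2 := Int.self_le_toNat (wgt w m)
  have : ((wgt w m).toNat : ℤ) ≤ ((∑ m ∈ f.support, (wgt w m).toNat : ℕ) : ℤ) := by
    exact_mod_cast this
  linarith

/-- exact top degree -/
lemma exists_top (w : σ → ℤ) {f : MvPolynomial σ F} (hf : f ≠ 0) :
    ∃ j : ℤ, DL w j f ∧ ¬ DL w (j - 1) f := by
  classical
  obtain ⟨m, hm, hmax⟩ := Finset.exists_max_image f.support (wgt w)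
    (by rwa [Finset.nonempty_iff_ne_empty, ne_eq, support_eq_empty])
  refine ⟨wgt w m, fun m' h' => hmax m' (mem_support_iff.mpr h'), fun h => ?_⟩
  have := h m (mem_support_iff.mp hm)
  linarith

lemma DL_split (w : σ → ℤ) (j : ℤ) (f : MvPolynomial σ F) (hf : DL w j f)
    (hf' : ¬ DL w (j - 1) f) :
    ∃ f0 f1, f = f0 + f1 ∧ f0 ≠ 0 ∧ (∀ m, coeff m f0 ≠ 0 → wgt w m = j) ∧ DL w (j - 1) f1 := by
  classical
  refine ⟨weightedHomogeneousComponent w j f, f - weightedHomogeneousComponent w j f,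
    by ring, ?_, ?_, ?_⟩
  · intro h
    apply hf'
    intro m hm
    have h1 := hf m hm
    have h2 : wgt w m ≠ j := by
      intro h2
      have := congrArg (coeff m) h
      rw [coeff_weightedHomogeneousComponent] at this
      rw [show Finsupp.weight w m = wgt w m from rfl, if_pos h2] at this
      exact hm (by simpa using this)
    omega
  · intro m hm
    rw [coeff_weightedHomogeneousComponent] at hm
    by_contra h
    exact hm (if_neg h)
  · intro m hm
    rw [coeff_sub, coeff_weightedHomogeneousComponent,
      show Finsupp.weight w m = wgt w m from rfl] at hm
    by_cases h : wgt w m = j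
    · rw [if_pos h] at hm; simp at hm
    · rw [if_neg h, sub_zero] at hm
      have := hf m hm
      omega

lemma not_DL_mul {w : σ → ℤ} {i j : ℤ} {f g : MvPolynomial σ F} (hf : ¬ DL w (i - 1) f)
    (hg : ¬ DL w (j - 1) g) : ¬ DL w (i + j - 1) (f * g) := by
  classical
  have hf0 : f ≠ 0 := by rintro rfl; exact hf (DL.zero _ _)
  have hg0 : g ≠ 0 := by rintro rfl; exact hg (DL.zero _ _)
  obtain ⟨i', h1, h2⟩ := exists_top w hf0
  obtain ⟨j', h3, h4⟩ := exists_top w hg0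
  have hi : i ≤ i' := by
    by_contra h; exact hf (h1.mono (by omega))
  have hj : j ≤ j' := by
    by_contra h; exact hg (h3.mono (by omega))
  intro h
  obtain ⟨f0, f1, rfl, hf0', hfw, hf1⟩ := DL_split w i' f h1 h2
  obtain ⟨g0, g1, rfl, hg0', hgw, hg1⟩ := DL_split w j' g h3 h4
  have h5 : DL w (i' + j' - 1) (f0 * g0) := by
    have e : f0 * g0 = (f0 + f1) * (g0 + g1) - (f0 + f1) * g1 - f1 * g0 := by ring
    rw [e]
    refine ((h.mono (by omega)).sub (h1.mul' hg1 (by omega))).sub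
      (hf1.mul' (j := j') (fun m hm => (hgw m hm).le) (by omega))
  obtain ⟨m, hm⟩ := ne_zero_iff.mp (mul_ne_zero hf0' hg0')
  have h6 := h5 m hm
  obtain ⟨a, ha, b, hb, rfl⟩ := Finset.mem_add.mp (support_mul f0 g0 (mem_support_iff.mpr hm))
  rw [wgt_add, hfw a (mem_support_iff.mp ha), hgw b (mem_support_iff.mp hb)] at h6
  omega

lemma DL_cancel {w : σ → ℤ} {i j : ℤ} {f g : MvPolynomial σ F} (hf : ¬ DL w (i - 1) f)
    (h : DL w (i + j) (f * g)) : DL w j g := by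
  by_contra hg
  have := not_DL_mul hf (j := j + 1) (g := g) (by simpa using hg)
  exact this (by convert h using 1; ring)

lemma not_DL_pow {w : σ → ℤ} {i : ℤ} {f : MvPolynomial σ F} (hf : ¬ DL w (i - 1) f) (k : ℕ) :
    ¬ DL w (k * i - 1) (f ^ k) := by
  induction k with
  | zero =>
    intro h
    have := h 0 (by simp)
    rw [wgt_zero] at this; simp at this
  | succ k ih =>
    rw [pow_succ]
    have := not_DL_mul ih hf
    convert this using 2
    push_cast; ring

end DLsec

end HK

namespace HK

section seqs
variable {B : Type*} [CommRing B]

/-- `x` satisfies the linear recurrence with coefficients `a`. -/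
def Rec (r : ℕ) (a : Fin r → B) (x : ℕ → B) : Prop :=
  ∀ j, x (j + r) = ∑ i : Fin r, a i * x (j + i)

/-- companion matrix -/
def comp (r : ℕ) (a : Fin r → B) : Matrix (Fin r) (Fin r) B :=
  of fun i j => if (i : ℕ) + 1 < r then (if (j : ℕ) = i + 1 then 1 else 0) else a j

lemma comp_mulVec {r : ℕ} {a : Fin r → B} {x : ℕ → B} (hx : Rec r a x) (b : ℕ) (i : Fin r) :
    ∑ j, comp r a i j * x (j + b) = x (i + (b + 1)) := by
  unfold comp
  by_cases h : (i : ℕ) + 1 < r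
  · simp only [of_apply, h, if_true]
    rw [Finset.sum_eq_single (⟨i + 1, h⟩ : Fin r)]
    · simp; congr 1; ring
    · intro j _ hj
      rw [if_neg, zero_mul]
      intro h'; exact hj (Fin.ext h')
    · simp
  · simp only [of_apply, h, if_false]
    have := hx b
    have h2 : (i : ℕ) + 1 = r := by have := i.2; omega
    rw [show (i : ℕ) + (b + 1) = b + r by omega, this]
    exact Finset.sum_congr rfl fun j _ => by rw [add_comm]

lemma cramer_trick {r : ℕ} (M : Matrix (Fin (r + 1)) (Fin (r + 1)) B) (v : Fin (r + 1) → B)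
    (i : Fin (r + 1)) : (M.updateCol i (M *ᵥ v)).det = M.det * v i := by
  have : M.cramer (M *ᵥ v) = M.det • v := by
    rw [cramer_eq_adjugate_mulVec, mulVec_mulVec, adjugate_mul, smul_mulVec, one_mulVec]
  rw [← cramer_apply, this]; rfl

lemma det_comp (r : ℕ) (a : Fin (r + 1) → B) (z : B) :
    (z • (1 : Matrix (Fin (r + 1)) (Fin (r + 1)) B) - comp (r + 1) a).det
      = z ^ (r + 1) - ∑ i, a i * z ^ (i : ℕ) := by
  set M := z • (1 : Matrix (Fin (r + 1)) (Fin (r + 1)) B) - comp (r + 1) a with hM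
  set Q := z ^ (r + 1) - ∑ i, a i * z ^ (i : ℕ) with hQ
  have h1 : M *ᵥ (fun i => z ^ (i : ℕ)) = fun i => if i = Fin.last r then Q else 0 := by
    ext i
    rw [hM, sub_mulVec, smul_mulVec, one_mulVec]
    simp only [Pi.sub_apply, Pi.smul_apply, smul_eq_mul, mulVec, dotProduct]
    by_cases h : (i : ℕ) + 1 < r + 1
    · rw [if_neg (by rintro rfl; simp at h)]
      unfold comp
      simp only [of_apply, h, if_true]
      rw [Finset.sum_eq_single (⟨i + 1, h⟩ : Fin (r + 1))]
      · simp; ring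
      · intro j _ hj
        rw [if_neg, zero_mul]
        intro h'; exact hj (Fin.ext h')
      · simp
    · have h2 : (i : ℕ) = r := by have := i.2; omega
      rw [if_pos (Fin.ext h2)]
      unfold comp
      simp only [of_apply, h, if_false]
      rw [hQ, h2]
      ring
  have h2 := cramer_trick M (fun i => z ^ (i : ℕ)) 0
  simp only [Fin.val_zero, pow_zero, mul_one] at h2
  rw [← h2, h1, det_succ_column_zero, Finset.sum_eq_single (Fin.last r)]
  · have h3 : ((M.updateCol 0 fun i => if i = Fin.last r then Q else 0).submatrix
        (Fin.last r).succAbove Fin.succ).det = (-1) ^ r := by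
      rw [det_of_isLowerTriangular]
      · rw [Finset.prod_eq_pow_card (b := (-1 : B))]
        · simp
        · intro i _
          simp [hM, comp, Fin.ext_iff]
      · intro i j hij
        have hij' : i < j := hij
        have : (i : ℕ) < j := hij'
        simp [hM, comp, Matrix.one_apply, Fin.ext_iff]
        split_ifs <;> first | rfl | omega | simp
    rw [h3]
    simp only [updateCol_self, if_true, Fin.val_last]
    have : ((-1 : B) ^ r) * (-1) ^ r = 1 := by rw [← mul_pow]; simp
    linear_combination Q * this
  · intro i _ hi
    simp [hi]
  · simp

lemma det_comp' (r : ℕ) (a : Fin (r + 1) → B) :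
    (comp (r + 1) a).det = (-1) ^ r * a 0 := by
  have h := det_comp r a 0
  rw [zero_smul, zero_sub, det_neg, Finset.sum_eq_single 0] at h
  · simp at h
    have h2 : ((-1 : B) ^ (r + 1)) * (-1) ^ (r + 1) = 1 := by rw [← mul_pow]; simp
    calc _ = ((-1 : B) ^ (r + 1)) * ((-1) ^ (r + 1) * (comp (r + 1) a).det) := by
          rw [← mul_assoc, h2, one_mul]
      _ = _ := by rw [h]; ring
  · intro i _ hi
    have : (i : ℕ) ≠ 0 := fun h => hi (Fin.ext h)
    simp [this]
  · simp

/-- minors with column offsets `b` -/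
def Dt (r : ℕ) (x : ℕ → B) (b : Fin r → ℕ) : B := (of fun i j : Fin r => x (i + b j)).det

/-- shifted principal minors -/
def Dm (r : ℕ) (x : ℕ → B) (m : ℕ) : B := Dt r x fun j => j + m

lemma Dt_comp {r : ℕ} {a : Fin r → B} {x : ℕ → B} (hx : Rec r a x) (b : Fin r → ℕ) :
    Dt r x (fun j => b j + 1) = (comp r a).det * Dt r x b := by
  unfold Dt
  rw [← det_mul]
  congr 1
  ext i j
  simp only [of_apply, mul_apply]
  exact (comp_mulVec hx (b j) i).symm

lemma Dm_succ {r : ℕ} {a : Fin (r + 1) → B} {x : ℕ → B} (hx : Rec (r + 1) a x) (m : ℕ) :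
    Dm (r + 1) x (m + 1) = (-1) ^ r * a 0 * Dm (r + 1) x m := by
  rw [← det_comp', Dm, Dm, ← Dt_comp hx]
  rfl

lemma Dm_eq {r : ℕ} {a : Fin (r + 1) → B} {x : ℕ → B} (hx : Rec (r + 1) a x) (m : ℕ) :
    Dm (r + 1) x m = ((-1) ^ r) ^ m * a 0 ^ m * Dm (r + 1) x 0 := by
  induction m with
  | zero => simp
  | succ m ih => rw [Dm_succ hx, ih]; ring

lemma a0_Dm {r : ℕ} {a : Fin (r + 1) → B} {x : ℕ → B} (hx : Rec (r + 1) a x) (m : ℕ) :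
    Dm (r + 1) x 0 * a 0 ^ m = ((-1) ^ r) ^ m * Dm (r + 1) x m := by
  rw [Dm_eq hx m]
  have : (((-1 : B) ^ r) ^ m) * ((-1) ^ r) ^ m = 1 := by
    rw [← mul_pow, ← mul_pow]; simp
  linear_combination (-(a 0 ^ m * Dm (r + 1) x 0)) * this

lemma map_Dt {B' : Type*} [CommRing B'] (f : B →+* B') (r : ℕ) (x : ℕ → B) (b : Fin r → ℕ) :
    f (Dt r x b) = Dt r (fun j => f (x j)) b := by
  unfold Dt
  rw [RingHom.map_det]; rfl

lemma minor_zero {r : ℕ} {a : Fin r → B} {x : ℕ → B} (hx : Rec r a x) (b : Fin (r + 1) → ℕ) :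
    Dt (r + 1) x b = 0 := by
  unfold Dt
  set M := (of fun i j : Fin (r + 1) => x (i + b j)) with hM
  have h := cramer_trick Mᵀ (Fin.snoc a (-1)) (Fin.last r)
  have h2 : Mᵀ *ᵥ (Fin.snoc a (-1) : Fin (r + 1) → B) = 0 := by
    ext j
    simp only [mulVec, dotProduct, Fin.sum_univ_castSucc, hM, transpose_apply, of_apply,
      Fin.snoc_castSucc, Fin.snoc_last, Fin.val_castSucc, Fin.val_last, Pi.zero_apply]
    have := hx (b j)
    rw [add_comm r, this, mul_neg, mul_one, add_neg_eq_zero]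
    exact Finset.sum_congr rfl fun i _ => by rw [mul_comm, add_comm]
  rw [h2, det_transpose, Fin.snoc_last] at h
  have h3 : (Mᵀ.updateCol (Fin.last r) 0).det = 0 := det_eq_zero_of_column_eq_zero (Fin.last r) (by simp)
  rw [h3] at h
  have := h.symm
  simpa using this

section gamma
variable {F : Type*} [Field F] [Algebra F B]

/-- span of minors -/
def Vsp (F : Type*) [Field F] [Algebra F B] (r : ℕ) (x : ℕ → B) (m : ℕ) : Submodule F B :=
  Submodule.span F {y | ∃ b : Fin r → ℕ, (∀ j, b j ≤ m) ∧ y = Dt r x b}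

lemma coeff_det_mem (r : ℕ) (y z : Matrix (Fin r) (Fin r) B) (V : Submodule F B)
    (hV : ∀ s : Finset (Fin r), (of (s.piecewise y z)).det ∈ V) (l : ℕ) :
    ((of fun i j => Polynomial.X * Polynomial.C (y i j) + Polynomial.C (z i j)).det).coeff l
      ∈ V := by
  have h := (detRowAlternating (R := Polynomial B) (n := Fin r)).toMultilinearMap.map_add_univ
    (fun i j => Polynomial.X * Polynomial.C (y i j)) (fun i j => Polynomial.C (z i j))
  have e : (of fun i j => Polynomial.X * Polynomial.C (y i j) + Polynomial.C (z i j)).det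
    = ∑ s : Finset (Fin r), Polynomial.X ^ s.card *
        Polynomial.C (of (s.piecewise y z)).det := by
    refine Eq.trans h (Finset.sum_congr rfl fun s _ => ?_)
    rw [RingHom.map_det]
    have : (∏ i, if i ∈ s then (Polynomial.X : Polynomial B) else 1)
        = Polynomial.X ^ s.card := by
      rw [Finset.prod_ite_mem]; simp
    rw [← this, ← det_mul_column]
    change det _ = det _
    congr 1
    ext1 i j
    simp only [of_apply, Finset.piecewise, RingHom.mapMatrix_apply, map_apply]
    split_ifs <;> simp
  rw [e, Polynomial.finsetSum_coeff]
  refine V.sum_mem fun s _ => ?_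
  rw [mul_comm, Polynomial.coeff_C_mul_X_pow]
  split_ifs
  · exact hV s
  · exact V.zero_mem

lemma Vsp_step {r : ℕ} {a : Fin (r + 1) → B} {x : ℕ → B} (hx : Rec (r + 1) a x) (m : ℕ)
    (l : Fin (r + 1)) {y : B} (hy : y ∈ Vsp F (r + 1) x m) :
    a l * y ∈ Vsp F (r + 1) x (m + 1) := by
  unfold Vsp at hy
  induction hy using Submodule.span_induction with
  | zero => simp
  | add u v _ _ h1 h2 => rw [mul_add]; exact Submodule.add_mem _ h1 h2
  | smul c u _ h => rw [mul_smul_comm]; exact Submodule.smul_mem _ _ h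
  | mem u hu =>
    obtain ⟨b, hb, rfl⟩ := hu
    have h1 := det_comp r (fun i => Polynomial.C (a i)) (Polynomial.X : Polynomial B)
    set W : Matrix (Fin (r + 1)) (Fin (r + 1)) (Polynomial B) :=
      of fun i j => Polynomial.C (x (i + b j)) with hW
    have hWd : W.det = Polynomial.C (Dt (r + 1) x b) := by
      rw [Dt, RingHom.map_det]; rfl
    have h2 : ((Polynomial.X : Polynomial B) •
        (1 : Matrix (Fin (r + 1)) (Fin (r + 1)) (Polynomial B)) -
          comp (r + 1) (fun i => Polynomial.C (a i))) * W =
        (of fun i j => Polynomial.X * Polynomial.C ((of fun j i => x (i + b j) :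
          Matrix (Fin (r + 1)) (Fin (r + 1)) B) i j) +
          Polynomial.C ((of fun j i => - x (i + (b j + 1)) :
          Matrix (Fin (r + 1)) (Fin (r + 1)) B) i j))ᵀ := by
      rw [sub_mul, smul_mul, one_mul]
      ext1 i j
      have hx' : Rec (r + 1) (fun i => Polynomial.C (a i)) (fun j => Polynomial.C (x j)) := by
        intro j
        simp only [hx j, map_sum, map_mul]
      have := comp_mulVec hx' (b j) i
      simp only [Matrix.sub_apply, Matrix.smul_apply, smul_eq_mul, mul_apply, hW, of_apply, this,
        transpose_apply, map_neg]
      ring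
    have h3 := congrArg det h2
    rw [det_mul, h1, hWd, det_transpose] at h3
    have h4 := congrArg (fun P => Polynomial.coeff P l) h3
    simp only [Polynomial.coeff_mul_C, Polynomial.coeff_sub, Polynomial.coeff_X_pow,
      Polynomial.finsetSum_coeff, Polynomial.coeff_C_mul] at h4
    rw [if_neg (by have := l.2; omega), Finset.sum_eq_single l, if_pos rfl, mul_one] at h4
    · have h5 : a l * Dt (r + 1) x b = (-1 : F) • ((0 - a l) * Dt (r + 1) x b) := by
        rw [neg_one_smul]; ring
      rw [h5, h4]
      refine Submodule.smul_mem _ _ (coeff_det_mem (F := F) _ _ _ _ (fun s => ?_) _)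
      have h6 : ∃ ε : F, (of (s.piecewise (of fun j i : Fin (r + 1) => x (i + b j))
          (of fun j i : Fin (r + 1) => - x (i + (b j + 1))))).det =
          ε • Dt (r + 1) x (fun j => if j ∈ s then b j else b j + 1) := by
        refine ⟨∏ j, if j ∈ s then 1 else -1, ?_⟩
        rw [Dt, ← det_transpose (of fun i j : Fin (r + 1) => x (i + if j ∈ s then b j else b j + 1)),
          Algebra.smul_def, map_prod, ← det_mul_column]
        congr 1
        ext1 i j
        simp only [of_apply, Finset.piecewise, transpose_apply]
        split_ifs <;> simp
      obtain ⟨ε, h6⟩ := h6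
      rw [h6]
      refine Submodule.smul_mem _ _ (Submodule.subset_span ⟨_, fun j => ?_, rfl⟩)
      have := hb j
      split_ifs <;> omega
    · intro i _ hi
      rw [if_neg, mul_zero]
      intro h; exact hi (Fin.ext h.symm)
    · simp

lemma Dm_mem_Vsp (r : ℕ) (x : ℕ → B) (m : ℕ) (hm : r ≤ m + 1) :
    Dm r x 0 ∈ Vsp F r x m :=
  Submodule.subset_span ⟨_, fun j => by have := j.2; omega, rfl⟩

lemma Vsp_mono (r : ℕ) (x : ℕ → B) {m m' : ℕ} (h : m ≤ m') : Vsp F r x m ≤ Vsp F r x m' :=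
  Submodule.span_mono (by rintro y ⟨b, hb, rfl⟩; exact ⟨b, fun j => (hb j).trans h, rfl⟩)

end gamma
end seqs
end HK

namespace HK

section inj
variable {F : Type*} [Field F] {α α' β : Type*}

/-- split variables -/
noncomputable def Esp (F : Type*) [Field F] (α β : Type*) :
    MvPolynomial (α ⊕ β) F ≃ₐ[F] MvPolynomial β (MvPolynomial α F) :=
  (renameEquiv F (Equiv.sumComm α β)).trans (sumAlgEquiv F β α)

lemma Esp_inl (i : α) : Esp F α β (X (Sum.inl i)) = C (X i) := by
  simp only [Esp, AlgEquiv.trans_apply, renameEquiv_apply, rename_X, Equiv.sumComm_apply,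
    Sum.swap_inl]
  exact sumRingEquiv_X_inr F β α i

lemma Esp_inr (i : β) : Esp F α β (X (Sum.inr i)) = X i := by
  simp only [Esp, AlgEquiv.trans_apply, renameEquiv_apply, rename_X, Equiv.sumComm_apply,
    Sum.swap_inr]
  exact sumRingEquiv_X_inl F β α i

lemma Esp_rename (p : MvPolynomial α F) : Esp F α β (rename Sum.inl p) = C p := by
  have : ((Esp F α β).toAlgHom.comp (rename Sum.inl)) =
      (Algebra.ofId (MvPolynomial α F) (MvPolynomial β (MvPolynomial α F))).restrictScalars F := by
    apply algHom_ext
    intro i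
    rw [AlgHom.comp_apply, rename_X]
    exact Esp_inl i
  exact DFunLike.congr_fun this p

lemma injA (θ : MvPolynomial α F →ₐ[F] MvPolynomial α' F) (h : Function.Injective θ) :
    Function.Injective (aeval (R := F) (Sum.elim (fun i => rename Sum.inl (θ (X i)))
      (fun j : β => (X (Sum.inr j) : MvPolynomial (α' ⊕ β) F)))) := by
  have key : ∀ f, Esp F α' β ((aeval (R := F) (Sum.elim (fun i => rename Sum.inl (θ (X i)))
      (fun j : β => (X (Sum.inr j) : MvPolynomial (α' ⊕ β) F)))) f) =
      MvPolynomial.map (θ : MvPolynomial α F →+* MvPolynomial α' F) (Esp F α β f) := by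
    intro f
    have : ((Esp F α' β).toAlgHom.comp ((aeval (R := F) (Sum.elim (fun i => rename Sum.inl (θ (X i)))
      (fun j : β => (X (Sum.inr j) : MvPolynomial (α' ⊕ β) F)))))) =
      ((mapAlgHom θ).comp (Esp F α β).toAlgHom) := by
      apply algHom_ext
      rintro (i | i)
      · simp [Esp_inl, Esp_rename]
      · simp [Esp_inr]
    exact DFunLike.congr_fun this f
  intro f g hfg
  have h2 := congrArg (Esp F α' β) hfg
  rw [key, key] at h2
  exact (Esp F α β).injective (MvPolynomial.map_injective _ h h2)

lemma scale_inj {K : Type*} [CommRing K] [IsDomain K] (d : K) (hd : d ≠ 0) :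
    Function.Injective (aeval (R := K) fun j : β => C d * (X j : MvPolynomial β K)) := by
  have key : ∀ f m, coeff m ((aeval (R := K) fun j : β => C d * (X j : MvPolynomial β K)) f)
      = d ^ (m.sum fun _ k => k) * coeff m f := by
    classical
    intro f m
    induction f using MvPolynomial.induction_on' with
    | monomial u a =>
      have : (aeval (R := K) fun j : β => C d * (X j : MvPolynomial β K)) (monomial u a)
          = monomial u (d ^ (u.sum fun _ k => k) * a) := by
        rw [aeval_monomial, monomial_eq, Finsupp.prod, Finsupp.prod, Finsupp.sum,
          Finset.prod_congr rfl (fun i _ => mul_pow _ _ _), Finset.prod_mul_distrib,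
          Finset.prod_pow_eq_pow_sum, C_mul, C_pow, algebraMap_eq]
        ring
      rw [this, coeff_monomial, coeff_monomial]
      split_ifs with h
      · rw [h]
      · simp
    | add p q hp hq => rw [map_add, coeff_add, hp, hq, coeff_add]; ring
  intro f g hfg
  ext m
  have := congrArg (coeff m) hfg
  rw [key, key] at this
  exact mul_left_cancel₀ (pow_ne_zero _ hd) this

lemma lin_inj {K : Type*} [CommRing K] [IsDomain K] {m : ℕ} (M : Matrix (Fin m) (Fin m) K)
    (hd : M.det ≠ 0) :
    Function.Injective (aeval (R := K) fun j : Fin m =>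
      ∑ k, (X k : MvPolynomial (Fin m) K) * C (M k j)) := by
  have key : ((aeval (R := K) fun j : Fin m =>
      ∑ k, (X k : MvPolynomial (Fin m) K) * C (M.adjugate k j))).comp
      ((aeval (R := K) fun j : Fin m =>
      ∑ k, (X k : MvPolynomial (Fin m) K) * C (M k j))) =
      aeval (R := K) fun j : Fin m => C M.det * (X j : MvPolynomial (Fin m) K) := by
    apply algHom_ext
    intro j
    have h := adjugate_mul M
    simp only [AlgHom.comp_apply, aeval_X, map_sum, map_mul, aeval_C, algebraMap_eq,
      Finset.sum_mul]
    rw [Finset.sum_comm]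
    have h2 : ∀ k, ∑ i, M.adjugate k i * M i j = if k = j then M.det else 0 := by
      intro k
      have := congrFun (congrFun h k) j
      rw [mul_apply] at this
      rw [this]
      simp [Matrix.one_apply]
    calc _ = ∑ k, X k * C (∑ i, M.adjugate k i * M i j) := by
          refine Finset.sum_congr rfl fun k _ => ?_
          rw [map_sum, Finset.mul_sum]
          refine Finset.sum_congr rfl fun i _ => ?_
          rw [C_mul]; ring
      _ = _ := by
          simp only [h2]
          rw [Finset.sum_eq_single j]
          · simp; ring
          · intro b _ hb; simp [hb]
          · simp
  have := scale_inj (β := Fin m) M.det hd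
  rw [← key, AlgHom.coe_comp] at this
  exact this.of_comp

lemma injB {m : ℕ} (M : Matrix (Fin m) (Fin m) (MvPolynomial α F)) (hd : M.det ≠ 0) :
    Function.Injective (aeval (R := F) (Sum.elim (fun i => X (Sum.inl i))
      (fun j : Fin m => ∑ k, (X (Sum.inr k) : MvPolynomial (α ⊕ Fin m) F)
        * rename Sum.inl (M k j)))) := by
  set Λ := (aeval (R := F) (Sum.elim (fun i => X (Sum.inl i))
      (fun j : Fin m => ∑ k, (X (Sum.inr k) : MvPolynomial (α ⊕ Fin m) F)
        * rename Sum.inl (M k j)))) with hΛ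
  have key : ∀ f, Esp F α (Fin m) (Λ f) =
      (aeval (R := MvPolynomial α F) fun j : Fin m =>
      ∑ k, (X k : MvPolynomial (Fin m) (MvPolynomial α F)) * C (M k j)) (Esp F α (Fin m) f) := by
    intro f
    have : ((Esp F α (Fin m)).toAlgHom.comp Λ) =
      (((aeval (R := MvPolynomial α F) fun j : Fin m =>
      ∑ k, (X k : MvPolynomial (Fin m) (MvPolynomial α F)) * C (M k j)).restrictScalars F).comp
        (Esp F α (Fin m)).toAlgHom) := by
      apply algHom_ext
      rintro (i | i)
      · simp [Esp_inl, hΛ]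
      · simp [Esp_inr, Esp_rename, hΛ]
    exact DFunLike.congr_fun this f
  intro f g hfg
  have h2 := congrArg (Esp F α (Fin m)) hfg
  rw [key, key] at h2
  exact (Esp F α (Fin m)).injective (lin_inj M hd h2)

end inj

section roots
variable {B : Type*} [CommRing B]

/-- monic polynomial with given roots -/
noncomputable def pQ {r : ℕ} (s : Fin r → B) : Polynomial B :=
  ∏ k, (Polynomial.X - Polynomial.C (s k))

/-- recurrence coefficients from roots -/
noncomputable def aof {r : ℕ} (s : Fin r → B) (i : Fin r) : B := -(pQ s).coeff i

lemma pQ_monic {r : ℕ} (s : Fin r → B) : (pQ s).Monic :=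
  Polynomial.monic_prod_of_monic _ _ fun _ _ => Polynomial.monic_X_sub_C _

lemma pQ_natDegree {r : ℕ} [Nontrivial B] (s : Fin r → B) : (pQ s).natDegree = r := by
  rw [pQ, Polynomial.natDegree_prod_of_monic _ _ (fun _ _ => Polynomial.monic_X_sub_C _)]
  simp

lemma root_eq {r : ℕ} (s : Fin r → B) (k : Fin r) :
    s k ^ r = ∑ i : Fin r, aof s i * s k ^ (i : ℕ) := by
  rcases subsingleton_or_nontrivial B with h | h
  · exact Subsingleton.elim _ _
  have h1 : (pQ s).eval (s k) = 0 := by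
    rw [pQ, Polynomial.eval_prod]
    exact Finset.prod_eq_zero (Finset.mem_univ k) (by simp)
  rw [Polynomial.eval_eq_sum_range, pQ_natDegree, Finset.sum_range_succ] at h1
  have h2 : (pQ s).coeff r = 1 := by
    have := (pQ_monic s).coeff_natDegree
    rwa [pQ_natDegree] at this
  rw [h2, one_mul, Finset.sum_range] at h1
  simp only [aof, neg_mul, Finset.sum_neg_distrib]
  linear_combination h1

lemma rec_roots {r : ℕ} (s u : Fin r → B) : Rec r (aof s) (fun j => ∑ k, u k * s k ^ j) := by
  intro j
  simp only [Finset.mul_sum]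
  rw [Finset.sum_comm]
  refine Finset.sum_congr rfl fun k _ => ?_
  rw [pow_add, root_eq s k, Finset.mul_sum, Finset.mul_sum]
  exact Finset.sum_congr rfl fun i _ => by rw [pow_add]; ring

lemma map_aof {B' : Type*} [CommRing B'] (f : B →+* B') {r : ℕ} (s : Fin r → B) (i : Fin r) :
    f (aof s i) = aof (fun k => f (s k)) i := by
  simp only [aof, pQ, map_neg]
  rw [← Polynomial.coeff_map, Polynomial.map_prod]
  simp

lemma aof_zero {r : ℕ} (s : Fin (r + 1) → B) : aof s 0 = (-1) ^ r * ∏ k, s k := by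
  simp only [aof, pQ, Polynomial.coeff_zero_eq_eval_zero, Fin.val_zero, Polynomial.eval_prod]
  simp [Finset.prod_neg, pow_succ]

lemma Rec.unique {r : ℕ} {a : Fin r → B} {x y : ℕ → B} (hx : Rec r a x) (hy : Rec r a y)
    (h : ∀ i < r, x i = y i) (j : ℕ) : x j = y j := by
  induction j using Nat.strong_induction_on with
  | _ j ih =>
    by_cases hj : j < r
    · exact h j hj
    · obtain ⟨l, rfl⟩ := Nat.exists_eq_add_of_le (not_lt.mp hj)
      rw [add_comm, hx l, hy l]
      exact Finset.sum_congr rfl fun i _ => by rw [ih (l + i) (by have := i.2; omega)]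

end roots

section Rt
variable (F : Type*) [Field F] (r : ℕ)

/-- the chart ring -/
abbrev Rt (F : Type*) [Field F] (r : ℕ) := MvPolynomial (Fin r ⊕ Fin r) F

/-- the recurrence coefficients -/
noncomputable def av (i : Fin r) : Rt F r := X (Sum.inl i)

/-- the sequence -/
noncomputable def xs : ℕ → Rt F r :=
  LinearRecurrence.mkSol ⟨r, av F r⟩ (fun i => X (Sum.inr i))

lemma xs_rec : Rec r (av F r) (xs F r) := fun j =>
  LinearRecurrence.is_sol_mkSol ⟨r, av F r⟩ (fun i => X (Sum.inr i)) j

lemma xs_init (i : Fin r) : xs F r i = X (Sum.inr i) :=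
  LinearRecurrence.mkSol_eq_init ⟨r, av F r⟩ (fun i => X (Sum.inr i)) i

variable {F r}

lemma map_xs {B : Type*} [CommRing B] (f : Rt F r →+* B) {y : ℕ → B}
    (hy : Rec r (fun i => f (av F r i)) y) (h : ∀ i : Fin r, f (X (Sum.inr i)) = y i) (j : ℕ) :
    f (xs F r j) = y j := by
  refine Rec.unique (x := fun j => f (xs F r j)) (fun j => ?_) hy (fun i hi => ?_) j
  · simp only [xs_rec F r j, map_sum, map_mul]
  · have := h ⟨i, hi⟩
    rw [← xs_init] at this
    exact this

variable (F r)
/-- root parametrization -/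
noncomputable def Ph : Rt F r →ₐ[F] Rt F r :=
  aeval (Sum.elim (aof fun k => X (Sum.inl k))
    (fun j : Fin r => ∑ k, X (Sum.inr k) * X (Sum.inl k) ^ (j : ℕ)))

lemma Ph_av (i : Fin r) : Ph F r (av F r i) = aof (fun k => X (Sum.inl k)) i := by
  simp [Ph, av]

lemma Ph_xs (j : ℕ) : Ph F r (xs F r j) = ∑ k, X (Sum.inr k) * X (Sum.inl k) ^ j := by
  refine map_xs (Ph F r : Rt F r →+* Rt F r) (y := fun j => ∑ k, X (Sum.inr k) * X (Sum.inl k) ^ j)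
    ?_ ?_ j
  · have : (fun i => (Ph F r : Rt F r →+* Rt F r) (av F r i)) = aof (fun k => X (Sum.inl k)) := by
      funext i; exact Ph_av F r i
    rw [this]
    exact rec_roots _ _
  · intro i
    simp [Ph]

/-- esymm hom is injective -/
lemma esy_inj : Function.Injective (aeval (R := F) (aof fun k : Fin r => (X k : MvPolynomial (Fin r) F))) := by
  have h1 := esymmAlgHom_injective (σ := Fin r) F (n := r) (by simp)
  have hs : ∀ i : Fin r, aof (fun k : Fin r => (X k : MvPolynomial (Fin r) F)) i =
      - (-1) ^ (r - i : ℕ) * esymm (Fin r) F (r - i) := by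
    intro i
    have := Multiset.prod_X_sub_C_coeff (Multiset.map (fun i => (X i : MvPolynomial (Fin r) F)) (Finset.univ : Finset (Fin r)).val)
      (k := i) (by simp [i.2.le])
    rw [Multiset.map_map] at this
    simp only [Multiset.card_map, Finset.card_val, Finset.card_univ, Fintype.card_fin] at this
    rw [esymm_eq_multiset_esymm, aof, pQ, neg_mul, ← this]
    rfl
  set ψ : MvPolynomial (Fin r) F →ₐ[F] MvPolynomial (Fin r) F :=
    aeval (fun i : Fin r => - (-1) ^ (r - i : ℕ) * (X (Fin.rev i) : MvPolynomial (Fin r) F)) with hψ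
  set ψ' : MvPolynomial (Fin r) F →ₐ[F] MvPolynomial (Fin r) F :=
    aeval (fun i : Fin r => - (-1) ^ (i + 1 : ℕ) * (X (Fin.rev i) : MvPolynomial (Fin r) F)) with hψ'
  have h2 : ψ'.comp ψ = AlgHom.id F _ := by
    apply algHom_ext
    intro i
    simp only [hψ, hψ', AlgHom.comp_apply, aeval_X, map_mul, map_neg, map_pow, map_one,
      Fin.val_rev, AlgHom.id_apply, Fin.rev_rev]
    have e : r - (i + 1) + 1 = r - (i : ℕ) := by have := i.2; omega
    rw [e]
    have : ((-1 : MvPolynomial (Fin r) F) ^ (r - (i : ℕ))) * (-1) ^ (r - (i : ℕ)) = 1 := by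
      rw [← mul_pow]; simp
    linear_combination X i * this
  have h3 : Function.Injective ψ := by
    intro f g hfg
    have := congrArg ψ' hfg
    rw [← AlgHom.comp_apply, ← AlgHom.comp_apply, h2] at this
    exact this
  have h4 : aeval (R := F) (aof fun k : Fin r => (X k : MvPolynomial (Fin r) F)) =
      ((symmetricSubalgebra (Fin r) F).val.comp (esymmAlgHom (Fin r) F r)).comp ψ := by
    apply algHom_ext
    intro i
    simp only [aeval_X, hs, hψ, AlgHom.comp_apply, map_mul, map_neg, map_pow, map_one,
      Subalgebra.coe_val, esymmAlgHom_apply, Fin.val_rev]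
    rw [show r - (i + 1) + 1 = r - (i : ℕ) by have := i.2; omega]
  rw [h4, AlgHom.coe_comp, AlgHom.coe_comp]
  exact (Subtype.val_injective.comp h1).comp h3

lemma vdm_ne_zero (m : ℕ) (v : Fin m → MvPolynomial (Fin r) F) (e : Fin m → Fin r)
    (he : Function.Injective e) (hv : v = fun i => X (e i)) :
    (of fun k j : Fin m => v k ^ (j : ℕ)).det ≠ 0 := by
  have : (of fun k j : Fin m => v k ^ (j : ℕ)) = vandermonde v := rfl
  rw [this, det_vandermonde_ne_zero_iff, hv]
  intro i j hij
  exact he (X_injective hij)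

lemma Ph_inj : Function.Injective (Ph F r) := by
  have h1 := injA (β := Fin r) _ (esy_inj F r)
  have h2 := injB (F := F) _ (vdm_ne_zero F r r _ id Function.injective_id rfl)
  have : Ph F r = AlgHom.comp (aeval (R := F) (Sum.elim (fun i => X (Sum.inl i))
      (fun j : Fin r => ∑ k, (X (Sum.inr k) : MvPolynomial (Fin r ⊕ Fin r) F)
        * rename Sum.inl ((of fun k j : Fin r => (X (id k) : MvPolynomial (Fin r) F) ^ (j : ℕ)) k j))))
        (aeval (R := F) (Sum.elim (fun i => rename Sum.inl ((aeval (R := F) (aof fun k : Fin r => (X k : MvPolynomial (Fin r) F))) (X i)))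
      (fun j : Fin r => (X (Sum.inr j) : MvPolynomial (Fin r ⊕ Fin r) F)))) := by
    apply algHom_ext
    rintro (i | i)
    · simp only [Ph, aeval_X, AlgHom.comp_apply, Sum.elim_inl]
      rw [← AlgHom.coe_toRingHom, ← AlgHom.coe_toRingHom, map_aof, map_aof]
      simp
    · simp [Ph]
  rw [this, AlgHom.coe_comp]
  exact h2.comp h1

end Rt

end HK

namespace HK

section wts
variable {σ F : Type*} [Field F]

lemma not_DL_prod {ι : Type*} {w : σ → ℤ} (s : Finset ι) (f : ι → MvPolynomial σ F) (j : ι → ℤ)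
    (hf : ∀ i ∈ s, ¬ DL w (j i - 1) (f i)) : ¬ DL w (∑ i ∈ s, j i - 1) (∏ i ∈ s, f i) := by
  classical
  induction s using Finset.induction_on with
  | empty =>
    intro h
    have := h 0 (by simp)
    rw [wgt_zero] at this; simp at this
  | insert a s ha ih =>
    rw [Finset.sum_insert ha, Finset.prod_insert ha]
    exact not_DL_mul (hf a (by simp)) (ih fun i hi => hf i (by simp [hi]))

lemma DL_neg_iff {w : σ → ℤ} {j : ℤ} {f : MvPolynomial σ F} : DL w j (-f) ↔ DL w j f :=
  ⟨fun h => by simpa using h.neg, fun h => h.neg⟩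

lemma DL_sign_iff {w : σ → ℤ} {j : ℤ} {f : MvPolynomial σ F} (r : ℕ) :
    DL w j ((-1) ^ r * f) ↔ DL w j f := by
  rcases neg_one_pow_eq_or (MvPolynomial σ F) r with h | h <;> rw [h]
  · simp
  · simpa using DL_neg_iff

lemma not_DL_X (w : σ → ℤ) (i : σ) : ¬ DL w (w i - 1) (X i : MvPolynomial σ F) := by
  intro h
  have := h (Finsupp.single i 1) (by simp)
  rw [wgt_single] at this
  push_cast at this; linarith

lemma not_DL_X_sub (w : σ → ℤ) (i j : σ) (hij : i ≠ j) :
    ¬ DL w (w i - 1) (X i - X j : MvPolynomial σ F) := by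
  classical
  intro h
  have := h (Finsupp.single i 1) (by
    rw [coeff_sub, coeff_X, coeff_X, if_pos rfl, if_neg]
    · simp
    · intro h; exact hij ((Finsupp.single_left_injective one_ne_zero h).symm))
  rw [wgt_single] at this
  push_cast at this; linarith

variable {r : ℕ}

lemma DL_coeff_prod {β : Type*} (w : Fin r ⊕ β → ℤ) (hw : ∀ k, 0 ≤ w (Sum.inl k)) (T : Finset (Fin r))
    (i : ℕ) : DL w (∑ k ∈ T, w (Sum.inl k)) ((∏ k ∈ T,
      (Polynomial.X - Polynomial.C (X (Sum.inl k) : MvPolynomial (Fin r ⊕ β) F))).coeff i) := by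
  classical
  induction T using Finset.induction_on generalizing i with
  | empty =>
    simp only [Finset.sum_empty, Finset.prod_empty, Polynomial.coeff_one]
    split_ifs
    · exact DL.one _ le_rfl
    · exact DL.zero _ _
  | insert a T ha ih =>
    rw [Finset.sum_insert ha, Finset.prod_insert ha, sub_mul, Polynomial.coeff_sub,
      Polynomial.coeff_C_mul]
    refine DL.sub ?_ ((DL.X w _ le_rfl).mul (ih i))
    cases i with
    | zero => simpa using DL.zero _ _
    | succ i =>
      rw [Polynomial.coeff_X_mul]
      exact (ih i).mono (by have := hw a; linarith)

lemma DL_aof {β : Type*} (w : Fin r ⊕ β → ℤ) (hw : ∀ k, 0 ≤ w (Sum.inl k)) (i : Fin r) :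
    DL w (∑ k, w (Sum.inl k)) (aof (fun k => (X (Sum.inl k) : MvPolynomial (Fin r ⊕ β) F)) i) :=
  (DL_coeff_prod w hw _ i).neg

lemma DL_Ph_av (w : Fin r ⊕ Fin r → ℤ) (hw : ∀ k, 0 ≤ w (Sum.inl k)) (i : Fin r) :
    DL w (∑ k, w (Sum.inl k)) (Ph F r (av F r i)) := by
  rw [Ph_av]; exact DL_aof w hw i

lemma not_DL_Ph_a0 (w : Fin (r + 1) ⊕ Fin (r + 1) → ℤ) :
    ¬ DL w (∑ k, w (Sum.inl k) - 1) (Ph F (r + 1) (av F (r + 1) 0)) := by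
  rw [Ph_av, aof_zero, DL_sign_iff]
  exact not_DL_prod _ _ _ fun i _ => not_DL_X _ _

lemma Ph_D0 : Ph F r (Dm r (xs F r) 0) =
    (∏ k, X (Sum.inr k)) * (∏ i : Fin r, ∏ j ∈ Finset.Ioi i, (X (Sum.inl j) - X (Sum.inl i))) ^ 2 := by
  rw [Dm, ← AlgHom.coe_toRingHom, map_Dt, Dt, ← det_vandermonde]
  have : (of fun i j : Fin r => (Ph F r).toRingHom (xs F r (↑i + (↑j + 0)))) =
      (vandermonde fun k : Fin r => (X (Sum.inl k) : Rt F r))ᵀ * diagonal (fun k => X (Sum.inr k)) *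
        (vandermonde fun k : Fin r => (X (Sum.inl k) : Rt F r)) := by
    ext1 i j
    rw [mul_apply]
    simp only [mul_diagonal, of_apply, transpose_apply, vandermonde_apply, add_zero]
    exact (Ph_xs F r _).trans (Finset.sum_congr rfl fun k _ => by rw [pow_add]; ring)
  refine (congrArg det this).trans ?_
  rw [det_mul, det_mul, det_transpose, det_diagonal]
  ring

lemma DL_D0 (w : Fin r ⊕ Fin r → ℤ) (hw : ∀ i j : Fin r, i ≤ j → w (Sum.inl i) ≤ w (Sum.inl j)) :
    DL w (∑ k, w (Sum.inr k) + 2 * ∑ i : Fin r, ∑ j ∈ Finset.Ioi i, w (Sum.inl j))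
      (Ph F r (Dm r (xs F r) 0)) ∧
    ¬ DL w (∑ k, w (Sum.inr k) + 2 * (∑ i : Fin r, ∑ j ∈ Finset.Ioi i, w (Sum.inl j)) - 1)
      (Ph F r (Dm r (xs F r) 0)) := by
  rw [Ph_D0]
  constructor
  · refine (DL.prod _ _ _ fun i _ => DL.X _ _ le_rfl).mul ?_
    exact_mod_cast (DL.prod _ _ _ fun i _ => DL.prod _ _ (fun j => w (Sum.inl j)) fun j hj =>
      (DL.X _ _ le_rfl).sub (DL.X _ _ (hw _ _ (Finset.mem_Ioi.mp hj).le))).pow 2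
  · refine not_DL_mul (not_DL_prod _ _ _ fun i _ => not_DL_X _ _) ?_
    exact_mod_cast not_DL_pow (not_DL_prod _ _ _ fun i _ => not_DL_prod _ _ (fun j => w (Sum.inl j))
      fun j hj => not_DL_X_sub _ _ _ (by
        have := (Finset.mem_Ioi.mp hj).ne'
        simpa using this)) 2

/-- weight along the last root -/
def wt (r N : ℕ) : Fin r ⊕ Fin r → ℤ :=
  Sum.elim (fun i => if (i : ℕ) + 1 = r then 1 else 0)
    (fun i => if (i : ℕ) + 1 = r then 1 - (N : ℤ) else 0)

/-- x-degree -/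
def wu (r : ℕ) : Fin r ⊕ Fin r → ℤ := Sum.elim (fun _ => 0) (fun _ => 1)

lemma sum_last (r : ℕ) (c : ℤ) : (∑ k : Fin (r + 1), if (k : ℕ) + 1 = r + 1 then c else 0) = c := by
  rw [Finset.sum_eq_single (Fin.last r)]
  · simp
  · intro b _ hb
    rw [if_neg]
    intro h; exact hb (Fin.ext (by simpa using h))
  · simp

lemma wt_av (r N : ℕ) (i : Fin r) : DL (wt r N) 1 (Ph F r (av F r i)) := by
  obtain _ | r := r
  · exact i.elim0
  · refine (DL_Ph_av (wt (r + 1) N) (fun k => by simp only [wt, Sum.elim_inl]; split_ifs <;> simp)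
      i).mono ?_
    simp only [wt, Sum.elim_inl, sum_last, le_refl]

lemma wt_a0 (r N : ℕ) : ¬ DL (wt (r + 1) N) (1 - 1) (Ph F (r + 1) (av F (r + 1) 0)) := by
  have := not_DL_Ph_a0 (F := F) (wt (r + 1) N)
  simpa only [wt, Sum.elim_inl, sum_last] using this

lemma wu_av (i : Fin r) : DL (wu r) 0 (Ph F r (av F r i)) := by
  refine (DL_Ph_av (wu r) (fun k => by simp [wu]) i).mono (by simp [wu])

lemma wu_a0 (r : ℕ) : ¬ DL (wu (r + 1)) (0 - 1) (Ph F (r + 1) (av F (r + 1) 0)) := by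
  have := not_DL_Ph_a0 (F := F) (wu (r + 1))
  simpa only [wu, Sum.elim_inl, Finset.sum_const_zero] using this

lemma wt_xs (r N j : ℕ) (hj : j < N) : DL (wt r N) 0 (Ph F r (xs F r j)) := by
  rw [Ph_xs]
  refine DL.sum _ _ fun k _ => ((DL.X _ _ le_rfl).mul ((DL.X _ _ le_rfl).pow j)).mono ?_
  simp only [wt, Sum.elim_inl, Sum.elim_inr]
  split_ifs <;> simp; omega

lemma wu_xs (r j : ℕ) : DL (wu r) 1 (Ph F r (xs F r j)) := by
  rw [Ph_xs]
  refine DL.sum _ _ fun k _ => ((DL.X _ _ le_rfl).mul ((DL.X _ _ le_rfl).pow j)).mono ?_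
  simp [wu]

lemma sum_wt_Ioi (r N : ℕ) : ∑ i : Fin (r + 1), ∑ j ∈ Finset.Ioi i, wt (r + 1) N (Sum.inl j) = r := by
  have : ∀ i : Fin (r + 1), ∑ j ∈ Finset.Ioi i, wt (r + 1) N (Sum.inl j) =
      if i = Fin.last r then 0 else 1 := by
    intro i
    split_ifs with h
    · rw [h]
      refine Finset.sum_eq_zero fun j hj => ?_
      have := Finset.mem_Ioi.mp hj
      exact absurd this (Fin.le_last j).not_gt
    · rw [Finset.sum_eq_single (Fin.last r)]
      · simp [wt]
      · intro b _ hb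
        simp only [wt, Sum.elim_inl]
        rw [if_neg]
        intro h; exact hb (Fin.ext (by simpa using h))
      · intro hn
        exact absurd (Finset.mem_Ioi.mpr (lt_of_le_of_ne (Fin.le_last i) h)) hn
  simp only [this]
  rw [Fin.sum_univ_castSucc]
  simp [Fin.ext_iff, (Fin.is_lt _).ne]

lemma wt_D0 (r h : ℕ) (N : ℕ) (hN : N = 2 * (r + 1) + h) :
    DL (wt (r + 1) N) (-(h + 1)) (Ph F (r + 1) (Dm (r + 1) (xs F (r + 1)) 0)) ∧
    ¬ DL (wt (r + 1) N) (-(h + 1) - 1) (Ph F (r + 1) (Dm (r + 1) (xs F (r + 1)) 0)) := by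
  have := DL_D0 (F := F) (wt (r + 1) N) (fun i j hij => by
    simp only [wt, Sum.elim_inl]
    have : (i : ℕ) ≤ j := hij
    have := j.2
    split_ifs <;> omega)
  rw [sum_wt_Ioi] at this
  have e : ∑ k, wt (r + 1) N (Sum.inr k) = 1 - (N : ℤ) := by
    simp only [wt, Sum.elim_inr, sum_last]
  rw [e] at this
  have e2 : (1 - (N : ℤ) + 2 * r) = -(h + 1) := by rw [hN]; push_cast; ring
  rw [e2] at this
  exact this

lemma wu_D0 (r : ℕ) : DL (wu r) r (Ph F r (Dm r (xs F r) 0)) ∧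
    ¬ DL (wu r) (r - 1) (Ph F r (Dm r (xs F r) 0)) := by
  have := DL_D0 (F := F) (wu r) (fun i j hij => by simp [wu])
  simpa [wu] using this

lemma D0_ne_zero (r : ℕ) : Dm r (xs F r) 0 ≠ 0 := by
  intro h
  have := (wu_D0 (F := F) r).2
  rw [h, map_zero] at this
  exact this (DL.zero _ _)

lemma a0_ne_zero (r : ℕ) : av F (r + 1) 0 ≠ 0 := X_ne_zero _

end wts

end HK

namespace HK

section P3
variable (F : Type*) [Field F] (r : ℕ)

/-- forward map singling out the last `x` -/
noncomputable def ePf : Rt F (r + 1) →ₐ[F] Polynomial (MvPolynomial (Fin (r + 1) ⊕ Fin r) F) :=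
  aeval (Sum.elim (fun i => Polynomial.C (X (Sum.inl i)))
    (Fin.snoc (α := fun _ => Polynomial (MvPolynomial (Fin (r + 1) ⊕ Fin r) F))
      (fun j => Polynomial.C (X (Sum.inr j))) Polynomial.X))

/-- backward map -/
noncomputable def ePb : Polynomial (MvPolynomial (Fin (r + 1) ⊕ Fin r) F) →ₐ[F] Rt F (r + 1) :=
  Polynomial.eval₂AlgHom (aeval (Sum.elim (fun i => X (Sum.inl i))
    (fun j => X (Sum.inr j.castSucc)))) (X (Sum.inr (Fin.last r))) (fun _ => Commute.all _ _)

lemma ePb_C (f) : ePb F r (Polynomial.C f) = aeval (Sum.elim (fun i => X (Sum.inl i))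
    (fun j : Fin r => (X (Sum.inr j.castSucc) : Rt F (r + 1)))) f := by
  simp [ePb]

lemma ePb_X : ePb F r Polynomial.X = X (Sum.inr (Fin.last r)) := by
  simp [ePb]

lemma ePb_ePf (f) : ePb F r (ePf F r f) = f := by
  have : (ePb F r).comp (ePf F r) = AlgHom.id F _ := by
    apply algHom_ext
    rintro (i | j)
    · simp [ePf, ePb_C]
    · refine Fin.lastCases ?_ (fun j => ?_) j
      · simp [ePf, ePb_X]
      · simp [ePf, ePb_C]
  exact DFunLike.congr_fun this f

lemma ePf_ePb (f) : ePf F r (ePb F r f) = f := by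
  have : ((ePf F r).comp (ePb F r)).toRingHom = RingHom.id _ := by
    apply Polynomial.ringHom_ext'
    · apply MvPolynomial.ringHom_ext
      · intro c
        have h : (Polynomial.C (C c) : Polynomial (MvPolynomial (Fin (r + 1) ⊕ Fin r) F))
          = algebraMap F _ c := rfl
        simp only [RingHom.comp_apply, h]
        exact AlgHom.commutes _ c
      · rintro (i | j)
        · simp [ePf, ePb_C]
        · simp [ePf, ePb_C]
    · simp [ePb_X, ePf]
  exact DFunLike.congr_fun this f

lemma ePb_inj : Function.Injective (ePb F r) :=
  Function.LeftInverse.injective (ePf_ePb F r)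

/-- substitute symmetric functions for the `a`'s -/
noncomputable def cSy : MvPolynomial (Fin (r + 1) ⊕ Fin r) F →ₐ[F] MvPolynomial (Fin (r + 1) ⊕ Fin r) F :=
  aeval (Sum.elim (aof fun k => X (Sum.inl k)) (fun j => X (Sum.inr j)))

lemma cSy_inj : Function.Injective (cSy F r) := by
  have h1 := injA (β := Fin r) _ (esy_inj F (r + 1))
  have : cSy F r = (aeval (R := F) (Sum.elim (fun i => rename Sum.inl ((aeval (R := F) (aof fun k : Fin (r + 1) => (X k : MvPolynomial (Fin (r + 1)) F))) (X i)))
      (fun j : Fin r => (X (Sum.inr j) : MvPolynomial (Fin (r + 1) ⊕ Fin r) F)))) := by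
    apply algHom_ext
    rintro (i | i)
    · simp only [cSy, aeval_X, Sum.elim_inl]
      rw [← AlgHom.coe_toRingHom, map_aof]
      simp
    · simp [cSy]
  rw [this]; exact h1

/-- linear change of the `x`'s into `u`'s -/
noncomputable def Bv : Rt F r →ₐ[F] Rt F r :=
  aeval (Sum.elim (fun i => X (Sum.inl i))
    (fun j : Fin r => ∑ k, X (Sum.inr k) * X (Sum.inl k) ^ (j : ℕ)))

lemma Bv_inj : Function.Injective (Bv F r) := by
  have h2 := injB (F := F) _ (vdm_ne_zero F r r _ id Function.injective_id rfl)
  have : Bv F r = (aeval (R := F) (Sum.elim (fun i => X (Sum.inl i))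
      (fun j : Fin r => ∑ k, (X (Sum.inr k) : MvPolynomial (Fin r ⊕ Fin r) F)
        * rename Sum.inl ((of fun k j : Fin r => (X (id k) : MvPolynomial (Fin r) F) ^ (j : ℕ)) k j)))) := by
    apply algHom_ext
    rintro (i | i) <;> simp [Bv]
  rw [this]; exact h2

/-- the root `b_k` -/
noncomputable def bk (k : Fin (r + 1)) : MvPolynomial (Fin (r + 1) ⊕ Fin r) F :=
  ∑ l : Fin r, aof (fun i : Fin r => X (Sum.inl (k.succAbove i))) l * X (Sum.inr l)

/-- `χ` -/
noncomputable def chi (w : Rt F (r + 1)) : Polynomial (MvPolynomial (Fin (r + 1) ⊕ Fin r) F) :=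
  (ePf F r w).map (cSy F r).toRingHom

lemma Bv_chi (w) : Bv F (r + 1) (ePb F r (chi F r w)) = Ph F (r + 1) w := by
  have : (((Bv F (r + 1)).comp (ePb F r)).comp ((Polynomial.mapAlgHom (cSy F r)).comp (ePf F r)))
      = Ph F (r + 1) := by
    apply algHom_ext
    rintro (i | j)
    · simp only [AlgHom.comp_apply, ePf, aeval_X, Sum.elim_inl, Polynomial.coe_mapAlgHom, Polynomial.map_C, ePb_C]
      have h := Ph_av F (r + 1) i
      rw [av] at h
      rw [h]
      simp only [RingHom.coe_coe, cSy, aeval_X, Sum.elim_inl]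
      rw [← AlgHom.coe_toRingHom, ← AlgHom.coe_toRingHom, map_aof, map_aof]
      simp [Bv]
    · refine Fin.lastCases ?_ (fun j => ?_) j
      · simp [ePf, ePb_X, Bv, Ph]
      · simp [ePf, ePb_C, Bv, Ph, cSy]
  exact DFunLike.congr_fun this w

lemma pQ_eval {B : Type*} [CommRing B] {r : ℕ} (s : Fin r → B) (z : B) :
    z ^ r - ∑ i : Fin r, aof s i * z ^ (i : ℕ) = ∏ k, (z - s k) := by
  rcases subsingleton_or_nontrivial B with h | h
  · exact Subsingleton.elim _ _
  have h1 : (pQ s).eval z = ∏ k, (z - s k) := by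
    rw [pQ, Polynomial.eval_prod]; simp
  rw [← h1, Polynomial.eval_eq_sum_range, pQ_natDegree, Finset.sum_range_succ]
  have h2 : (pQ s).coeff r = 1 := by
    have := (pQ_monic s).coeff_natDegree
    rwa [pQ_natDegree] at this
  rw [h2, Finset.sum_range]
  simp only [aof, neg_mul, Finset.sum_neg_distrib]
  ring

lemma Bv_Xbk (k : Fin (r + 1)) : Bv F (r + 1) (ePb F r (Polynomial.X - Polynomial.C (bk F r k))) =
    X (Sum.inr k) * ∏ i : Fin r, (X (Sum.inl k) - X (Sum.inl (k.succAbove i))) := by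
  have h0 : ∀ l : Fin r, Bv F (r + 1) (ePb F r (Polynomial.C
      (aof (fun i : Fin r => X (Sum.inl (k.succAbove i))) l))) =
      aof (fun i : Fin r => X (Sum.inl (k.succAbove i))) l := by
    intro l
    rw [ePb_C, ← AlgHom.coe_toRingHom, ← AlgHom.coe_toRingHom, map_aof, map_aof]
    simp [Bv]
  have h1 : Bv F (r + 1) (ePb F r (Polynomial.C (bk F r k))) =
      ∑ l : Fin r, aof (fun i : Fin r => X (Sum.inl (k.succAbove i))) l *
        ∑ k, X (Sum.inr k) * X (Sum.inl k) ^ (l : ℕ) := by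
    simp only [bk, map_sum, map_mul, h0]
    refine Finset.sum_congr rfl fun l _ => ?_
    congr 1
    simp [ePb_C, Bv]
  rw [map_sub, map_sub, h1]
  have h2 : Bv F (r + 1) (ePb F r Polynomial.X) = ∑ k, X (Sum.inr k) * X (Sum.inl k) ^ r := by
    simp [ePb_X, Bv]
  rw [h2]
  simp only [Finset.mul_sum]
  rw [Finset.sum_comm, ← Finset.sum_sub_distrib, Finset.sum_eq_single k]
  · rw [← pQ_eval, mul_sub, Finset.mul_sum]
    congr 1
    exact Finset.sum_congr rfl fun _ _ => by ring
  · intro i _ hi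
    obtain ⟨i', rfl⟩ := Fin.exists_succAbove_eq hi
    rw [root_eq (fun i : Fin r => (X (Sum.inl (k.succAbove i)) : Rt F (r + 1))) i', Finset.mul_sum,
      sub_eq_zero]
    exact Finset.sum_congr rfl fun _ _ => by ring
  · simp

lemma prod_ne (M : ℕ) {B : Type*} [CommRing B] (s : Fin (M + 1) → B) :
    ∃ ε : ℕ, ∏ k, ∏ i : Fin M, (s k - s (k.succAbove i)) =
      (-1) ^ ε * (∏ i : Fin (M + 1), ∏ j ∈ Finset.Ioi i, (s j - s i)) ^ 2 := by
  refine ⟨∑ i : Fin (M + 1), (Finset.Ioi i).card, ?_⟩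
  have h1 : ∀ k, ∏ i : Fin M, (s k - s (k.succAbove i)) =
      (∏ i ∈ Finset.Ioi k, (s k - s i)) * ∏ i ∈ Finset.Iio k, (s k - s i) := by
    intro k
    rw [← Finset.prod_union]
    · have : Finset.Ioi k ∪ Finset.Iio k = Finset.univ.map (Fin.succAboveEmb k) := by
        ext j
        simp only [Finset.mem_union, Finset.mem_Ioi, Finset.mem_Iio, Finset.mem_map,
          Finset.mem_univ, true_and]
        change _ ↔ ∃ a, k.succAbove a = j
        rw [← Set.mem_range, Fin.range_succAbove]
        simp [lt_or_lt_iff_ne, eq_comm]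
      rw [this, Finset.prod_map]
      rfl
    · rw [Finset.disjoint_left]
      intro a ha hb
      exact lt_asymm (Finset.mem_Ioi.mp ha) (Finset.mem_Iio.mp hb)
  simp only [h1, Finset.prod_mul_distrib]
  have h2 : ∏ k : Fin (M + 1), ∏ i ∈ Finset.Iio k, (s k - s i) =
      ∏ i : Fin (M + 1), ∏ j ∈ Finset.Ioi i, (s j - s i) := by
    apply Finset.prod_comm'
    simp
  have h3 : ∏ i : Fin (M + 1), ∏ j ∈ Finset.Ioi i, (s i - s j) =
      (-1) ^ (∑ i : Fin (M + 1), (Finset.Ioi i).card) *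
        ∏ i : Fin (M + 1), ∏ j ∈ Finset.Ioi i, (s j - s i) := by
    rw [← Finset.prod_pow_eq_pow_sum, ← Finset.prod_mul_distrib]
    refine Finset.prod_congr rfl fun i _ => ?_
    rw [← Finset.prod_const, ← Finset.prod_mul_distrib]
    exact Finset.prod_congr rfl fun j _ => by ring
  rw [h2, h3]; ring

lemma chi_D0 : ∃ ε : ℕ, ∏ k, (Polynomial.X - Polynomial.C (bk F r k)) =
    (-1) ^ ε * chi F r (Dm (r + 1) (xs F (r + 1)) 0) := by
  obtain ⟨ε, h⟩ := prod_ne r (fun k => (X (Sum.inl k) : Rt F (r + 1)))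
  refine ⟨ε, ?_⟩
  apply ePb_inj
  apply Bv_inj
  simp only [map_prod, Bv_Xbk, map_mul, map_pow, map_neg, map_one, Bv_chi, Ph_D0]
  rw [Finset.prod_mul_distrib, h]
  ring

lemma bk_inj : Function.Injective (bk F r) := by
  intro k k' h
  by_contra hne
  have h1 := Bv_Xbk F r k
  rw [h, Bv_Xbk] at h1
  have h2 := congrArg (aeval (R := F) (Sum.elim (fun i => X (Sum.inl i))
    (fun i => if i = k then 0 else (X (Sum.inr i) : Rt F (r + 1))))) h1
  simp only [map_mul, aeval_X, Sum.elim_inr, if_true, zero_mul, map_prod, map_sub, Sum.elim_inl,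
    if_neg (Ne.symm hne)] at h2
  rw [mul_eq_zero] at h2
  rcases h2 with h2 | h2
  · exact X_ne_zero _ h2
  · rw [Finset.prod_eq_zero_iff] at h2
    obtain ⟨i, _, hi⟩ := h2
    have := X_injective (sub_eq_zero.mp hi)
    simp at this

/-- dual embedding -/
noncomputable def Tk (k : Fin (r + 1)) : MvPolynomial (Fin (r + 1) ⊕ Fin r) F →ₐ[F] MvPolynomial (Fin (r + 1) ⊕ Fin r) F :=
  aeval (Sum.elim (fun i => X (Sum.inl i))
    (fun j : Fin r => ∑ i, X (Sum.inr i) * X (Sum.inl (k.succAbove i)) ^ (j : ℕ)))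

lemma Tk_inj (k : Fin (r + 1)) : Function.Injective (Tk F r k) := by
  have h2 := injB (F := F) _ (vdm_ne_zero F (r + 1) r _ k.succAbove Fin.succAbove_right_injective rfl)
  have : Tk F r k = (aeval (R := F) (Sum.elim (fun i => X (Sum.inl i))
      (fun j : Fin r => ∑ i, (X (Sum.inr i) : MvPolynomial (Fin (r + 1) ⊕ Fin r) F)
        * rename Sum.inl ((of fun i j : Fin r => (X (k.succAbove i) : MvPolynomial (Fin (r + 1)) F) ^ (j : ℕ)) i j)))) := by
    apply algHom_ext
    rintro (i | i) <;> simp [Tk]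
  rw [this]; exact h2

/-- set `u_k = 0` -/
noncomputable def Zk (k : Fin (r + 1)) : Rt F (r + 1) →ₐ[F] MvPolynomial (Fin (r + 1) ⊕ Fin r) F :=
  aeval (Sum.elim (fun i => X (Sum.inl i))
    (Fin.insertNth (α := fun _ => MvPolynomial (Fin (r + 1) ⊕ Fin r) F) k 0
      (fun i => X (Sum.inr i))))

lemma Zk_sum (k : Fin (r + 1)) (j : ℕ) : Zk F r k (∑ k, X (Sum.inr k) * X (Sum.inl k) ^ j) =
    ∑ i, X (Sum.inr i) * X (Sum.inl (k.succAbove i)) ^ j := by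
  rw [map_sum, Fin.sum_univ_succAbove _ k]
  simp [Zk]

lemma Tk_eval (k : Fin (r + 1)) (w) : Tk F r k ((chi F r w).eval (bk F r k)) = Zk F r k (Ph F (r + 1) w) := by
  have : (Tk F r k).comp ((Polynomial.eval₂AlgHom (AlgHom.id F _) (bk F r k)
      (fun _ => Commute.all _ _)).comp ((Polynomial.mapAlgHom (cSy F r)).comp (ePf F r)))
      = (Zk F r k).comp (Ph F (r + 1)) := by
    apply algHom_ext
    rintro (i | j)
    · simp only [AlgHom.comp_apply, ePf, aeval_X, Sum.elim_inl,
        Polynomial.coe_mapAlgHom, Polynomial.map_C]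
      have h := Ph_av F (r + 1) i
      rw [av] at h
      rw [h]
      simp only [RingHom.coe_coe, cSy, aeval_X, Sum.elim_inl]
      simp only [Polynomial.eval₂AlgHom_apply, Polynomial.eval₂_C]
      simp only [RingHom.coe_coe, AlgHom.id_apply]
      rw [← AlgHom.coe_toRingHom, ← AlgHom.coe_toRingHom, map_aof, map_aof]
      simp [Tk, Zk]
    · refine Fin.lastCases ?_ (fun j => ?_) j
      · simp only [AlgHom.comp_apply, Ph, aeval_X, Sum.elim_inr, Zk_sum]
        simp only [ePf, aeval_X, Sum.elim_inr, Fin.snoc_last, Polynomial.coe_mapAlgHom,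
          Polynomial.map_X, Polynomial.eval₂AlgHom_apply, Polynomial.eval₂_X, bk, map_sum, map_mul]
        have := rec_roots (fun i : Fin r => (X (Sum.inl (k.succAbove i)) : MvPolynomial (Fin (r + 1) ⊕ Fin r) F))
          (fun i => X (Sum.inr i)) 0
        simp only [zero_add] at this
        rw [Fin.val_last, this]
        refine Finset.sum_congr rfl fun l _ => ?_
        congr 1
        · rw [← AlgHom.coe_toRingHom, map_aof]
          simp [Tk]
        · simp [Tk]
      · simp only [AlgHom.comp_apply, Ph, aeval_X, Sum.elim_inr, Zk_sum]
        simp [ePf, cSy, Tk]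
  have h := DFunLike.congr_fun this w
  rw [← AlgHom.comp_apply (Zk F r k), ← h, AlgHom.comp_apply]
  congr 1

lemma Ph_symm (σ : Equiv.Perm (Fin r)) (w) : rename (Sum.map σ σ) (Ph F r w) = Ph F r w := by
  have : (rename (Sum.map σ σ)).comp (Ph F r) = Ph F r := by
    apply algHom_ext
    rintro (i | j)
    · simp only [AlgHom.comp_apply, Ph, aeval_X, Sum.elim_inl]
      rw [← AlgHom.coe_toRingHom, map_aof]
      simp only [aof, pQ, AlgHom.coe_toRingHom, rename_X, Sum.map_inl]
      congr 2
      exact Equiv.prod_comp σ (fun k => Polynomial.X - Polynomial.C (X (Sum.inl k) : Rt F r))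
    · simp only [AlgHom.comp_apply, Ph, aeval_X, Sum.elim_inr, map_sum, map_mul, rename_X, map_pow,
        Sum.map_inl, Sum.map_inr]
      exact Equiv.sum_comp σ (fun k => (X (Sum.inr k) * X (Sum.inl k) ^ (j : ℕ) : Rt F r))
  exact DFunLike.congr_fun this w

variable {F r}

theorem D0_dvd {N : ℕ} {w : Rt F (r + 1)} (hw : DL (wt (r + 1) N) (-1) (Ph F (r + 1) w)) :
    Dm (r + 1) (xs F (r + 1)) 0 ∣ w := by
  have h1 : X (Sum.inr (Fin.last r)) ∣ Ph F (r + 1) w := by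
    rw [(Ph F (r + 1) w).as_sum]
    refine Finset.dvd_sum fun m hm => ?_
    rw [X_dvd_monomial]
    right
    intro h0
    have h2 := hw m (mem_support_iff.mp hm)
    rw [wgt_eq_sum] at h2
    have : 0 ≤ ∑ i, (m i : ℤ) * wt (r + 1) N i := by
      refine Finset.sum_nonneg ?_
      rintro (i | i) _
      · simp only [wt, Sum.elim_inl]; split_ifs <;> simp
      · simp only [wt, Sum.elim_inr]; split_ifs with h
        · have : i = Fin.last r := Fin.ext (by simpa using h)
          rw [this, h0]; simp
        · simp
    omega
  have h2 : ∀ k, X (Sum.inr k) ∣ Ph F (r + 1) w := by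
    intro k
    have := map_dvd (rename (R := F) (Sum.map (Equiv.swap k (Fin.last r)) (Equiv.swap k (Fin.last r)))) h1
    rw [Ph_symm] at this
    simpa using this
  have h3 : ∀ k, (chi F r w).eval (bk F r k) = 0 := by
    intro k
    apply Tk_inj F r k
    rw [Tk_eval, map_zero]
    have := map_dvd (Zk F r k) (h2 k)
    simpa [Zk] using this
  obtain ⟨ε, hε⟩ := chi_D0 F r
  have h4 : ∏ k, (Polynomial.X - Polynomial.C (bk F r k)) ∣ chi F r w := by
    by_cases h0 : chi F r w = 0
    · rw [h0]; exact dvd_zero _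
    have := (Multiset.prod_X_sub_C_dvd_iff_le_roots h0 (Finset.univ.val.map (bk F r))).mpr (by
      rw [Multiset.le_iff_subset]
      · intro b hb
        obtain ⟨k, _, rfl⟩ := Multiset.mem_map.mp hb
        exact (Polynomial.mem_roots h0).mpr (h3 k)
      · exact Multiset.Nodup.map (bk_inj F r) Finset.univ.nodup)
    rw [Multiset.map_map] at this
    exact this
  have h5 : chi F r ((-1) ^ ε * Dm (r + 1) (xs F (r + 1)) 0) =
      ∏ k, (Polynomial.X - Polynomial.C (bk F r k)) := by
    rw [hε]; simp [chi]
  have hm : (ePf F r ((-1) ^ ε * Dm (r + 1) (xs F (r + 1)) 0)).Monic := by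
    apply Polynomial.monic_of_injective (f := (cSy F r).toRingHom) (cSy_inj F r)
    change (chi F r _).Monic
    rw [h5]
    exact Polynomial.monic_prod_of_monic _ _ fun _ _ => Polynomial.monic_X_sub_C _
  rw [← h5] at h4
  have h6 := (Polynomial.map_dvd_map (cSy F r).toRingHom (cSy_inj F r) hm).mp h4
  have h7 := map_dvd (ePb F r) h6
  rw [ePb_ePf, ePb_ePf] at h7
  exact (dvd_mul_left _ _).trans h7

end P3

end HK

namespace HK

section P4
variable (F : Type*) [Field F] (r : ℕ)

/-- span of `1` and the `a`'s -/
noncomputable def A1 : Submodule F (Rt F r) := Submodule.span F ({1} ∪ Set.range (av F r))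
/-- span of `1` and `x_j`, `j < N` -/
noncomputable def X1 (N : ℕ) : Submodule F (Rt F r) :=
  Submodule.span F ({1} ∪ (xs F r) '' {j | j < N})

/-- submodule of elements of bounded weight -/
noncomputable def DLs {r : ℕ} (w : Fin r ⊕ Fin r → ℤ) (j : ℤ) : Submodule F (Rt F r) where
  carrier := {y | DL w j (Ph F r y)}
  zero_mem' := by simpa using DL.zero w j
  add_mem' := fun ha hb => by simpa using ha.add hb
  smul_mem' := fun c _ h => by simpa using h.smul c

variable {F r}

lemma mem_DLs {w : Fin r ⊕ Fin r → ℤ} {j : ℤ} {y : Rt F r} : y ∈ DLs F w j ↔ DL w j (Ph F r y) := Iff.rfl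

lemma DLs_mul (w : Fin r ⊕ Fin r → ℤ) (i j : ℤ) : DLs F w i * DLs F w j ≤ DLs F w (i + j) := by
  rw [Submodule.mul_le]
  intro a ha b hb
  rw [mem_DLs, map_mul]
  exact DL.mul ha hb

lemma pow_le_DLs {w : Fin r ⊕ Fin r → ℤ} {i : ℤ} {V : Submodule F (Rt F r)} (h : V ≤ DLs F w i) (k : ℕ) :
    V ^ k ≤ DLs F w (k * i) := by
  induction k with
  | zero =>
    rw [pow_zero, Submodule.one_le, mem_DLs, map_one]
    exact DL.one _ (by simp)
  | succ k ih =>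
    rw [pow_succ]
    refine (mul_le_mul' ih h).trans ((DLs_mul _ _ _).trans ?_)
    intro y hy
    exact hy.mono (by push_cast; linarith [add_mul (k:ℤ) 1 i])

lemma A1_wt (N : ℕ) : A1 F r ≤ DLs F (wt r N) 1 := by
  rw [A1, Submodule.span_le]
  rintro y (rfl | ⟨i, rfl⟩)
  · change DL _ _ _; rw [map_one]; exact DL.one _ (by simp)
  · exact wt_av r N i

lemma A1_wu : A1 F r ≤ DLs F (wu r) 0 := by
  rw [A1, Submodule.span_le]
  rintro y (rfl | ⟨i, rfl⟩)
  · change DL _ _ _; rw [map_one]; exact DL.one _ (by simp)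
  · exact wu_av i

lemma X1_wt (N : ℕ) : X1 F r N ≤ DLs F (wt r N) 0 := by
  rw [X1, Submodule.span_le]
  rintro y (rfl | ⟨i, hi, rfl⟩)
  · change DL _ _ _; rw [map_one]; exact DL.one _ (by simp)
  · exact wt_xs r N i hi

lemma X1_wu (N : ℕ) : X1 F r N ≤ DLs F (wu r) 1 := by
  rw [X1, Submodule.span_le]
  rintro y (rfl | ⟨i, hi, rfl⟩)
  · change DL _ _ _; rw [map_one]; exact DL.one _ (by simp)
  · exact wu_xs r i

lemma one_le_A1 : 1 ≤ A1 F r := by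
  rw [Submodule.one_le]; exact Submodule.subset_span (Or.inl rfl)

lemma one_le_X1 (N : ℕ) : 1 ≤ X1 F r N := by
  rw [Submodule.one_le]; exact Submodule.subset_span (Or.inl rfl)

lemma av_mem_A1 (i : Fin r) : av F r i ∈ A1 F r := Submodule.subset_span (Or.inr ⟨i, rfl⟩)

lemma xs_mem_X1 {N j : ℕ} (h : j < N) : xs F r j ∈ X1 F r N := Submodule.subset_span (Or.inr ⟨j, h, rfl⟩)

lemma AX_DL {N j d : ℕ} {y : Rt F r} (hy : y ∈ A1 F r ^ j * X1 F r N ^ d) :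
    DL (wt r N) j (Ph F r y) ∧ DL (wu r) d (Ph F r y) := by
  constructor
  · have := DLs_mul _ _ _ (mul_le_mul' (pow_le_DLs (A1_wt N) j) (pow_le_DLs (X1_wt N) d) hy)
    rw [mem_DLs] at this
    simpa using this
  · have := DLs_mul _ _ _ (mul_le_mul' (pow_le_DLs A1_wu j) (pow_le_DLs (X1_wu N) d) hy)
    rw [mem_DLs] at this
    simpa using this

lemma wu_neg {d : ℤ} (hd : d < 0) {w : Rt F r} (h : DL (wu r) d (Ph F r w)) : w = 0 := by
  apply Ph_inj F r
  rw [map_zero]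
  by_contra hne
  obtain ⟨m, hm⟩ := ne_zero_iff.mp hne
  have := h m hm
  rw [wgt_eq_sum] at this
  have : 0 ≤ ∑ i, (m i : ℤ) * wu r i := by
    refine Finset.sum_nonneg ?_
    rintro (i | i) _ <;> simp [wu]
  omega

variable (F r)

/-- reduction mod `a_0` -/
noncomputable def rho : Rt F (r + 1) →ₐ[F] Polynomial (Rt F r) :=
  aeval (Sum.elim (Fin.cons 0 (fun i => Polynomial.C (X (Sum.inl i))))
    (Fin.cons Polynomial.X (fun i => Polynomial.C (X (Sum.inr i)))))

lemma rho_a0 : rho F r (av F (r + 1) 0) = 0 := by simp [rho, av]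
lemma rho_as (i : Fin r) : rho F r (av F (r + 1) i.succ) = Polynomial.C (av F r i) := by simp [rho, av]

lemma rho_xs (j : ℕ) : rho F r (xs F (r + 1) j) =
    Nat.casesOn (motive := fun _ => Polynomial (Rt F r)) j Polynomial.X
      (fun j => Polynomial.C (xs F r j)) := by
  refine map_xs (rho F r).toRingHom (y := fun j => Nat.casesOn (motive := fun _ => Polynomial (Rt F r)) j Polynomial.X
      (fun j => Polynomial.C (xs F r j))) ?_ ?_ j
  · intro j
    rw [Fin.sum_univ_succ]
    have h1 : (rho F r).toRingHom (av F (r + 1) 0) = 0 := rho_a0 F r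
    have h2 : ∀ i : Fin r, (rho F r).toRingHom (av F (r + 1) i.succ) = Polynomial.C (av F r i) :=
      rho_as F r
    simp only [h1, h2, zero_mul, zero_add]
    have := congrArg Polynomial.C (xs_rec F r j)
    rw [map_sum] at this
    simp only [map_mul] at this
    exact this
  · intro i
    refine Fin.cases ?_ (fun i => ?_) i
    · simp [rho]
    · simp [rho, xs_init]

lemma rho_x0 : rho F r (xs F (r + 1) 0) = Polynomial.X := rho_xs F r 0
lemma rho_xsucc (j : ℕ) : rho F r (xs F (r + 1) (j + 1)) = Polynomial.C (xs F r j) := rho_xs F r (j + 1)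

/-- section of `rho` -/
noncomputable def sig : Polynomial (Rt F r) →ₐ[F] Rt F (r + 1) :=
  Polynomial.eval₂AlgHom (aeval (Sum.elim (fun i => X (Sum.inl i.succ))
    (fun j => X (Sum.inr j.succ)))) (X (Sum.inr 0)) (fun _ => Commute.all _ _)

lemma rho_ker {f : Rt F (r + 1)} (hf : rho F r f = 0) : av F (r + 1) 0 ∣ f := by
  set J := Ideal.span {av F (r + 1) 0}
  have : ((Ideal.Quotient.mkₐ F J).comp ((sig F r).comp (rho F r))) = Ideal.Quotient.mkₐ F J := by
    apply algHom_ext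
    rintro (i | i)
    · refine Fin.cases ?_ (fun i => ?_) i
      · have : (Ideal.Quotient.mkₐ F J) (X (Sum.inl 0)) = 0 :=
          Ideal.Quotient.eq_zero_iff_mem.mpr (Ideal.subset_span rfl)
        rw [this]
        simp [rho]
      · simp [rho, sig]
    · refine Fin.cases ?_ (fun i => ?_) i
      · simp [rho, sig]
      · simp [rho, sig]
  have h := DFunLike.congr_fun this f
  rw [AlgHom.comp_apply, AlgHom.comp_apply, hf, map_zero, map_zero] at h
  exact Ideal.mem_span_singleton.mp (Ideal.Quotient.eq_zero_iff_mem.mp h.symm)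

/-- the monomial map -/
noncomputable def Om : Polynomial (Rt F r) →ₐ[F] Rt F (r + 1) :=
  Polynomial.eval₂AlgHom (aeval (Sum.elim (fun i => X (Sum.inl i.succ))
    (fun j => X (Sum.inr j.succ) * X (Sum.inl j.succ)))) (X (Sum.inr 0)) (fun _ => Commute.all _ _)

lemma Om_C (f) : Om F r (Polynomial.C f) = aeval (Sum.elim (fun i => X (Sum.inl i.succ))
    (fun j : Fin r => (X (Sum.inr j.succ) * X (Sum.inl j.succ) : Rt F (r + 1)))) f := by
  simp [Om]

/-- the twisted specialization -/
noncomputable def the : Rt F (r + 1) →ₐ[F] Rt F (r + 1) :=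
  aeval (Sum.elim (Fin.cons 0 (fun i => X (Sum.inl i.succ)))
    (Fin.cons (X (Sum.inr 0) - ∑ i : Fin r, X (Sum.inr i.succ)) (fun i => X (Sum.inr i.succ))))

lemma aof_cons {B : Type*} [CommRing B] (s : Fin r → B) (i : Fin r) :
    aof (Fin.cons 0 s : Fin (r + 1) → B) i.succ = aof s i := by
  simp only [aof, pQ, Fin.prod_univ_succ, Fin.cons_zero, Fin.cons_succ, map_zero, sub_zero,
    Fin.val_succ, Polynomial.coeff_X_mul]

lemma Om_rho (f) : Om F r ((rho F r f).map (Ph F r).toRingHom) = the F r (Ph F (r + 1) f) := by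
  have : (Om F r).comp ((Polynomial.mapAlgHom (Ph F r)).comp (rho F r)) =
      (the F r).comp (Ph F (r + 1)) := by
    have hs : (fun k : Fin (r + 1) => (the F r) (X (Sum.inl k))) =
        Fin.cons 0 (fun i : Fin r => X (Sum.inl i.succ)) := by
      funext k
      simp [the]
    apply algHom_ext
    rintro (i | i)
    · have h := Ph_av F (r + 1) i
      rw [av] at h
      simp only [AlgHom.comp_apply]
      rw [h, ← AlgHom.coe_toRingHom (the F r), map_aof]
      simp only [AlgHom.coe_toRingHom]
      rw [hs]
      refine Fin.cases ?_ (fun i => ?_) i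
      · rw [aof_zero, Fin.prod_univ_succ]
        simp [rho]
      · rw [aof_cons]
        simp only [rho, aeval_X, Sum.elim_inl, Fin.cons_succ, Polynomial.coe_mapAlgHom, Polynomial.map_C]
        have h := Ph_av F r i
        rw [av] at h
        simp only [RingHom.coe_coe, h]
        simp only [Om, Polynomial.eval₂AlgHom_apply, Polynomial.eval₂_C]
        rw [map_aof]
        simp
    · simp only [AlgHom.comp_apply, Ph, aeval_X, Sum.elim_inr, Fin.sum_univ_succ]
      refine Fin.cases ?_ (fun i => ?_) i
      · simp [rho, Om, the, Fin.sum_univ_succ]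
      · simp only [rho, aeval_X, Sum.elim_inr, Fin.cons_succ, Polynomial.coe_mapAlgHom, Polynomial.map_C]
        rw [Om_C]
        simp [the, pow_succ]
        refine Finset.sum_congr rfl fun i _ => ?_
        ring
  exact DFunLike.congr_fun this f

/-- exponent map -/
noncomputable def om (m : Fin r ⊕ Fin r →₀ ℕ) (i : ℕ) : Fin (r + 1) ⊕ Fin (r + 1) →₀ ℕ :=
  Finsupp.equivFunOnFinite.symm (Sum.elim (Fin.cons 0 fun k => m (Sum.inl k) + m (Sum.inr k))
    (Fin.cons i fun k => m (Sum.inr k)))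

lemma om_inj {m m' : Fin r ⊕ Fin r →₀ ℕ} {i i' : ℕ} (h : om r m i = om r m' i') : m = m' ∧ i = i' := by
  have h0 := fun x => DFunLike.congr_fun h x
  have h1 : i = i' := by simpa [om] using h0 (Sum.inr 0)
  have h2 : ∀ k, m (Sum.inr k) = m' (Sum.inr k) := fun k => by simpa [om] using h0 (Sum.inr k.succ)
  have h3 : ∀ k, m (Sum.inl k) = m' (Sum.inl k) := fun k => by
    have := h0 (Sum.inl k.succ)
    simp [om, h2] at this
    exact this
  refine ⟨?_, h1⟩
  ext (k | k)
  · exact h3 k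
  · exact h2 k

lemma Om_monomial (n : ℕ) (u : Fin r ⊕ Fin r →₀ ℕ) (c : F) :
    Om F r (Polynomial.monomial n (monomial u c)) = monomial (om r u n) c := by
  rw [Om, Polynomial.eval₂AlgHom_apply, Polynomial.eval₂_monomial]
  simp only [RingHom.coe_coe]
  rw [aeval_monomial, monomial_eq, Finsupp.prod_fintype _ _ (fun _ => pow_zero _),
    Finsupp.prod_fintype _ _ (fun _ => pow_zero _), Fintype.prod_sum_type, Fintype.prod_sum_type,
    Fin.prod_univ_succ, Fin.prod_univ_succ]
  simp only [om, Sum.elim_inl, Sum.elim_inr, Finsupp.equivFunOnFinite_symm_apply_apply, Fin.cons_zero,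
    Fin.cons_succ, pow_zero, one_mul, algebraMap_eq, mul_pow, pow_add, Finset.prod_mul_distrib]
  ring

lemma coeff_Om (g : Polynomial (Rt F r)) (m : Fin r ⊕ Fin r →₀ ℕ) (i : ℕ) :
    coeff (om r m i) (Om F r g) = coeff m (g.coeff i) := by
  classical
  induction g using Polynomial.induction_on' with
  | add p q hp hq => simp only [map_add, coeff_add, hp, hq, Polynomial.coeff_add]
  | monomial n a =>
    induction a using MvPolynomial.induction_on' with
    | add p q hp hq =>
      rw [map_add, map_add, coeff_add, hp, hq, ← coeff_add, ← Polynomial.coeff_add]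
    | monomial u c =>
      rw [Om_monomial, coeff_monomial, Polynomial.coeff_monomial]
      by_cases h : u = m ∧ n = i
      · rw [h.1, h.2]; simp
      · rw [if_neg]
        · by_cases h2 : n = i
          · rw [if_pos h2, coeff_monomial, if_neg]
            intro h3; exact h ⟨h3, h2⟩
          · rw [if_neg h2, coeff_zero]
        · intro h'; exact h (om_inj r h')

variable {F r}

lemma DL_the {w : Fin (r + 1) ⊕ Fin (r + 1) → ℤ} (hw : ∀ i : Fin r, w (Sum.inr i.succ) ≤ w (Sum.inr 0))
    {j : ℤ} {f : Rt F (r + 1)} (hf : DL w j f) : DL w j (the F r f) := by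
  refine DL.aeval _ ?_ hf
  rintro (i | i)
  · refine Fin.cases ?_ (fun i => ?_) i
    · simpa using DL.zero _ _
    · simpa using DL.X _ _ le_rfl
  · refine Fin.cases ?_ (fun i => ?_) i
    · simp only [Sum.elim_inr, Fin.cons_zero]
      exact (DL.X _ _ le_rfl).sub (DL.sum _ _ fun i _ => DL.X _ _ (hw i))
    · simpa using DL.X _ _ le_rfl

lemma rho_DL_wu {d : ℤ} {w : Rt F (r + 1)} (h : DL (wu (r + 1)) d (Ph F (r + 1) w)) (i : ℕ) :
    DL (wu r) (d - i) (Ph F r ((rho F r w).coeff i)) := by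
  intro m hm
  have h1 := DL_the (by simp [wu]) h (om r m i)
  rw [← Om_rho, coeff_Om, Polynomial.coeff_map] at h1
  have := h1 hm
  rw [wgt_eq_sum, Fintype.sum_sum_type, Fin.sum_univ_succ (n := r), Fin.sum_univ_succ (n := r)] at this
  rw [wgt_eq_sum, Fintype.sum_sum_type]
  simp [wu, om] at this ⊢
  linarith

lemma rho_DL_wt {N j : ℕ} {w : Rt F (r + 1)} (h : DL (wt (r + 1) (N + 1)) j (Ph F (r + 1) w)) (i : ℕ) :
    DL (wt r N) j (Ph F r ((rho F r w).coeff i)) := by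
  obtain _ | r := r
  · intro m _
    rw [wgt_eq_sum]; simp
  intro m hm
  have h1 := DL_the (by
    intro i
    simp only [wt, Sum.elim_inr, Fin.val_succ, Fin.val_zero]
    split_ifs <;> push_cast <;> omega) h (om (r + 1) m i)
  rw [← Om_rho, coeff_Om, Polynomial.coeff_map] at h1
  have := h1 hm
  rw [wgt_eq_sum, Fintype.sum_sum_type, Fin.sum_univ_succ (n := r + 1), Fin.sum_univ_succ (n := r + 1)] at this
  rw [wgt_eq_sum, Fintype.sum_sum_type]
  simp only [wt, om, Finsupp.equivFunOnFinite_symm_apply_apply, Sum.elim_inl, Sum.elim_inr,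
    Fin.cons_zero, Fin.cons_succ, Fin.val_succ, Fin.val_zero, add_left_inj] at this ⊢
  simp only [show ¬ (0 = r + 1) by omega, if_false] at this
  simp only [mul_ite, mul_zero, mul_one] at this ⊢
  have key : ∀ f : Fin (r + 1) → ℤ, (∑ x : Fin (r + 1), if (x : ℕ) = r then f x else 0) = f (Fin.last r) := by
    intro f
    rw [Finset.sum_eq_single (Fin.last r)]
    · simp
    · intro b _ hb
      rw [if_neg]
      intro h; exact hb (Fin.ext (by simpa using h))
    · simp
  simp only [key] at this ⊢
  push_cast at this
  linarith

lemma pow_mem_of_le {N i d : ℕ} (h : i ≤ d) : X1 F r N ^ i ≤ X1 F r N ^ d :=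
  pow_le_pow_right' (one_le_X1 N) h

lemma lift_mem {N j d : ℕ} {w : Rt F (r + 1)}
    (h : ∀ i ≤ d, (rho F r w).coeff i ∈ A1 F r ^ j * X1 F r N ^ (d - i))
    (h0 : ∀ i, d < i → (rho F r w).coeff i = 0) :
    ∃ y ∈ A1 F (r + 1) ^ j * X1 F (r + 1) (N + 1) ^ d, rho F r y = rho F r w := by
  have e1 : (A1 F r).map (Polynomial.CAlgHom (R := F)).toLinearMap ≤
      (A1 F (r + 1)).map (rho F r).toLinearMap := by
    rw [A1, Submodule.map_span, Submodule.span_le]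
    rintro _ ⟨y, rfl | ⟨i, rfl⟩, rfl⟩
    · exact ⟨1, Submodule.one_le.mp one_le_A1, by simp⟩
    · exact ⟨av F (r + 1) i.succ, av_mem_A1 _, rho_as F r i⟩
  have e2 : (X1 F r N).map (Polynomial.CAlgHom (R := F)).toLinearMap ≤
      (X1 F (r + 1) (N + 1)).map (rho F r).toLinearMap := by
    rw [X1, Submodule.map_span, Submodule.span_le]
    rintro _ ⟨y, rfl | ⟨i, hi, rfl⟩, rfl⟩
    · exact ⟨1, Submodule.one_le.mp (one_le_X1 _), by simp⟩
    · exact ⟨xs F (r + 1) (i + 1), xs_mem_X1 (by simpa using hi), rho_xsucc F r i⟩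
  have e3 : (Polynomial.X : Polynomial (Rt F r)) ∈ (X1 F (r + 1) (N + 1)).map (rho F r).toLinearMap :=
    ⟨xs F (r + 1) 0, xs_mem_X1 (by simp), rho_x0 F r⟩
  have key : rho F r w ∈ (A1 F (r + 1) ^ j * X1 F (r + 1) (N + 1) ^ d).map (rho F r).toLinearMap := by
    rw [(rho F r w).as_sum_range_C_mul_X_pow]
    refine Submodule.sum_mem _ fun i _ => ?_
    by_cases hi : i ≤ d
    · have h1 : Polynomial.C ((rho F r w).coeff i) ∈
          ((A1 F r ^ j * X1 F r N ^ (d - i))).map (Polynomial.CAlgHom (R := F)).toLinearMap :=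
        ⟨_, h i hi, rfl⟩
      rw [Submodule.map_mul, Submodule.map_pow, Submodule.map_pow] at h1 ⊢
      have h2 := mul_le_mul' (pow_le_pow_left' e1 j) (pow_le_pow_left' e2 (d - i)) h1
      have h3 := Submodule.mul_mem_mul h2 (Submodule.pow_mem_pow _ e3 i)
      rw [mul_assoc, ← pow_add, Nat.sub_add_cancel hi] at h3
      exact h3
    · rw [h0 i (by omega)]; simp
  obtain ⟨y, hy, hy2⟩ := key
  exact ⟨y, hy, hy2⟩

lemma D0_A1 (k : ℕ) : ∀ y ∈ A1 F (r + 1) ^ k,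
    Dm (r + 1) (xs F (r + 1)) 0 * y ∈ Vsp F (r + 1) (xs F (r + 1)) (r + k) := by
  induction k with
  | zero =>
    intro y hy
    rw [pow_zero, Submodule.mem_one] at hy
    obtain ⟨c, rfl⟩ := hy
    rw [mul_comm, ← Algebra.smul_def]
    exact Submodule.smul_mem _ _ (Dm_mem_Vsp _ _ _ (by omega))
  | succ k ih =>
    intro y hy
    rw [pow_succ] at hy
    induction hy using Submodule.mul_induction_on' with
    | mem_mul_mem u hu v hv =>
      have hu' := ih u hu
      rw [A1] at hv
      induction hv using Submodule.span_induction with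
      | zero => simp
      | add a b _ _ h1 h2 => rw [mul_add, mul_add]; exact Submodule.add_mem _ h1 h2
      | smul c a _ h1 => rw [mul_smul_comm, mul_smul_comm]; exact Submodule.smul_mem _ _ h1
      | mem a ha =>
        rcases ha with rfl | ⟨i, rfl⟩
        · rw [mul_one]; exact Vsp_mono _ _ (by omega) hu'
        · have := Vsp_step (xs_rec F (r + 1)) _ i hu'
          rw [show Dm (r + 1) (xs F (r + 1)) 0 * (u * av F (r + 1) i) =
            av F (r + 1) i * (Dm (r + 1) (xs F (r + 1)) 0 * u) by ring]
          exact this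
    | add a _ b _ h1 h2 => rw [mul_add]; exact Submodule.add_mem _ h1 h2

lemma Dt_mem_X1 {N m : ℕ} (hN : r + m ≤ N) (b : Fin r → ℕ) (hb : ∀ j, b j ≤ m) :
    Dt r (xs F r) b ∈ X1 F r N ^ r := by
  rw [Dt, det_apply]
  refine Submodule.sum_mem _ fun σ _ => ?_
  have : ∏ i, (of fun i j : Fin r => xs F r (i + b j)) (σ i) i ∈ X1 F r N ^ r := by
    have h : ∀ (s : Finset (Fin r)), ∏ i ∈ s, (of fun i j : Fin r => xs F r (i + b j)) (σ i) i ∈ X1 F r N ^ s.card := by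
      classical
      intro s
      induction s using Finset.induction_on with
      | empty =>
        rw [Finset.prod_empty, Finset.card_empty, pow_zero]
        exact Submodule.one_le.mp le_rfl
      | insert a s ha ih =>
        rw [Finset.prod_insert ha, Finset.card_insert_of_notMem ha, pow_succ']
        refine Submodule.mul_mem_mul (xs_mem_X1 ?_) ih
        have := hb a
        have := (σ a).2
        omega
    simpa using h Finset.univ
  rcases Int.units_eq_one_or (Equiv.Perm.sign σ) with h | h <;> rw [h]
  · simpa using this
  · simpa using this

lemma Vsp_le {N m : ℕ} (hN : r + m ≤ N) : Vsp F r (xs F r) m ≤ X1 F r N ^ r := by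
  rw [Vsp, Submodule.span_le]
  rintro _ ⟨b, hb, rfl⟩
  exact Dt_mem_X1 hN b hb

theorem P4 : ∀ (r h d j : ℕ) (w : Rt F r), DL (wu r) d (Ph F r w) →
    DL (wt r (2 * r + h)) j (Ph F r w) → w ∈ A1 F r ^ j * X1 F r (2 * r + h) ^ d := by
  intro r
  induction r with
  | zero =>
    intro h d j w _ _
    have h1 : (1 : Submodule F (Rt F 0)) ≤ A1 F 0 ^ j * X1 F 0 (2 * 0 + h) ^ d :=
      one_le_mul (one_le_pow_of_one_le' one_le_A1 _) (one_le_pow_of_one_le' (one_le_X1 _) _)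
    apply h1
    rw [eq_C_of_isEmpty w, Submodule.mem_one]
    exact ⟨_, rfl⟩
  | succ r ihr =>
    intro h d
    induction d using Nat.strong_induction_on with
    | _ d ihd =>
    intro j
    have eN : 2 * (r + 1) + h = (2 * r + (h + 1)) + 1 := by ring
    have base : ∀ (j : ℕ) (w : Rt F (r + 1)), DL (wu (r + 1)) d (Ph F (r + 1) w) →
      DL (wt (r + 1) (2 * (r + 1) + h)) j (Ph F (r + 1) w) →
      ∃ y ∈ A1 F (r + 1) ^ j * X1 F (r + 1) (2 * (r + 1) + h) ^ d, ∃ w1, w = y + av F (r + 1) 0 * w1 ∧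
        DL (wu (r + 1)) d (Ph F (r + 1) w1) ∧
        DL (wt (r + 1) (2 * (r + 1) + h)) (j - 1) (Ph F (r + 1) w1) := by
      intro j w h1 h2
      obtain ⟨y, hy, hyw⟩ := lift_mem (N := 2 * r + (h + 1)) (j := j) (d := d) (w := w) (fun i hi => by
        refine ihr _ _ _ _ ?_ (rho_DL_wt (by rw [eN] at h2; exact h2) i)
        have := rho_DL_wu h1 i
        rw [Nat.cast_sub hi]; exact this) (fun i hi => wu_neg (by omega) (rho_DL_wu h1 i))
      rw [← eN] at hy
      obtain ⟨w1, hw1⟩ := rho_ker F r (f := w - y) (by rw [map_sub, hyw, sub_self])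
      have hd := AX_DL hy
      refine ⟨y, hy, w1, by rw [← hw1]; ring, ?_, ?_⟩
      · refine DL_cancel (wu_a0 r) (f := Ph F (r + 1) (av F (r + 1) 0)) ?_
        rw [← map_mul, ← hw1, map_sub, zero_add]
        exact h1.sub hd.2
      · refine DL_cancel (wt_a0 r _) (f := Ph F (r + 1) (av F (r + 1) 0)) ?_
        rw [← map_mul, ← hw1, map_sub, add_sub_cancel]
        exact h2.sub hd.1
    induction j with
    | zero =>
      intro w h1 h2
      obtain ⟨y, hy, w1, rfl, h3, h4⟩ := base 0 w h1 h2
      refine Submodule.add_mem _ hy ?_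
      obtain ⟨w2, rfl⟩ := D0_dvd (h4.mono (by simp))
      have h5 : DL (wu (r + 1)) (d - (r + 1)) (Ph F (r + 1) w2) := by
        have := (wu_D0 (F := F) (r + 1)).2
        refine DL_cancel this ?_
        rw [← map_mul]
        exact h3.mono (by push_cast; linarith)
      have h6 : DL (wt (r + 1) (2 * (r + 1) + h)) h (Ph F (r + 1) w2) := by
        refine DL_cancel (wt_D0 (F := F) r h _ rfl).2 ?_
        rw [← map_mul]
        exact h4.mono (by push_cast; linarith)
      by_cases hd : r + 1 ≤ d
      · have h7 := ihd (d - (r + 1)) (by omega) h w2 (by rw [Nat.cast_sub hd]; exact_mod_cast h5) h6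
        have h8 := Submodule.mul_mem_mul (av_mem_A1 (F := F) (0 : Fin (r + 1))) h7
        rw [← mul_assoc, ← pow_succ'] at h8
        have h9 : ∀ z ∈ A1 F (r + 1) ^ (h + 1) * X1 F (r + 1) (2 * (r + 1) + h) ^ (d - (r + 1)),
            Dm (r + 1) (xs F (r + 1)) 0 * z ∈ X1 F (r + 1) (2 * (r + 1) + h) ^ d := by
          intro z hz
          induction hz using Submodule.mul_induction_on' with
          | mem_mul_mem u hu v hv =>
            have := Submodule.mul_mem_mul (Vsp_le (N := 2 * (r + 1) + h) (by omega) (D0_A1 _ u hu)) hv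
            rw [← pow_add, Nat.add_sub_cancel' hd, mul_assoc] at this
            exact this
          | add a _ b _ h1 h2 => rw [mul_add (Dm (r + 1) (xs F (r + 1)) 0)]; exact Submodule.add_mem _ h1 h2
        rw [pow_zero, one_mul, mul_left_comm]
        exact h9 _ h8
      · rw [wu_neg (by push_cast; omega) h5]
        simp
    | succ j ihj =>
      intro w h1 h2
      obtain ⟨y, hy, w1, rfl, h3, h4⟩ := base (j + 1) w h1 h2
      refine Submodule.add_mem _ hy ?_
      have := ihj w1 h3 (by simpa using h4)
      rw [pow_succ', mul_assoc]
      exact Submodule.mul_mem_mul (av_mem_A1 _) this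

/-- elements of nonpositive weight lie in the subalgebra generated by the `x_j` -/
theorem mem_adjoin (r h : ℕ) (w : Rt F r) (hw : DL (wt r (2 * r + h)) 0 (Ph F r w)) :
    w ∈ Algebra.adjoin F (xs F r '' {j | j < 2 * r + h}) := by
  obtain ⟨d, hd⟩ := exists_DL (wu r) (Ph F r w)
  have := P4 r h d 0 w hd (by simpa using hw)
  rw [pow_zero, one_mul] at this
  have h1 : X1 F r (2 * r + h) ≤ Subalgebra.toSubmodule (Algebra.adjoin F (xs F r '' {j | j < 2 * r + h})) := by
    rw [X1, Submodule.span_le]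
    rintro y (rfl | hy)
    · exact Subalgebra.one_mem _
    · exact Algebra.subset_adjoin hy
  have h2 : ∀ k, X1 F r (2 * r + h) ^ k ≤ Subalgebra.toSubmodule (Algebra.adjoin F (xs F r '' {j | j < 2 * r + h})) := by
    intro k
    induction k with
    | zero => rw [pow_zero, Submodule.one_le]; exact Subalgebra.one_mem _
    | succ k ih =>
      rw [pow_succ, Submodule.mul_le]
      intro a ha b hb
      exact Subalgebra.mul_mem _ (ih ha) (h1 hb)
  exact h2 d this

end P4

end HK

namespace HK

section P1

/-- 2-separated sequences -/
def Sep {r : ℕ} (c : Fin r → ℕ) : Prop := ∀ i j, i < j → c i + 2 ≤ c j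

lemma Sep_cons {r : ℕ} {c : Fin r → ℕ} (hc : Sep c) (a : ℕ) (ha : ∀ i, a + 2 ≤ c i) :
    Sep (Fin.cons a c : Fin (r + 1) → ℕ) := by
  intro i j
  refine Fin.cases ?_ (fun i => ?_) i <;> refine Fin.cases ?_ (fun j => ?_) j
  · simp
  · intro _; simpa using ha j
  · intro h; simp at h
  · intro h; simpa using hc i j (by simpa using h)

lemma greedy (r : ℕ) : ∀ (b : ℕ) (T : Finset ℕ), (∀ x ∈ T, b ≤ x) →
    (∃ c : Fin r → ℕ, Sep c ∧ (∀ i, b ≤ c i) ∧ ∀ x ∈ T, ∃ i, x = c i ∨ x = c i + 1) ∨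
    (∃ e : Fin (r + 1) → ℕ, Sep e ∧ ∀ i, e i ∈ T) := by
  induction r with
  | zero =>
    intro b T _
    by_cases h : T.Nonempty
    · obtain ⟨x, hx⟩ := h
      right
      refine ⟨fun _ => x, fun i j hij => ?_, fun _ => hx⟩
      omega
    · left
      rw [Finset.not_nonempty_iff_eq_empty] at h
      refine ⟨fun _ => 0, fun i => i.elim0, fun i => i.elim0, by simp [h]⟩
  | succ r ih =>
    intro b T hT
    by_cases h : T.Nonempty
    · set c0 := T.min' h with hc0
      have hmem := T.min'_mem h
      rcases ih (c0 + 2) (T.filter fun x => c0 + 2 ≤ x) (fun x hx => (Finset.mem_filter.mp hx).2)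
        with ⟨c, h1, h2, h3⟩ | ⟨e, h1, h2⟩
      · left
        refine ⟨Fin.cons c0 c, Sep_cons h1 _ h2, ?_, ?_⟩
        · refine Fin.cases ?_ (fun i => ?_)
          · simp only [Fin.cons_zero]; exact hT _ hmem
          · have := h2 i
            have := hT _ hmem
            simp only [Fin.cons_succ]; omega
        · intro x hx
          by_cases hx2 : c0 + 2 ≤ x
          · obtain ⟨i, hi⟩ := h3 x (Finset.mem_filter.mpr ⟨hx, hx2⟩)
            exact ⟨i.succ, by simpa using hi⟩
          · refine ⟨0, ?_⟩
            have := T.min'_le x hx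
            simp only [Fin.cons_zero]; omega
      · right
        refine ⟨Fin.cons c0 e, Sep_cons h1 _ fun i => (Finset.mem_filter.mp (h2 i)).2, ?_⟩
        refine Fin.cases ?_ (fun i => ?_)
        · simpa using hmem
        · simpa using (Finset.mem_filter.mp (h2 i)).1
    · left
      rw [Finset.not_nonempty_iff_eq_empty] at h
      refine ⟨fun i => b + 2 * i, fun i j hij => ?_, fun i => Nat.le_add_right _ _, by simp [h]⟩
      have : (i : ℕ) < j := hij
      show b + 2 * (i : ℕ) + 2 ≤ b + 2 * (j : ℕ)
      omega

variable {σ τ F : Type*} [Field F]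

lemma DL_aeval_sub {w : σ → ℤ} {v : τ → ℤ} (g g' : σ → MvPolynomial τ F)
    (hg : ∀ i, DL v (w i) (g i)) (hg' : ∀ i, DL v (w i) (g' i))
    (hd : ∀ i, DL v (w i - 1) (g i - g' i)) {k : ℤ} {f : MvPolynomial σ F} (hf : DL w k f) :
    DL v (k - 1) (aeval g f - aeval g' f) := by
  classical
  have key : ∀ m : σ →₀ ℕ, DL v (wgt w m) (aeval g (monomial m (1 : F))) ∧
      DL v (wgt w m - 1) (aeval g (monomial m (1 : F)) - aeval g' (monomial m (1 : F))) := by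
    intro m
    induction m using Finsupp.induction_linear with
    | zero =>
      rw [wgt_zero]
      simp only [monomial_zero', map_one, sub_self]
      exact ⟨DL.one _ le_rfl, DL.zero _ _⟩
    | add m m' h1 h2 =>
      rw [wgt_add]
      have e : monomial (m + m') (1 : F) = monomial m 1 * monomial m' 1 := by
        rw [monomial_mul, one_mul]
      rw [e, map_mul, map_mul]
      refine ⟨h1.1.mul h2.1, ?_⟩
      have : aeval g (monomial m (1 : F)) * aeval g (monomial m' (1 : F)) -
        aeval g' (monomial m (1 : F)) * aeval g' (monomial m' (1 : F)) =
        aeval g (monomial m (1 : F)) * (aeval g (monomial m' (1 : F)) - aeval g' (monomial m' (1 : F)))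
        + (aeval g (monomial m (1 : F)) - aeval g' (monomial m (1 : F))) * aeval g' (monomial m' (1 : F)) := by ring
      rw [this]
      have h3 : DL v (wgt w m') (aeval g' (monomial m' (1 : F))) := by
        have := h2.1.sub (h2.2.mono (by omega : wgt w m' - 1 ≤ wgt w m'))
        rwa [sub_sub_cancel] at this
      exact (h1.1.mul' h2.2 (by omega)).add (h1.2.mul' h3 (by omega))
    | single i n =>
      rw [wgt_single]
      have e : monomial (Finsupp.single i n) (1 : F) = X i ^ n := by rw [X_pow_eq_monomial]
      rw [e]
      simp only [map_pow, aeval_X]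
      refine ⟨(hg i).pow n, ?_⟩
      clear e
      induction n with
      | zero => simpa using DL.zero _ _
      | succ n ih =>
        have : g i ^ (n + 1) - g' i ^ (n + 1) = g i ^ n * (g i - g' i) + (g i ^ n - g' i ^ n) * g' i := by ring
        rw [this]
        refine (((hg i).pow n).mul' (hd i) ?_).add (ih.mul' (hg' i) ?_) <;>
          push_cast <;> linarith [add_mul (n:ℤ) 1 (w i)]
  rw [f.as_sum, map_sum, map_sum, ← Finset.sum_sub_distrib]
  refine DL.sum _ _ fun m hm => ?_
  have e : monomial m (coeff m f) = C (coeff m f) * monomial m 1 := by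
    rw [C_mul_monomial, mul_one]
  rw [e, map_mul, map_mul, aeval_C, aeval_C, ← mul_sub, ← Algebra.smul_def]
  exact ((key m).2.smul _).mono (by have := hf m (mem_support_iff.mp hm); omega)

variable {r : ℕ}

/-- exponent map -/
noncomputable def Ec (i : ℕ → Fin r) (u : ℕ →₀ ℕ) : Fin r ⊕ Fin r →₀ ℕ :=
  u.sum fun j k => k • (Finsupp.single (Sum.inr (i j)) 1 + Finsupp.single (Sum.inl (i j)) j)

lemma Ec_apply_inr (i : ℕ → Fin r) (u : ℕ →₀ ℕ) (k : Fin r) :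
    Ec i u (Sum.inr k) = ∑ j ∈ u.support, if i j = k then u j else 0 := by
  classical
  simp [Ec, Finsupp.sum, Finsupp.finset_sum_apply, Finsupp.single_apply]

lemma Ec_apply_inl (i : ℕ → Fin r) (u : ℕ →₀ ℕ) (k : Fin r) :
    Ec i u (Sum.inl k) = ∑ j ∈ u.support, if i j = k then u j * j else 0 := by
  classical
  simp [Ec, Finsupp.sum, Finsupp.finset_sum_apply, Finsupp.single_apply]
  refine Finset.sum_congr rfl fun j _ => by split_ifs <;> rfl

lemma fib_sum (c : Fin r → ℕ) (i : ℕ → Fin r) (hi0 : ∀ k, i (c k) = k) (hi1 : ∀ k, i (c k + 1) = k)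
    (u : ℕ →₀ ℕ) (hu : ∀ j ∈ u.support, j = c (i j) ∨ j = c (i j) + 1) (k : Fin r) (g : ℕ → ℕ)
    (hg : ∀ j, u j = 0 → g j = 0) :
    (∑ j ∈ u.support, if i j = k then g j else 0) = g (c k) + g (c k + 1) := by
  classical
  have h1 : (∑ j ∈ u.support, if i j = k then g j else 0) =
      ∑ j ∈ u.support ∪ {c k, c k + 1}, if i j = k then g j else 0 := by
    apply Finset.sum_subset Finset.subset_union_left
    intro x _ hx
    rw [hg x (by simpa using hx)]; simp
  rw [h1, ← Finset.sum_subset (s₁ := {c k, c k + 1}) Finset.subset_union_right]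
  · rw [Finset.sum_pair (by omega), if_pos (hi0 k), if_pos (hi1 k)]
  · intro x hx hx2
    rw [if_neg]
    rintro rfl
    rcases Finset.mem_union.mp hx with h | h
    · rcases hu x h with h' | h'
      · exact hx2 (by rw [← h']; simp)
      · exact hx2 (by rw [← h']; simp)
    · exact hx2 h

lemma Ec_inj (c : Fin r → ℕ) (i : ℕ → Fin r) (hi0 : ∀ k, i (c k) = k) (hi1 : ∀ k, i (c k + 1) = k)
    (u u' : ℕ →₀ ℕ) (hu : ∀ j ∈ u.support, j = c (i j) ∨ j = c (i j) + 1)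
    (hu' : ∀ j ∈ u'.support, j = c (i j) ∨ j = c (i j) + 1) (h : Ec i u = Ec i u') : u = u' := by
  have key : ∀ k, u (c k) = u' (c k) ∧ u (c k + 1) = u' (c k + 1) := by
    intro k
    have h1 := DFunLike.congr_fun h (Sum.inr k)
    have h2 := DFunLike.congr_fun h (Sum.inl k)
    rw [Ec_apply_inr, Ec_apply_inr, fib_sum c i hi0 hi1 u hu k u (fun _ h => h),
      fib_sum c i hi0 hi1 u' hu' k u' (fun _ h => h)] at h1
    rw [Ec_apply_inl, Ec_apply_inl, fib_sum c i hi0 hi1 u hu k (fun j => u j * j) (fun _ h => by simp [h]),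
      fib_sum c i hi0 hi1 u' hu' k (fun j => u' j * j) (fun _ h => by simp [h])] at h2
    have e : u (c k + 1) = u' (c k + 1) := by
      zify at h1 h2 ⊢
      linear_combination h2 - (c k : ℤ) * h1
    omega
  ext j
  by_cases h1 : j ∈ u.support
  · rcases hu j h1 with h | h <;> rw [h]
    · exact (key _).1
    · exact (key _).2
  · by_cases h2 : j ∈ u'.support
    · rcases hu' j h2 with h | h <;> rw [h]
      · exact (key _).1
      · exact (key _).2
    · rw [Finsupp.notMem_support_iff.mp h1, Finsupp.notMem_support_iff.mp h2]

open Classical in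
/-- initial form of the parametrization -/
noncomputable def ka0 (F : Type*) [Field F] (c : Fin r → ℕ) (i : ℕ → Fin r) (j : ℕ) : Rt F r :=
  if (j = c (i j) ∨ j = c (i j) + 1) then X (Sum.inr (i j)) * X (Sum.inl (i j)) ^ j else 0

lemma ka0_monomial (c : Fin r → ℕ) (i : ℕ → Fin r) (u : ℕ →₀ ℕ) (a : F)
    (hu : ∀ j ∈ u.support, j = c (i j) ∨ j = c (i j) + 1) :
    aeval (ka0 F c i) (monomial u a) = monomial (Ec i u) a := by
  rw [aeval_monomial, Finsupp.prod]
  have : ∀ j ∈ u.support, ka0 F c i j ^ u j = monomial (u j • (Finsupp.single (Sum.inr (i j)) 1 + Finsupp.single (Sum.inl (i j)) j)) 1 := by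
    intro j hj
    rw [ka0, if_pos (hu j hj), X_pow_eq_monomial, X, monomial_mul, monomial_pow]
    simp
  rw [Finset.prod_congr rfl this, algebraMap_eq, ← monomial_sum_one, C_mul_monomial, mul_one]
  rfl

lemma ka0_monomial' (c : Fin r → ℕ) (i : ℕ → Fin r) (u : ℕ →₀ ℕ) (a : F)
    (hu : ¬ ∀ j ∈ u.support, j = c (i j) ∨ j = c (i j) + 1) :
    aeval (ka0 F c i) (monomial u a) = 0 := by
  push Not at hu
  obtain ⟨j, hj, h1, h2⟩ := hu
  rw [aeval_monomial, Finsupp.prod, Finset.prod_eq_zero hj, mul_zero]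
  rw [ka0, if_neg (by tauto)]
  exact zero_pow (Finsupp.mem_support_iff.mp hj)

lemma ka0_coeff (c : Fin r → ℕ) (i : ℕ → Fin r) (hi0 : ∀ k, i (c k) = k) (hi1 : ∀ k, i (c k + 1) = k)
    (m : ℕ →₀ ℕ) (hm : ∀ j ∈ m.support, j = c (i j) ∨ j = c (i j) + 1) (f : MvPolynomial ℕ F) :
    coeff (Ec i m) (aeval (ka0 F c i) f) = coeff m f := by
  classical
  induction f using MvPolynomial.induction_on' with
  | add p q hp hq => rw [map_add, coeff_add, coeff_add, hp, hq]
  | monomial u a =>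
    by_cases hu : ∀ j ∈ u.support, j = c (i j) ∨ j = c (i j) + 1
    · rw [ka0_monomial c i u a hu, coeff_monomial, coeff_monomial]
      congr 1
      rw [eq_iff_iff]
      exact ⟨fun h => Ec_inj c i hi0 hi1 u m hu hm h, fun h => by rw [h]⟩
    · rw [ka0_monomial' c i u a hu, coeff_zero, coeff_monomial, if_neg]
      rintro rfl; exact hu hm

/-- weights -/
def vc (c : Fin r → ℕ) : Fin r ⊕ Fin r → ℤ :=
  Sum.elim (fun i => 2 * (c i : ℤ) + 1) (fun i => - ((c i : ℤ) * (c i + 1)))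

lemma vc_term (c : Fin r → ℕ) (k : Fin r) (j : ℕ) :
    DL (vc c) ((j : ℤ) ^ 2 - (j - c k) * (j - c k - 1)) (X (Sum.inr k) * X (Sum.inl k) ^ j : Rt F r) := by
  refine ((DL.X _ _ le_rfl).mul ((DL.X _ _ le_rfl).pow j)).mono ?_
  simp only [vc, Sum.elim_inl, Sum.elim_inr]
  ring_nf; exact le_rfl

lemma vc_ineq (a : ℤ) : 0 ≤ a * (a - 1) := by
  rcases le_or_gt a 0 with h | h
  · nlinarith
  · nlinarith

lemma vc_ineq' (a : ℤ) (h0 : a ≠ 0) (h1 : a ≠ 1) : 1 ≤ a * (a - 1) := by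
  rcases lt_or_gt_of_ne h0 with h | h
  · nlinarith
  · have : 2 ≤ a := by omega
    nlinarith

/-- Key claim: top-weight monomials of kernel elements are not covered. -/
lemma not_covered (hr : 0 < r) (c : Fin r → ℕ) (hc : Sep c) (f : MvPolynomial ℕ F)
    (hf : aeval (xs F r) f = 0) (k : ℤ) (hk : DL (fun j : ℕ => (j : ℤ) ^ 2) k f) (m : ℕ →₀ ℕ)
    (hm : coeff m f ≠ 0) (hmk : wgt (fun j : ℕ => (j : ℤ) ^ 2) m = k)
    (hcov : ∀ x ∈ m.support, ∃ i, x = c i ∨ x = c i + 1) : False := by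
  classical
  have hinj : ∀ a b, (c a = c b ∨ c a = c b + 1 ∨ c a + 1 = c b) → a = b := by
    intro a b h
    rcases lt_trichotomy a b with h1 | h1 | h1
    · have := hc _ _ h1; omega
    · exact h1
    · have := hc _ _ h1; omega
  have hex : ∀ j : ℕ, ∃ i : Fin r, (∃ i, j = c i ∨ j = c i + 1) → (j = c i ∨ j = c i + 1) := by
    intro j
    by_cases h : ∃ i, j = c i ∨ j = c i + 1
    · obtain ⟨i, hi⟩ := h; exact ⟨i, fun _ => hi⟩
    · exact ⟨⟨0, hr⟩, fun h' => absurd h' h⟩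
  choose i hi using hex
  have hi0 : ∀ k, i (c k) = k := fun k => by
    have := hi (c k) ⟨k, Or.inl rfl⟩
    exact hinj _ _ (by omega)
  have hi1 : ∀ k, i (c k + 1) = k := fun k => by
    have := hi (c k + 1) ⟨k, Or.inr rfl⟩
    exact hinj _ _ (by omega)
  have hm2 : ∀ j ∈ m.support, j = c (i j) ∨ j = c (i j) + 1 := fun j hj => hi j (hcov j hj)
  set g : ℕ → Rt F r := fun j => ∑ k, X (Sum.inr k) * X (Sum.inl k) ^ j with hg
  have e1 : aeval g f = 0 := by
    have : (Ph F r).comp (aeval (xs F r)) = aeval (R := F) g := by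
      apply algHom_ext
      intro j
      simp only [AlgHom.comp_apply, aeval_X, Ph_xs, hg]
    rw [← this, AlgHom.comp_apply, hf, map_zero]
  have hterm : ∀ j : ℕ, ∀ k, DL (vc c) ((j : ℤ) ^ 2) (X (Sum.inr k) * X (Sum.inl k) ^ j : Rt F r) :=
    fun j k => (vc_term c k j).mono (by have := vc_ineq ((j : ℤ) - c k); linarith)
  have e2 := DL_aeval_sub (w := fun j : ℕ => (j : ℤ) ^ 2) (v := vc c) g (ka0 F c i)
    (fun j => DL.sum _ _ fun k _ => hterm j k)
    (fun j => by
      rw [ka0]; split_ifs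
      · exact hterm j _
      · exact DL.zero _ _)
    (fun j => by
      have hlow : ∀ k : Fin r, ¬ (j = c k ∨ j = c k + 1) →
          DL (vc c) ((j : ℤ) ^ 2 - 1) (X (Sum.inr k) * X (Sum.inl k) ^ j : Rt F r) := by
        intro k hk
        refine (vc_term c k j).mono ?_
        have := vc_ineq' ((j : ℤ) - c k) (by omega) (by omega)
        linarith
      rw [ka0]
      split_ifs with h
      · rw [hg]
        simp only
        rw [← Finset.add_sum_erase _ _ (Finset.mem_univ (i j)), add_sub_cancel_left]
        refine DL.sum _ _ fun k hk => hlow k fun hk2 => (Finset.mem_erase.mp hk).1 (hinj _ _ (by omega))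
      · rw [sub_zero]
        refine DL.sum _ _ fun k _ => hlow k fun hk2 => h (hi j ⟨k, hk2⟩)) hk
  rw [e1, zero_sub] at e2
  have e3 := DL_neg_iff.mp e2 (Ec i m) (by rw [ka0_coeff c i hi0 hi1 m hm2]; exact hm)
  have e4 : wgt (vc c) (Ec i m) = wgt (fun j : ℕ => (j : ℤ) ^ 2) m := by
    have a1 : wgt (vc c) (Ec i m) = m.sum fun j k => wgt (vc c)
      (k • (Finsupp.single (Sum.inr (i j)) 1 + Finsupp.single (Sum.inl (i j)) j)) := by
      rw [Ec, Finsupp.sum, Finsupp.sum]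
      simp only [wgt, map_sum]
    have a2 : wgt (fun j : ℕ => (j : ℤ) ^ 2) m = m.sum fun j k => (k : ℤ) * (j : ℤ) ^ 2 := by
      simp [wgt, Finsupp.weight_apply]
    rw [a1, a2]
    refine Finsupp.sum_congr fun j hj => ?_
    have a3 : ∀ (a : ℕ) x, wgt (vc c) (a • x) = a * wgt (vc c) x := by
      intro a x; simp [wgt]
    rw [a3, wgt_add, wgt_single, wgt_single]
    simp only [vc, Sum.elim_inl, Sum.elim_inr]
    have hz : ((j : ℤ) - c (i j)) * (j - c (i j) - 1) = 0 := by
      rw [mul_eq_zero]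
      have := hm2 j hj
      omega
    push_cast
    linear_combination -(m j : ℤ) * hz
  omega

end P1

end HK

namespace HK

section P1b

variable {F : Type*} [Field F] {r n N : ℕ}

/-- the variables, extended by zero -/
noncomputable def yv (F : Type*) [Field F] (N : ℕ) (j : ℕ) : MvPolynomial (Fin N) F :=
  if h : j < N then X ⟨j, h⟩ else 0

/-- squared weights -/
def Wq (N : ℕ) (j : Fin N) : ℤ := ((j : ℕ) : ℤ) ^ 2

lemma DL_yv (N j : ℕ) : DL (Wq N) ((j : ℤ) ^ 2) (yv F N j) := by
  unfold yv
  split_ifs with h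
  · exact DL.X _ _ le_rfl
  · exact DL.zero _ _

lemma le_of_Sep {e : Fin (r + 1) → ℕ} (he : Sep e) (i : Fin (r + 1)) : (i : ℕ) ≤ e i := by
  induction i using Fin.induction with
  | zero => simp
  | succ i ih =>
    have := he i.castSucc i.succ (Fin.castSucc_lt_succ)
    simp only [Fin.val_castSucc, Fin.val_succ] at *
    omega

lemma b_mono {e : Fin (r + 1) → ℕ} (he : Sep e) : StrictMono fun i => e i - (i : ℕ) := by
  rw [Fin.strictMono_iff_lt_succ]
  intro i
  have h1 := he i.castSucc i.succ (Fin.castSucc_lt_succ)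
  have h2 := le_of_Sep he i.castSucc
  simp only [Fin.val_castSucc, Fin.val_succ] at *
  omega

lemma perm_lt {b : Fin (r + 1) → ℕ} (hb : StrictMono b) (s : Equiv.Perm (Fin (r + 1))) (hs : s ≠ 1) :
    ∑ i, (((s i : ℕ) + b i : ℕ) : ℤ) ^ 2 ≤ (∑ i : Fin (r + 1), (((i : ℕ) + b i : ℕ) : ℤ) ^ 2) - 1 := by
  have h1 : Monovary (fun i : Fin (r + 1) => ((i : ℕ) : ℤ)) (fun i => (b i : ℤ)) := by
    intro i j hij
    have : b i < b j := by simpa using hij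
    have := hb.lt_iff_lt.mp this
    simp only
    exact_mod_cast this.le
  have h2 := (h1.sum_comp_perm_mul_lt_sum_mul_iff (σ := s)).mpr (by
    intro h
    apply hs
    have h3 : StrictMono s := by
      intro i j hij
      have := h (i := i) (j := j) (by simpa using hb hij)
      have h4 : (s i : ℕ) ≤ s j := by simpa using this
      have h5 : s i ≠ s j := fun h => hij.ne (s.injective h)
      exact lt_of_le_of_ne h4 h5
    have := h3.eq_id
    ext i
    rw [this]; simp)
  have h3 : ∑ i, ((s i : ℕ) : ℤ) ^ 2 = ∑ i : Fin (r + 1), ((i : ℕ) : ℤ) ^ 2 :=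
    Equiv.sum_comp s fun i : Fin (r + 1) => ((i : ℕ) : ℤ) ^ 2
  have e : ∀ u : Fin (r + 1) → Fin (r + 1), ∑ i, (((u i : ℕ) + b i : ℕ) : ℤ) ^ 2 =
      ∑ i, ((u i : ℕ) : ℤ) ^ 2 + 2 * ∑ i, ((u i : ℕ) : ℤ) * b i + ∑ i, (b i : ℤ) ^ 2 := by
    intro u
    rw [Finset.mul_sum, ← Finset.sum_add_distrib, ← Finset.sum_add_distrib]
    exact Finset.sum_congr rfl fun i _ => by push_cast; ring
  have e1 := e s
  have e2 := e id
  simp only [id] at e2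
  rw [e1, e2, h3]
  linarith

lemma Dt_lead {e : Fin (r + 1) → ℕ} (he : Sep e) :
    DL (Wq N) ((∑ i, (e i : ℤ) ^ 2) - 1)
      (∏ i, yv F N (e i) - Dt (r + 1) (yv F N) (fun i => e i - (i : ℕ))) := by
  classical
  rw [Dt, det_apply, ← Finset.add_sum_erase _ _ (Finset.mem_univ (1 : Equiv.Perm (Fin (r + 1))))]
  have hei : ∀ i : Fin (r + 1), (i : ℕ) + (e i - (i : ℕ)) = e i := fun i => by
    have := le_of_Sep he i; omega
  simp only [Equiv.Perm.sign_one, one_smul, Equiv.Perm.one_apply, of_apply, hei]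
  rw [sub_add_cancel_left]
  refine (DL.sum _ _ fun s hs => ?_).neg
  have h1 := perm_lt (b_mono he) s (Finset.mem_erase.mp hs).1
  simp only [hei] at h1
  have : DL (Wq N) ((∑ i, (e i : ℤ) ^ 2) - 1) (∏ i, yv F N ((s i : ℕ) + (e i - (i : ℕ)))) :=
    (DL.prod _ _ _ fun i _ => DL_yv N _).mono h1
  rcases Int.units_eq_one_or (Equiv.Perm.sign s) with h | h <;> rw [h]
  · simpa using this
  · simpa using this.neg

/-- the presentation -/
noncomputable def pr (F : Type*) [Field F] (r N : ℕ) : MvPolynomial (Fin N) F →ₐ[F] Rt F r :=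
  aeval fun j : Fin N => xs F r j

lemma pr_yv (j : ℕ) (hj : j < N) : pr F r N (yv F N j) = xs F r j := by
  simp [pr, yv, hj]

/-- ideal of minors -/
noncomputable def IM (F : Type*) [Field F] (r n N : ℕ) : Ideal (MvPolynomial (Fin N) F) :=
  Ideal.span (Set.range fun g : Fin (r + 1) → Fin n => Dt (r + 1) (yv F N) fun b => (g b : ℕ))

lemma IM_le (hN : N = n + r) : IM F r n N ≤ RingHom.ker (pr F r N) := by
  rw [IM, Ideal.span_le]
  rintro _ ⟨g, rfl⟩
  rw [SetLike.mem_coe, RingHom.mem_ker]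
  simp only
  rw [← minor_zero (xs_rec F r) (fun b => (g b : ℕ))]
  rw [← AlgHom.coe_toRingHom, map_Dt]
  unfold Dt
  congr 1
  ext1 i j
  simp only [of_apply, AlgHom.coe_toRingHom]
  rw [pr_yv]
  have := i.2; have := (g j).2; omega

lemma reduce_monomial (hr : 0 < r) (hN : N = n + r) (f : MvPolynomial (Fin N) F) (hf : pr F r N f = 0) (k : ℤ)
    (hk : DL (Wq N) k f) (m : Fin N →₀ ℕ) (hm : coeff m f ≠ 0) (hmk : wgt (Wq N) m = k) (c : F) :
    ∃ P ∈ IM F r n N, DL (Wq N) (k - 1) (monomial m c - P) := by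
  classical
  rcases greedy r 0 (m.support.image Fin.val) (by simp) with ⟨c, h1, -, h3⟩ | ⟨e, h1, h2⟩
  · exfalso
    refine not_covered hr c h1 (rename Fin.val f) ?_ k ?_ (m.mapDomain Fin.val) ?_ ?_ ?_
    · rw [aeval_rename]; exact hf
    · rw [rename_eq_aeval] 
      exact DL.aeval _ (fun i => DL.X _ _ (by simp [Wq])) hk
    · rwa [coeff_rename_mapDomain _ Fin.val_injective]
    · rw [← hmk, wgt, wgt, Finsupp.weight_apply, Finsupp.weight_apply,
        Finsupp.sum_mapDomain_index (by simp) (by intros; rw [add_smul])]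
      rfl
    · intro x hx
      exact h3 x (Finsupp.mapDomain_support hx)
  · have h2' : ∀ i, ∃ h : e i < N, (⟨e i, h⟩ : Fin N) ∈ m.support := by
      intro i
      obtain ⟨j, hj, hji⟩ := Finset.mem_image.mp (h2 i)
      exact ⟨hji ▸ j.2, by convert hj using 1; exact Fin.ext hji.symm⟩
    choose he hes using h2'
    set E : Fin N →₀ ℕ := ∑ i, Finsupp.single ⟨e i, he i⟩ 1 with hE
    have hEm : E ≤ m := by
      intro j
      rw [hE, Finsupp.finset_sum_apply]
      simp only [Finsupp.single_apply]
      rw [Finset.sum_boole]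
      have hcard : (Finset.univ.filter fun i => (⟨e i, he i⟩ : Fin N) = j).card ≤ 1 := by
        rw [Finset.card_le_one]
        intro a ha b hb
        have ha := (Finset.mem_filter.mp ha).2
        have hb := (Finset.mem_filter.mp hb).2
        have : e a = e b := by rw [Fin.ext_iff] at ha hb; simp at ha hb; omega
        rcases lt_trichotomy a b with h | h | h
        · have := h1 _ _ h; omega
        · exact h
        · have := h1 _ _ h; omega
      by_cases h0 : (Finset.univ.filter fun i => (⟨e i, he i⟩ : Fin N) = j) = ∅
      · rw [h0]; simp
      · obtain ⟨i, hi⟩ := Finset.nonempty_iff_ne_empty.mpr h0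
        have hi := (Finset.mem_filter.mp hi).2
        have h5 := Finsupp.mem_support_iff.mp (hes i)
        rw [hi] at h5
        simp only [Nat.cast_id]
        omega
    have hprod : ∏ i, yv F N (e i) = monomial E 1 := by
      rw [hE, monomial_sum_one]
      refine Finset.prod_congr rfl fun i _ => ?_
      rw [yv, dif_pos (he i)]; rfl
    have hwE : wgt (Wq N) E = ∑ i, (e i : ℤ) ^ 2 := by
      rw [hE]
      simp only [wgt, map_sum]
      refine Finset.sum_congr rfl fun i _ => ?_
      have := wgt_single (Wq N) ⟨e i, he i⟩ 1
      simp only [wgt] at this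
      rw [this]; simp [Wq]
    refine ⟨monomial (m - E) c * Dt (r + 1) (yv F N) (fun i => e i - (i : ℕ)), ?_, ?_⟩
    · refine Ideal.mul_mem_left _ _ (Ideal.subset_span ⟨fun i => ⟨e i - (i : ℕ), ?_⟩, rfl⟩)
      have hle := (b_mono h1).monotone (Fin.le_last i)
      have h6 := he (Fin.last r)
      have h7 := le_of_Sep h1 (Fin.last r)
      simp only [Fin.val_last] at hle h7
      omega
    · have e1 : monomial m c - monomial (m - E) c * Dt (r + 1) (yv F N) (fun i => e i - (i : ℕ)) =
          monomial (m - E) c * (∏ i, yv F N (e i) - Dt (r + 1) (yv F N) (fun i => e i - (i : ℕ))) := by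
        rw [mul_sub, hprod, monomial_mul, tsub_add_cancel_of_le hEm, mul_one]
      rw [e1]
      have h8 : DL (Wq N) (wgt (Wq N) (m - E)) (monomial (m - E) c) := by
        intro m' hm'
        rw [coeff_monomial] at hm'
        split_ifs at hm' with h
        · rw [h]
        · exact absurd rfl hm'
      refine h8.mul' (Dt_lead h1) ?_
      have := wgt_add (Wq N) (m - E) E
      rw [tsub_add_cancel_of_le hEm, hmk, hwE] at this
      linarith

lemma wgt_nonneg {σ : Type*} {w : σ → ℤ} (hw : ∀ i, 0 ≤ w i) (m : σ →₀ ℕ) : 0 ≤ wgt w m := by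
  rw [wgt, Finsupp.weight_apply, Finsupp.sum]
  exact Finset.sum_nonneg fun i _ => by rw [nsmul_eq_mul]; exact mul_nonneg (by positivity) (hw i)

lemma ker_le (hr : 0 < r) (hN : N = n + r) : ∀ (k : ℕ) (f : MvPolynomial (Fin N) F), pr F r N f = 0 →
    DL (Wq N) (k - 1) f → f ∈ IM F r n N := by
  classical
  intro k
  induction k with
  | zero =>
    intro f _ h
    have : f = 0 := by
      by_contra hne
      obtain ⟨m, hm⟩ := ne_zero_iff.mp hne
      have h1 := h m hm
      have h2 := wgt_nonneg (w := Wq N) (fun i => by unfold Wq; positivity) m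
      simp at h1; omega
    rw [this]; exact Ideal.zero_mem _
  | succ k ih =>
    intro f hf hk
    push_cast at hk
    rw [add_sub_cancel_right] at hk
    set T := f.support.filter fun m => wgt (Wq N) m = k with hT
    have : ∀ m, ∃ P ∈ IM F r n N, m ∈ T → DL (Wq N) (k - 1) (monomial m (coeff m f) - P) := by
      intro m
      by_cases hm : m ∈ T
      · obtain ⟨h1, h2⟩ := Finset.mem_filter.mp hm
        obtain ⟨P, h3, h4⟩ := reduce_monomial hr hN f hf k hk m (mem_support_iff.mp h1) h2 (coeff m f)
        exact ⟨P, h3, fun _ => h4⟩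
      · exact ⟨0, Ideal.zero_mem _, fun h => absurd h hm⟩
    choose P hP1 hP2 using this
    have hS : ∑ m ∈ T, P m ∈ IM F r n N := Ideal.sum_mem _ fun m _ => hP1 m
    have h1 : f - ∑ m ∈ T, P m ∈ IM F r n N := by
      apply ih
      · rw [map_sub, hf, (IM_le hN hS : pr F r N _ = 0), sub_zero]
      · have e : f - ∑ m ∈ T, P m = (f - ∑ m ∈ T, monomial m (coeff m f)) +
            ∑ m ∈ T, (monomial m (coeff m f) - P m) := by
          rw [Finset.sum_sub_distrib]; ring
        rw [e]
        refine DL.add ?_ (DL.sum _ _ hP2)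
        intro m hm
        rw [coeff_sub, coeff_sum] at hm
        simp only [coeff_monomial] at hm
        rw [Finset.sum_ite_eq'] at hm
        by_cases hf0 : coeff m f = 0
        · rw [hf0] at hm; simp at hm
        · have h2 := hk m hf0
          by_cases h3 : wgt (Wq N) m = k
          · rw [if_pos (Finset.mem_filter.mpr ⟨mem_support_iff.mpr hf0, h3⟩)] at hm
            simp at hm
          · omega
    have := Ideal.add_mem _ h1 hS
    rwa [sub_add_cancel] at this

theorem ker_eq (hr : 0 < r) (hN : N = n + r) : IM F r n N = RingHom.ker (pr F r N) := by
  refine le_antisymm (IM_le hN) fun f hf => ?_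
  obtain ⟨j, hj⟩ := exists_DL (Wq N) f
  exact ker_le hr hN (j + 1) f hf (by push_cast; rwa [add_sub_cancel_right])

end P1b

end HK

namespace HK

section Cop

variable {F : Type*} [Field F] {τ : Type*} [Fintype τ]

open Classical in
/-- The Cartier-type operator (linear over the coefficients). -/
noncomputable def Cq (q : ℕ) : MvPolynomial τ F →ₗ[F] MvPolynomial τ F :=
  (basisMonomials τ F).constr F fun m =>
    if ∀ i, m i % q = q - 1 then monomial (m.mapRange (fun k => k / q) (Nat.zero_div q)) 1 else 0

open Classical in
lemma Cq_monomial (q : ℕ) (m : τ →₀ ℕ) (a : F) : Cq q (monomial m a) =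
    if ∀ i, m i % q = q - 1 then monomial (m.mapRange (fun k => k / q) (Nat.zero_div q)) a else 0 := by
  have h1 : monomial m a = a • (basisMonomials τ F) m := by
    rw [coe_basisMonomials, smul_monomial, smul_eq_mul, mul_one]
  rw [h1, map_smul, Cq, Module.Basis.constr_basis]
  split_ifs
  · rw [smul_monomial, smul_eq_mul, mul_one]
  · simp

lemma Cq_expand_mul {q : ℕ} (hq : 0 < q) (g f : MvPolynomial τ F) :
    Cq q (expand q g * f) = g * Cq q f := by
  classical
  induction g using MvPolynomial.induction_on' with
  | add a b ha hb => rw [map_add, add_mul, map_add, ha, hb, add_mul]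
  | monomial m a =>
    induction f using MvPolynomial.induction_on' with
    | add c d hc hd => rw [mul_add, map_add, hc, hd, map_add, mul_add]
    | monomial m' b =>
      rw [expand_monomial, monomial_mul, Cq_monomial, Cq_monomial]
      have : (∀ i, (q • m + m') i % q = q - 1) ↔ ∀ i, m' i % q = q - 1 := by
        refine forall_congr' fun i => ?_
        simp
      simp only [this]
      split_ifs
      · rw [monomial_mul]
        refine congrArg (fun s => monomial s _) (Finsupp.ext fun i => ?_)
        simp only [Finsupp.mapRange_apply, Finsupp.add_apply, Finsupp.smul_apply, smul_eq_mul]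
        rw [Nat.mul_add_div hq]
      · simp

lemma Cq_expand_mul' {q : ℕ} (hq : 0 < q) (g f : MvPolynomial τ F) :
    Cq q (f * expand q g) = g * Cq q f := by
  rw [mul_comm, Cq_expand_mul hq]

/-- constant exponent vector -/
noncomputable def cst (τ : Type*) [Fintype τ] (k : ℕ) : τ →₀ ℕ := Finsupp.equivFunOnFinite.symm fun _ => k

@[simp] lemma cst_apply (k : ℕ) (i : τ) : cst τ k i = k := rfl

lemma coeff_Cq {q : ℕ} (hq : 0 < q) (m : τ →₀ ℕ) (f : MvPolynomial τ F) :
    coeff m (Cq q f) = coeff (q • m + cst τ (q - 1)) f := by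
  classical
  induction f using MvPolynomial.induction_on' with
  | add c d hc hd => rw [map_add, coeff_add, hc, hd, coeff_add]
  | monomial m' b =>
    rw [Cq_monomial, coeff_monomial]
    split_ifs with h1 h2 h2
    · rw [coeff_monomial, if_pos]
      ext i
      rw [h2]
      simp only [Finsupp.mapRange_apply, Finsupp.add_apply, Finsupp.smul_apply, smul_eq_mul, cst_apply]
      rw [Nat.mul_add_div hq, Nat.div_eq_of_lt (by omega), add_zero]
    · rw [coeff_monomial, if_neg]
      rintro rfl
      apply h2
      ext i
      simp only [Finsupp.mapRange_apply, Finsupp.add_apply, Finsupp.smul_apply, smul_eq_mul, cst_apply]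
      rw [← h1 i, Nat.div_add_mod]
    · exfalso
      apply h1
      intro i
      rw [h2]
      simp [Nat.mod_eq_of_lt (show q - 1 < q by omega)]
    · simp

/-- small monomials -/
noncomputable def mu (F : Type*) [Field F] {q : ℕ} (b : τ → Fin q) : MvPolynomial τ F :=
  monomial (Finsupp.equivFunOnFinite.symm fun i => (b i : ℕ)) 1

/-- complementary monomials -/
noncomputable def muR (F : Type*) [Field F] {q : ℕ} (b : τ → Fin q) : MvPolynomial τ F :=
  mu F fun i => (b i).rev

lemma Cq_decomp [DecidableEq τ] {q : ℕ} (hq : 0 < q) (f : MvPolynomial τ F) :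
    f = ∑ b : τ → Fin q, expand q (Cq q (muR F b * f)) * mu F b := by
  classical
  induction f using MvPolynomial.induction_on' with
  | add c d hc hd =>
    conv_lhs => rw [hc, hd]
    rw [← Finset.sum_add_distrib]
    refine Finset.sum_congr rfl fun b _ => ?_
    rw [mul_add, map_add, map_add, add_mul]
  | monomial m a =>
    rw [Finset.sum_eq_single (fun i => (⟨m i % q, Nat.mod_lt _ hq⟩ : Fin q))]
    · rw [muR, mu, mu, monomial_mul, Cq_monomial, if_pos, expand_monomial, monomial_mul]
      · simp only [one_mul, mul_one]
        refine congrArg (fun s => monomial s _) (Finsupp.ext fun i => ?_)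
        simp only [Finsupp.mapRange_apply, Finsupp.add_apply, Finsupp.smul_apply, smul_eq_mul,
          Finsupp.equivFunOnFinite_symm_apply_apply, Fin.val_rev]
        have h1 := Nat.mod_lt (m i) hq
        have h2 := Nat.div_add_mod (m i) q
        have h3 : (q - (m i % q + 1) + m i) = q * (m i / q) + (q - 1) := by omega
        rw [h3, Nat.mul_add_div hq, Nat.div_eq_of_lt (show q - 1 < q by omega), add_zero]; omega
      · intro i
        simp only [Finsupp.add_apply,
          Finsupp.equivFunOnFinite_symm_apply_apply, Fin.val_rev]
        have h1 := Nat.mod_lt (m i) hq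
        have h2 := Nat.div_add_mod (m i) q
        have h3 : (q - (m i % q + 1) + m i) = q * (m i / q) + (q - 1) := by omega
        rw [h3, Nat.mul_add_mod, Nat.mod_eq_of_lt (by omega)]
    · intro b _ hb
      rw [muR, mu, monomial_mul, Cq_monomial, if_neg]
      · simp
      · intro h
        apply hb
        funext i
        have := h i
        simp only [Finsupp.add_apply,
          Finsupp.equivFunOnFinite_symm_apply_apply, Fin.val_rev] at this
        apply Fin.ext
        simp only
        have h1 := Nat.mod_lt (m i) hq
        have h2 := Nat.div_add_mod (m i) q
        have h4 := (b i).2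
        have h3 : (q - ((b i : ℕ) + 1) + m i) = q * (m i / q) + (q - 1 + m i % q - b i) := by omega
        rw [h3, Nat.mul_add_mod] at this
        rcases lt_or_ge (q - 1 + m i % q - b i) q with h5 | h5
        · rw [Nat.mod_eq_of_lt h5] at this; omega
        · rw [Nat.mod_eq_sub_mod h5, Nat.mod_eq_of_lt (by omega)] at this; omega
    · simp

/-- element representing a map -/
noncomputable def Gof [DecidableEq τ] {q : ℕ} (α : (τ → Fin q) → MvPolynomial τ F) : MvPolynomial τ F :=
  ∑ b, expand q (α b) * muR F b

lemma Cq_Gof [DecidableEq τ] {q : ℕ} (hq : 0 < q) (α : (τ → Fin q) → MvPolynomial τ F) (a : MvPolynomial τ F) :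
    Cq q (Gof α * a) = ∑ b, α b * Cq q (muR F b * a) := by
  rw [Gof, Finset.sum_mul, map_sum]
  refine Finset.sum_congr rfl fun b _ => ?_
  rw [mul_assoc, Cq_expand_mul hq]

/-- small coefficients through `Cq` -/
lemma coeff_mu {q : ℕ} (hq : 0 < q) (b : τ → Fin q) (f : MvPolynomial τ F) :
    coeff 0 (Cq q (muR F b * f)) = coeff (Finsupp.equivFunOnFinite.symm fun i => (b i : ℕ)) f := by
  rw [coeff_Cq hq, muR, mu, smul_zero, zero_add]
  have : cst τ (q - 1) = (Finsupp.equivFunOnFinite.symm fun i => ((b i).rev : ℕ)) +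
      (Finsupp.equivFunOnFinite.symm fun i => (b i : ℕ)) := by
    ext i
    simp only [Finsupp.add_apply, Finsupp.equivFunOnFinite_symm_apply_apply, Fin.val_rev, cst_apply]
    have := (b i).2
    omega
  rw [this, coeff_monomial_mul, one_mul]

variable {p : ℕ} (e : ℕ)

lemma frob_m (hp : p.Prime) [ExpChar (MvPolynomial τ F) p] (f : MvPolynomial τ F) :
    f ∈ Ideal.map (iterateFrobenius (MvPolynomial τ F) p e) (Ideal.span (Set.range X)) ↔
      ∀ b : τ → Fin (p ^ e), coeff 0 (Cq (p ^ e) (muR F b * f)) = 0 := by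
  classical
  have hq : 0 < p ^ e := pow_pos hp.pos e
  have h1 : Ideal.map (iterateFrobenius (MvPolynomial τ F) p e) (Ideal.span (Set.range X)) =
      Ideal.span ((fun s => monomial s (1 : F)) '' (Set.range fun i : τ => Finsupp.single i (p ^ e))) := by
    rw [Ideal.map_span, ← Set.range_comp, ← Set.range_comp]
    congr 2
    funext i
    simp only [Function.comp_apply, iterateFrobenius_def, X_pow_eq_monomial]
  rw [h1, mem_ideal_span_monomial_image]
  simp only [coeff_mu hq]
  constructor
  · intro h b
    by_contra hne
    obtain ⟨_, ⟨i, rfl⟩, hs⟩ := h _ (mem_support_iff.mpr hne)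
    have := hs i
    simp only [Finsupp.single_eq_same, Finsupp.equivFunOnFinite_symm_apply_apply] at this
    have := (b i).2
    omega
  · intro h m hm
    by_contra hcon
    push Not at hcon
    have h2 : ∀ i, m i < p ^ e := by
      intro i
      by_contra h3
      apply hcon _ ⟨i, rfl⟩
      rw [Finsupp.single_le_iff]; omega
    have := h fun i => ⟨m i, h2 i⟩
    apply mem_support_iff.mp hm
    rw [← this]
    exact congrArg (fun s => coeff s f) (Finsupp.ext fun i => rfl)

/-- elements on which Frobenius is `expand` -/
noncomputable def Fpp (F : Type*) [Field F] (τ : Type*) (p e : ℕ) [ExpChar (MvPolynomial τ F) p] : Subring (MvPolynomial τ F) :=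
  RingHom.eqLocus (iterateFrobenius (MvPolynomial τ F) p e) (expand (p ^ e)).toRingHom

lemma mem_Fpp {τ : Type*} [ExpChar (MvPolynomial τ F) p] {f : MvPolynomial τ F} :
    f ∈ Fpp F τ p e ↔ f ^ (p ^ e) = expand (p ^ e) f := Iff.rfl

lemma X_mem_Fpp {τ : Type*} [ExpChar (MvPolynomial τ F) p] (i : τ) : X i ∈ Fpp F τ p e := by
  rw [mem_Fpp, expand_X]

lemma Dt_mem {B : Type*} [CommRing B] (S : Subring B) (r : ℕ) (x : ℕ → B) (b : Fin r → ℕ)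
    (hx : ∀ i j, x ((i : Fin r) + b j) ∈ S) : Dt r x b ∈ S := by
  rw [Dt, det_apply]
  refine S.sum_mem fun s _ => ?_
  have : ∏ i, (of fun i j : Fin r => x (i + b j)) (s i) i ∈ S := S.prod_mem fun i _ => hx _ _
  rcases Int.units_eq_one_or (Equiv.Perm.sign s) with h | h <;> rw [h]
  · simpa using this
  · simpa using S.neg_mem this

lemma xs_mem_Fpp {r : ℕ} [ExpChar (Rt F r) p] (j : ℕ) :
    xs F r j ∈ Fpp F (Fin r ⊕ Fin r) p e := by
  induction j using Nat.strong_induction_on with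
  | _ j ih =>
    by_cases h : j < r
    · rw [xs_init F r ⟨j, h⟩]; exact X_mem_Fpp e _
    · obtain ⟨k, rfl⟩ := Nat.exists_eq_add_of_le' (not_lt.mp h)
      rw [xs_rec F r k]
      refine Subring.sum_mem _ fun i _ => Subring.mul_mem _ (X_mem_Fpp e _) (ih _ ?_)
      have := i.2; omega

lemma pr_expand {r N : ℕ} [ExpChar (Rt F r) p] (f : MvPolynomial (Fin N) F) :
    pr F r N (expand (p ^ e) f) = expand (p ^ e) (pr F r N f) := by
  have : (pr F r N).comp (expand (p ^ e)) = (expand (p ^ e)).comp (pr F r N) := by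
    apply algHom_ext
    intro i
    simp only [AlgHom.comp_apply, expand_X, pr, map_pow, aeval_X]
    exact xs_mem_Fpp e _
  exact DFunLike.congr_fun this f

lemma yv_mem_Fpp {N : ℕ} [ExpChar (MvPolynomial (Fin N) F) p] (j : ℕ) :
    yv F N j ∈ Fpp F (Fin N) p e := by
  unfold yv
  split_ifs
  · exact X_mem_Fpp e _
  · exact Subring.zero_mem _

lemma frob_IM {r n N : ℕ} [ExpChar (MvPolynomial (Fin N) F) p] :
    Ideal.map (iterateFrobenius (MvPolynomial (Fin N) F) p e) (IM F r n N) =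
      Ideal.map (expand (p ^ e)).toRingHom (IM F r n N) := by
  rw [IM, Ideal.map_span, Ideal.map_span, ← Set.range_comp, ← Set.range_comp]
  congr 2
  funext g
  exact Dt_mem (Fpp F (Fin N) p e) _ _ _ fun i j => yv_mem_Fpp e _

lemma mem_map_expand {N q : ℕ} (hq : 0 < q) (I : Ideal (MvPolynomial (Fin N) F)) (f : MvPolynomial (Fin N) F) :
    f ∈ Ideal.map (expand q).toRingHom I ↔ ∀ a, Cq q (a * f) ∈ I := by
  classical
  constructor
  · intro h a
    have h2 : a * f ∈ Ideal.map (expand q).toRingHom I := Ideal.mul_mem_left _ _ h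
    generalize a * f = g at h2
    rw [Ideal.map] at h2
    induction h2 using Submodule.span_induction with
    | zero => simp
    | add u v _ _ h1 h2 => rw [map_add]; exact Ideal.add_mem _ h1 h2
    | smul c u hu h =>
      clear h
      revert c
      induction hu using Submodule.span_induction with
      | zero => simp
      | add u v _ _ h1 h2 => intro c; rw [smul_add, map_add]; exact Ideal.add_mem _ (h1 c) (h2 c)
      | smul c u hu h => intro d; rw [smul_smul]; exact h _
      | mem u hu =>
        obtain ⟨g, hg, rfl⟩ := hu
        intro c
        rw [smul_eq_mul]
        exact (Cq_expand_mul' hq g c) ▸ Ideal.mul_mem_right _ _ hg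
    | mem u hu =>
      obtain ⟨g, hg, rfl⟩ := hu
      have := Cq_expand_mul' hq g 1
      rw [one_mul] at this
      exact this ▸ Ideal.mul_mem_right _ _ hg
  · intro h
    rw [Cq_decomp hq f]
    exact Ideal.sum_mem _ fun b _ => Ideal.mul_mem_right _ _ (Ideal.mem_map_of_mem _ (h _))

end Cop

end HK

namespace HK

section P6

variable {F : Type*} [Field F] {r : ℕ}

/-- exponent map -/
noncomputable def om2 (m : Fin r ⊕ Fin r →₀ ℕ) (i : ℕ) : Fin (r + 1) ⊕ Fin (r + 1) →₀ ℕ :=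
  Finsupp.equivFunOnFinite.symm (Sum.elim (Fin.cons 0 fun k => m (Sum.inl k))
    (Fin.cons i fun k => m (Sum.inr k)))

lemma om2_inj {m m' : Fin r ⊕ Fin r →₀ ℕ} {i i' : ℕ} (h : om2 m i = om2 m' i') : m = m' ∧ i = i' := by
  have h0 := fun x => DFunLike.congr_fun h x
  have h1 : i = i' := by simpa [om2] using h0 (Sum.inr 0)
  have h2 : ∀ k, m (Sum.inr k) = m' (Sum.inr k) := fun k => by simpa [om2] using h0 (Sum.inr k.succ)
  have h3 : ∀ k, m (Sum.inl k) = m' (Sum.inl k) := fun k => by simpa [om2] using h0 (Sum.inl k.succ)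
  refine ⟨?_, h1⟩
  ext (k | k)
  · exact h3 k
  · exact h2 k

lemma om2_surj (u : Fin (r + 1) ⊕ Fin (r + 1) →₀ ℕ) (hu : u (Sum.inl 0) = 0) : ∃ m i, u = om2 m i := by
  refine ⟨Finsupp.equivFunOnFinite.symm (Sum.elim (fun k => u (Sum.inl k.succ)) (fun k => u (Sum.inr k.succ))),
    u (Sum.inr 0), ?_⟩
  ext (k | k)
  · refine Fin.cases ?_ (fun k => ?_) k
    · simp [om2, hu]
    · simp [om2]
  · refine Fin.cases ?_ (fun k => ?_) k
    · simp [om2]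
    · simp [om2]

lemma rho_om2 (m : Fin r ⊕ Fin r →₀ ℕ) (i : ℕ) (c : F) :
    rho F r (monomial (om2 m i) c) = Polynomial.monomial i (monomial m c) := by
  rw [rho, aeval_monomial, Finsupp.prod_fintype _ _ (fun _ => pow_zero _), Fintype.prod_sum_type,
    Fin.prod_univ_succ, Fin.prod_univ_succ, monomial_eq,
    Finsupp.prod_fintype _ _ (fun _ => pow_zero _), Fintype.prod_sum_type]
  simp only [om2, Sum.elim_inl, Sum.elim_inr, Finsupp.equivFunOnFinite_symm_apply_apply, Fin.cons_zero,
    Fin.cons_succ, pow_zero, one_mul, ← Polynomial.C_mul_X_pow_eq_monomial, map_mul, map_prod, map_pow]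
  rw [show (algebraMap F (Polynomial (Rt F r))) c = Polynomial.C (C c) from rfl]
  ring

lemma coeff_rho (f : Rt F (r + 1)) (m : Fin r ⊕ Fin r →₀ ℕ) (i : ℕ) :
    coeff m ((rho F r f).coeff i) = coeff (om2 m i) f := by
  classical
  induction f using MvPolynomial.induction_on' with
  | add p q hp hq => simp only [map_add, coeff_add, hp, hq, Polynomial.coeff_add]
  | monomial u c =>
    by_cases hu : u (Sum.inl 0) = 0
    · obtain ⟨m', i', rfl⟩ := om2_surj u hu
      rw [rho_om2, Polynomial.coeff_monomial, coeff_monomial]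
      by_cases h : m' = m ∧ i' = i
      · rw [h.1, h.2]; simp
      · rw [if_neg (fun h' => h (om2_inj h'))]
        by_cases h2 : i' = i
        · rw [if_pos h2, coeff_monomial, if_neg]
          intro h3; exact h ⟨h3, h2⟩
        · rw [if_neg h2, coeff_zero]
    · have : rho F r (monomial u c) = 0 := by
        rw [rho, aeval_monomial, Finsupp.prod_fintype _ _ (fun _ => pow_zero _), Fintype.prod_sum_type,
          Fin.prod_univ_succ]
        simp [hu]
      rw [this, coeff_monomial, if_neg]
      · simp
      · rintro rfl; exact hu (by simp [om2])

lemma rho_D0 (s : ℕ) : ∃ ℓ : Rt F (s + 1), rho F (s + 1) (Dm (s + 2) (xs F (s + 2)) 0) =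
    (Polynomial.C ((-1) ^ (s + 1) * ℓ) - Polynomial.C ((-1) ^ (s + 1) * av F (s + 1) 0) * Polynomial.X) *
      Polynomial.C (Dm (s + 1) (xs F (s + 1)) 0) := by
  set y : ℕ → Polynomial (Rt F (s + 1)) := fun j => rho F (s + 1) (xs F (s + 2) j) with hy
  have y0 : y 0 = Polynomial.X := rho_x0 F (s + 1)
  have ys : ∀ j, y (j + 1) = Polynomial.C (xs F (s + 1) j) := rho_xsucc F (s + 1)
  have e0 : rho F (s + 1) (Dm (s + 2) (xs F (s + 2)) 0) = (of fun i j : Fin (s + 2) => y (i + j)).det := by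
    rw [Dm, ← AlgHom.coe_toRingHom, map_Dt]
    rfl
  set M := (of fun i j : Fin (s + 2) => y (i + j)) with hM
  set v : Fin (s + 2) → Polynomial (Rt F (s + 1)) :=
    Fin.snoc (fun i => - Polynomial.C (av F (s + 1) i)) 1 with hv
  have h := cramer_trick Mᵀ v (Fin.last (s + 1))
  set ℓ : Rt F (s + 1) := xs F (s + 1) s - ∑ i : Fin s, av F (s + 1) i.succ * xs F (s + 1) i with hl
  have h2 : Mᵀ *ᵥ v = fun j => if j = 0 then Polynomial.C ℓ - Polynomial.C (av F (s + 1) 0) * Polynomial.X else 0 := by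
    ext1 j
    simp only [mulVec, dotProduct]
    rw [Fin.sum_univ_castSucc]
    simp only [hM, transpose_apply, of_apply, hv,
      Fin.snoc_castSucc, Fin.snoc_last, Fin.val_castSucc, Fin.val_last, mul_one]
    refine Fin.cases ?_ (fun j => ?_) j
    · rw [if_pos rfl, Fin.sum_univ_succ]
      simp only [Fin.val_zero, Fin.val_succ, add_zero, y0, ys, hl, map_sub, map_sum, map_mul]
      have : ∀ x : Fin s, Polynomial.C (xs F (s + 1) ↑x) * -Polynomial.C (av F (s + 1) x.succ) =
          - (Polynomial.C (av F (s + 1) x.succ) * Polynomial.C (xs F (s + 1) ↑x)) := fun x => by ring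
      rw [Finset.sum_congr rfl (fun x _ => this x), Finset.sum_neg_distrib]
      ring
    · rw [if_neg (Fin.succ_ne_zero j)]
      simp only [Fin.val_succ, ← add_assoc, ys]
      have := xs_rec F (s + 1) j
      rw [add_comm (s + 1) (j : ℕ), this, map_sum, ← Finset.sum_add_distrib]
      refine Finset.sum_eq_zero fun i _ => ?_
      rw [map_mul, add_comm (i : ℕ)]; ring
  rw [h2, det_transpose] at h
  refine ⟨ℓ, ?_⟩
  rw [e0]
  have h3 : v (Fin.last (s + 1)) = 1 := by simp [hv]
  rw [h3, mul_one] at h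
  rw [← h, det_succ_column _ (Fin.last (s + 1)), Finset.sum_eq_single 0]
  · have h4 : ((Mᵀ.updateCol (Fin.last (s + 1)) fun j => if j = 0 then Polynomial.C ℓ -
        Polynomial.C (av F (s + 1) 0) * Polynomial.X else 0).submatrix (Fin.succAbove 0)
        (Fin.succAbove (Fin.last (s + 1)))).det = Polynomial.C (Dm (s + 1) (xs F (s + 1)) 0) := by
      rw [Dm, Dt, RingHom.map_det, ← det_transpose]
      congr 1
      ext1 i j
      simp only [transpose_apply, submatrix_apply, Fin.succAbove_last, Fin.succAbove_zero,
        RingHom.mapMatrix_apply, map_apply, of_apply, hM]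
      rw [updateCol_ne (Fin.castSucc_lt_last i).ne]
      simp only [transpose_apply, of_apply, Fin.val_castSucc, Fin.val_succ, ← add_assoc, ys, add_zero]
    rw [h4]
    simp only [updateCol_self, if_true, Fin.val_zero, Fin.val_last, zero_add, map_mul, map_pow, map_neg,
      map_one]
    ring
  · intro i _ hi
    simp [hi]
  · simp

lemma cst_eq (k : ℕ) : cst (Fin (r + 1) ⊕ Fin (r + 1)) k =
    Finsupp.single (Sum.inl 0) k + om2 (cst (Fin r ⊕ Fin r) k) k := by
  ext (i | i)
  · refine Fin.cases ?_ (fun i => ?_) i <;> simp [om2]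
  · refine Fin.cases ?_ (fun i => ?_) i <;> simp [om2]

theorem P6 (k : ℕ) : ∀ r : ℕ, coeff (cst (Fin (r + 1) ⊕ Fin (r + 1)) k)
    (av F (r + 1) 0 ^ k * Dm (r + 1) (xs F (r + 1)) 0 ^ k) ≠ 0 := by
  intro r
  have key : coeff (cst (Fin (r + 1) ⊕ Fin (r + 1)) k)
    (av F (r + 1) 0 ^ k * Dm (r + 1) (xs F (r + 1)) 0 ^ k) =
      coeff (cst (Fin r ⊕ Fin r) k) ((rho F r (Dm (r + 1) (xs F (r + 1)) 0) ^ k).coeff k) := by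
    rw [← map_pow, coeff_rho, cst_eq, av, X_pow_eq_monomial, coeff_monomial_mul, one_mul]
  rw [key]
  clear key
  induction r with
  | zero =>
    have : rho F 0 (Dm (0 + 1) (xs F (0 + 1)) 0) = Polynomial.X := by
      rw [← rho_x0]; congr 1
      simp [Dm, Dt]
    rw [this]
    have e : cst (Fin 0 ⊕ Fin 0) k = 0 := by ext i; exact isEmptyElim i
    simp [e]
  | succ s ih =>
    obtain ⟨ℓ, h⟩ := rho_D0 (F := F) s
    rw [h, sub_mul, ← Polynomial.C_mul]
    set P := Polynomial.C ((-1)^(s+1) * ℓ * Dm (s+1) (xs F (s+1)) 0) - Polynomial.C ((-1)^(s+1) * av F (s+1) 0) * Polynomial.X * Polynomial.C (Dm (s+1) (xs F (s+1)) 0) with hP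
    have h1 : P.natDegree ≤ 1 := by
      rw [hP]
      compute_degree
    have h2 := Polynomial.coeff_pow_of_natDegree_le (m := k) h1
    rw [mul_one] at h2
    rw [h2, hP]
    have h3 : (Polynomial.C ((-1) ^ (s + 1) * ℓ * Dm (s + 1) (xs F (s + 1)) 0) -
        Polynomial.C ((-1) ^ (s + 1) * av F (s + 1) 0) * Polynomial.X *
          Polynomial.C (Dm (s + 1) (xs F (s + 1)) 0)).coeff 1 =
        (-1) * (-1) ^ (s + 1) * (av F (s + 1) 0 * Dm (s + 1) (xs F (s + 1)) 0) := by
      rw [Polynomial.coeff_sub, Polynomial.coeff_C, if_neg (by norm_num), Polynomial.coeff_mul_C,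
        Polynomial.coeff_C_mul, Polynomial.coeff_X_one]
      ring
    rw [h3, mul_pow, ← pow_succ']
    have h4 : (((-1 : Rt F (s + 1)) ^ (s + 1 + 1)) ^ k) = C (((-1 : F) ^ (s + 1 + 1)) ^ k) := by simp
    rw [h4, coeff_C_mul, mul_pow, cst_eq, av, X_pow_eq_monomial, coeff_monomial_mul, one_mul]
    refine mul_ne_zero (by simp) ?_
    rw [← coeff_rho, map_pow]
    exact ih

end P6

end HK

namespace HK

section P5

variable {F : Type*} [Field F] {r : ℕ}

lemma mu_eq {τ : Type*} [Fintype τ] {q : ℕ} (b : τ → Fin q) : mu F b = ∏ i, X i ^ (b i : ℕ) := by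
  rw [mu, monomial_eq, Finsupp.prod_fintype _ _ (fun _ => pow_zero _), C_1, one_mul]
  rfl

open Classical in
lemma Cq_mu {τ : Type*} [Fintype τ] {q : ℕ} (hq : 0 < q) (b : τ → Fin q) :
    Cq q (mu F b) = if ∀ i, (b i : ℕ) = q - 1 then 1 else 0 := by
  rw [mu, Cq_monomial]
  have : (∀ i, (Finsupp.equivFunOnFinite.symm fun i => ((b i : Fin q) : ℕ)) i % q = q - 1) ↔
      ∀ i, (b i : ℕ) = q - 1 := by
    refine forall_congr' fun i => ?_
    rw [Finsupp.equivFunOnFinite_symm_apply_apply, Nat.mod_eq_of_lt (b i).2]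
  simp only [this]
  split_ifs with h
  · rw [← C_1, ← monomial_zero']
    refine congrArg (fun s => monomial s _) (Finsupp.ext fun i => ?_)
    simp only [Finsupp.mapRange_apply, Finsupp.equivFunOnFinite_symm_apply_apply]
    exact Nat.div_eq_of_lt (b i).2
  · rfl

/-- shift endomorphism -/
noncomputable def th (F : Type*) [Field F] (r m : ℕ) : Rt F r →ₐ[F] Rt F r :=
  aeval (Sum.elim (av F r) (fun i => xs F r (m + i)))

lemma th_av (m : ℕ) (i : Fin r) : th F r m (av F r i) = av F r i := by
  simp only [th, av, aeval_X, Sum.elim_inl]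

lemma th_inr (m : ℕ) (i : Fin r) : th F r m (X (Sum.inr i)) = xs F r (m + i) := by
  simp only [th, aeval_X, Sum.elim_inr]

lemma th_xs (m j : ℕ) : th F r m (xs F r j) = xs F r (m + j) := by
  refine map_xs (th F r m : Rt F r →+* Rt F r) (y := fun j => xs F r (m + j)) ?_ ?_ j
  · intro j
    have := xs_rec F r (m + j)
    show xs F r (m + (j + r)) = ∑ i, (th F r m : Rt F r →+* Rt F r) (av F r i) * xs F r (m + (j + ↑i))
    rw [← add_assoc, this]
    refine Finset.sum_congr rfl fun i _ => ?_
    rw [RingHom.coe_coe, th_av, add_assoc]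
  · intro i
    exact th_inr m i

lemma th_succ (m : ℕ) (f : Rt F r) : th F r (m + 1) f = th F r m (th F r 1 f) := by
  have : th F r (m + 1) = (th F r m).comp (th F r 1) := by
    apply algHom_ext
    rintro (i | i)
    · have := @th_av F _ r
      simp only [av] at this
      rw [AlgHom.comp_apply, this, this, this]
    · rw [AlgHom.comp_apply, th_inr, th_inr, th_xs, add_assoc]
  rw [this]; rfl

lemma th_zero (f : Rt F r) : th F r 0 f = f := by
  have : th F r 0 = AlgHom.id F _ := by
    apply algHom_ext
    rintro (i | i)
    · exact th_av 0 i
    · rw [th_inr, zero_add, xs_init]; rfl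
  rw [this]; rfl

lemma th_expand {p : ℕ} (e m : ℕ) [ExpChar (Rt F r) p] (f : Rt F r) :
    th F r m (expand (p ^ e) f) = expand (p ^ e) (th F r m f) := by
  have : (th F r m).comp (expand (p ^ e)) = (expand (p ^ e)).comp (th F r m) := by
    apply algHom_ext
    rintro (i | i)
    · simp only [AlgHom.comp_apply, expand_X, th, map_pow, aeval_X, Sum.elim_inl]
      exact X_mem_Fpp e _
    · simp only [AlgHom.comp_apply, expand_X, th, map_pow, aeval_X, Sum.elim_inr]
      exact xs_mem_Fpp e _
  exact DFunLike.congr_fun this f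

/-- degree in the first sequence variable -/
def wx0 (r : ℕ) : Fin (r + 1) ⊕ Fin (r + 1) → ℤ := Sum.elim (fun _ => 0) (fun i => if i = 0 then 1 else 0)

lemma Cq_DL0 {q : ℕ} (hq : 0 < q) {g : Rt F (r + 1)} {j : ℤ} (hg : DL (wx0 r) j g) (hj : j < (q : ℤ) - 1) :
    Cq q g = 0 := by
  ext m
  rw [coeff_Cq hq, coeff_zero]
  by_contra h
  have h1 := hg _ h
  rw [wgt_eq_sum, Fintype.sum_sum_type] at h1
  simp [wx0] at h1
  have : (0 : ℤ) ≤ (q : ℤ) * (m (Sum.inr 0) : ℤ) := by positivity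
  have h3 : ((q - 1 : ℕ) : ℤ) = q - 1 := by omega
  rw [h3] at h1
  linarith

lemma DL_pow_sub {y a : Rt F (r + 1)} (hy : DL (wx0 r) 0 y) (ha : DL (wx0 r) 1 a) (c : ℕ) :
    DL (wx0 r) ((c : ℤ) - 1) ((a + y) ^ c - a ^ c) := by
  induction c with
  | zero => simpa using DL.zero (wx0 r) _
  | succ c ih =>
    have : (a + y) ^ (c + 1) - a ^ (c + 1) = (a + y) * ((a + y) ^ c - a ^ c) + y * a ^ c := by ring
    rw [this]
    refine DL.add (DL.mul' (DL.add ha (hy.mono zero_le_one)) ih (by push_cast; linarith)) ?_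
    exact hy.mul' (ha.pow c) (by push_cast; linarith)

lemma th1_mu {q : ℕ} (hq : 0 < q) (b : Fin (r + 1) ⊕ Fin (r + 1) → Fin q) {a0 : Rt F (r + 1)}
    (h0 : a0 = av F (r + 1) 0) (hq0 : a0 ^ q = expand q a0) :
    Cq q (a0 * th F (r + 1) 1 (mu F b)) = a0 * Cq q (mu F b) := by
  classical
  set W : Rt F (r + 1) := (∏ i, X (Sum.inl i) ^ (b (Sum.inl i) : ℕ)) *
    (∏ i : Fin r, X (Sum.inr i.succ) ^ (b (Sum.inr i.castSucc) : ℕ)) with hW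
  set y : Rt F (r + 1) := ∑ i : Fin r, X (Sum.inl i.succ) * X (Sum.inr i.succ) with hy
  set c : ℕ := (b (Sum.inr (Fin.last r)) : ℕ) with hc
  have hcq : c < q := (b _).2
  have e1 : th F (r + 1) 1 (mu F b) = W * (a0 * X (Sum.inr 0) + y) ^ c := by
    rw [mu_eq, map_prod, Fintype.prod_sum_type, Fin.prod_univ_castSucc (n := r) (f := fun i => th F (r + 1) 1 (X (Sum.inr i) ^ (b (Sum.inr i) : ℕ)))]
    simp only [map_pow, th_inr]
    have e2 : xs F (r + 1) (1 + (Fin.last r : ℕ)) = a0 * X (Sum.inr 0) + y := by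
      have := xs_rec F (r + 1) 0
      have e3 : 1 + (Fin.last r : ℕ) = 0 + (r + 1) := by simp [add_comm]
      rw [e3, this, Fin.sum_univ_succ, h0]
      simp only [zero_add, xs_init]
      rfl
    rw [e2, hW, ← hc, mul_assoc]
    congr 1
    · refine Finset.prod_congr rfl fun i _ => ?_
      have := @th_av F _ (r + 1) 1 i
      simp only [av] at this
      rw [this]
    · congr 1
      refine Finset.prod_congr rfl fun i _ => ?_
      have : 1 + (i.castSucc : ℕ) = (i.succ : ℕ) := by simp [add_comm]
      rw [this, xs_init]
  have dW : DL (wx0 r) 0 W := by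
    have h1 : DL (wx0 r) (∑ i : Fin (r + 1), 0) (∏ i, (X (Sum.inl i) : Rt F (r + 1)) ^ (b (Sum.inl i) : ℕ)) :=
      DL.prod _ _ _ fun i _ => by
        simpa using (DL.X (F := F) (wx0 r) (j := 0) (Sum.inl i) (by simp [wx0])).pow (b (Sum.inl i) : ℕ)
    have h2 : DL (wx0 r) (∑ i : Fin r, 0) (∏ i : Fin r, (X (Sum.inr i.succ) : Rt F (r + 1)) ^ (b (Sum.inr i.castSucc) : ℕ)) :=
      DL.prod _ _ _ fun i _ => by
        simpa using (DL.X (F := F) (wx0 r) (j := 0) (Sum.inr i.succ) (by simp [wx0])).pow (b (Sum.inr i.castSucc) : ℕ)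
    simpa using h1.mul h2
  have da : DL (wx0 r) 0 a0 := h0 ▸ DL.X _ _ (by simp [wx0])
  have dy : DL (wx0 r) 0 y := DL.sum _ _ fun i _ => by
    simpa using (DL.X (F := F) (wx0 r) (j := 0) (Sum.inl i.succ) (by simp [wx0])).mul
      (DL.X (F := F) (wx0 r) (j := 0) (Sum.inr i.succ) (by simp [wx0]))
  have dx : DL (wx0 r) 1 (a0 * X (Sum.inr 0)) := by
    simpa using da.mul (DL.X (F := F) (wx0 r) (j := 1) (Sum.inr 0) (by simp [wx0]))
  have dd := DL_pow_sub dy dx c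
  have e3 : Cq q (a0 * th F (r + 1) 1 (mu F b)) = Cq q (a0 * W * (a0 * X (Sum.inr 0)) ^ c) := by
    rw [e1, ← sub_eq_zero, ← map_sub]
    have : a0 * (W * (a0 * X (Sum.inr 0) + y) ^ c) - a0 * W * (a0 * X (Sum.inr 0)) ^ c =
      a0 * W * ((a0 * X (Sum.inr 0) + y) ^ c - (a0 * X (Sum.inr 0)) ^ c) := by ring
    rw [this]
    exact Cq_DL0 hq ((da.mul dW).mul dd) (by omega)
  rw [e3]
  by_cases h : c = q - 1
  · set b' : Fin (r + 1) ⊕ Fin (r + 1) → Fin q := Sum.elim (fun i => b (Sum.inl i))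
      (Fin.cons (b (Sum.inr (Fin.last r))) fun i => b (Sum.inr i.castSucc)) with hb'
    have e4 : mu F b' = W * X (Sum.inr 0) ^ c := by
      rw [mu_eq, Fintype.prod_sum_type, Fin.prod_univ_succ (n := r) (f := fun i => (X (Sum.inr i) : Rt F (r + 1)) ^ (b' (Sum.inr i) : ℕ))]
      simp only [hb', Sum.elim_inl, Sum.elim_inr, Fin.cons_zero, Fin.cons_succ, hW, ← hc]
      ring
    have e5 : a0 * W * (a0 * X (Sum.inr 0)) ^ c = expand q a0 * mu F b' := by
      rw [e4, ← hq0, h]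
      have : a0 ^ q = a0 * a0 ^ (q - 1) := by rw [← pow_succ']; congr 1; omega
      rw [this]; ring
    rw [e5, Cq_expand_mul hq, Cq_mu hq, Cq_mu hq]
    congr 2
    refine propext ⟨?_, ?_⟩
    · rintro h1 (i | i)
      · exact h1 (Sum.inl i)
      · refine Fin.lastCases ?_ (fun i => ?_) i
        · exact h
        · simpa [hb'] using h1 (Sum.inr i.succ)
    · rintro h1 (i | i)
      · exact h1 (Sum.inl i)
      · refine Fin.cases ?_ (fun i => ?_) i
        · simpa [hb'] using h1 (Sum.inr (Fin.last r))
        · simpa [hb'] using h1 (Sum.inr i.castSucc)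
  · rw [Cq_mu hq, if_neg (fun h1 => h (h1 _)), mul_zero]
    exact Cq_DL0 hq ((da.mul dW).mul (dx.pow c)) (by omega)

lemma Cq_th1 {p : ℕ} (e : ℕ) (hp : p.Prime) [ExpChar (Rt F (r + 1)) p] (f : Rt F (r + 1)) :
    Cq (p ^ e) (av F (r + 1) 0 * th F (r + 1) 1 f) = av F (r + 1) 0 * th F (r + 1) 1 (Cq (p ^ e) f) := by
  classical
  have hq : 0 < p ^ e := pow_pos hp.pos e
  conv_lhs => rw [Cq_decomp hq f]
  conv_rhs => rw [Cq_decomp hq f]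
  simp only [map_sum, Finset.mul_sum]
  refine Finset.sum_congr rfl fun b _ => ?_
  rw [map_mul (th F (r + 1) 1), th_expand, Cq_expand_mul hq, map_mul (th F (r + 1) 1)]
  have h1 := th1_mu (F := F) hq b rfl (X_mem_Fpp e _ : _ ∈ Fpp F _ p e)
  rw [mul_left_comm, Cq_expand_mul hq, h1, Cq_mu hq]
  split_ifs <;> simp [mul_comm]

lemma Cq_th {p : ℕ} (e : ℕ) (hp : p.Prime) [ExpChar (Rt F (r + 1)) p] (m : ℕ) (f : Rt F (r + 1)) :
    Cq (p ^ e) (av F (r + 1) 0 ^ m * th F (r + 1) m f) =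
      av F (r + 1) 0 ^ m * th F (r + 1) m (Cq (p ^ e) f) := by
  have key : ∀ m (f : Rt F (r + 1)), th F (r + 1) (m + 1) f = th F (r + 1) 1 (th F (r + 1) m f) := by
    intro m
    induction m with
    | zero => intro f; rw [th_zero]
    | succ m ih => intro f; rw [th_succ, ih, ← th_succ]
  induction m with
  | zero => simp [th_zero]
  | succ m ih =>
    have e1 : av F (r + 1) 0 ^ (m + 1) * th F (r + 1) (m + 1) f =
        av F (r + 1) 0 * th F (r + 1) 1 (av F (r + 1) 0 ^ m * th F (r + 1) m f) := by
      rw [map_mul, map_pow, th_av, key]; ring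
    rw [e1, Cq_th1 e hp, ih, map_mul, map_pow, th_av, ← key]; ring

end P5

end HK

namespace HK

section P5b

variable {F : Type*} [Field F] {r : ℕ}

/-- degree in the recurrence coefficients -/
def wa (r : ℕ) : Fin r ⊕ Fin r → ℤ := Sum.elim (fun _ => 1) (fun _ => 0)

/-- a certified bound on the degree -/
def QQ (n : ℕ) (j : ℤ) (z : Rt F (r + 1)) : Prop :=
  ∃ (K : ℕ) (f : Rt F (r + 1)), av F (r + 1) 0 ^ K * z = th F (r + 1) n f ∧ DL (wa (r + 1)) (K + j) f

lemma DL_wa_av (i : Fin r) : DL (wa r) 1 (av F r i) := DL.X _ _ (by simp [wa])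

lemma DL_wa_apow (k : ℕ) : DL (wa (r + 1)) k (av F (r + 1) 0 ^ k) := by
  simpa using (DL_wa_av (F := F) (0 : Fin (r + 1))).pow k

lemma QQ.mul {n : ℕ} {i j : ℤ} {y z : Rt F (r + 1)} (hy : QQ n i y) (hz : QQ n j z) : QQ n (i + j) (y * z) := by
  obtain ⟨K, f, h1, h2⟩ := hy
  obtain ⟨L, g, h3, h4⟩ := hz
  refine ⟨K + L, f * g, ?_, h2.mul' h4 (by push_cast; linarith)⟩
  rw [map_mul, ← h1, ← h3]; ring

lemma QQ.of_th {n : ℕ} {j : ℤ} {f : Rt F (r + 1)} (hf : DL (wa (r + 1)) j f) : QQ n j (th F (r + 1) n f) :=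
  ⟨0, f, by simp, by simpa using hf⟩

lemma QQ.mono {n : ℕ} {i j : ℤ} {z : Rt F (r + 1)} (hz : QQ n i z) (h : i ≤ j) : QQ n j z := by
  obtain ⟨K, f, h1, h2⟩ := hz
  exact ⟨K, f, h1, h2.mono (by linarith)⟩

lemma QQ.cancel {n : ℕ} {j : ℤ} {z : Rt F (r + 1)} (k : ℕ) (hz : QQ n (j + k) (av F (r + 1) 0 ^ k * z)) :
    QQ n j z := by
  obtain ⟨K, f, h1, h2⟩ := hz
  refine ⟨K + k, f, ?_, h2.mono (by push_cast; linarith)⟩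
  rw [← h1]; ring

lemma QQ.raise {n : ℕ} {j : ℤ} {z : Rt F (r + 1)} (hz : QQ n j z) : ∃ K₀ : ℕ, ∀ K : ℕ, K₀ ≤ K → ∃ f : Rt F (r + 1),
    av F (r + 1) 0 ^ K * z = th F (r + 1) n f ∧ DL (wa (r + 1)) (K + j) f := by
  obtain ⟨K, f, h1, h2⟩ := hz
  refine ⟨K, fun L hL => ?_⟩
  obtain ⟨k, rfl⟩ := Nat.exists_eq_add_of_le hL
  refine ⟨av F (r + 1) 0 ^ k * f, ?_, (DL_wa_apow k).mul' h2 (by push_cast; linarith)⟩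
  rw [map_mul, map_pow, th_av, ← h1]; ring

lemma QQ.add {n : ℕ} {j : ℤ} {y z : Rt F (r + 1)} (hy : QQ n j y) (hz : QQ n j z) : QQ n j (y + z) := by
  obtain ⟨K, h1⟩ := hy.raise
  obtain ⟨L, h2⟩ := hz.raise
  obtain ⟨f, h3, h4⟩ := h1 (K + L) (by omega)
  obtain ⟨g, h5, h6⟩ := h2 (K + L) (by omega)
  exact ⟨K + L, f + g, by rw [mul_add, map_add, h3, h5], h4.add h6⟩

lemma QQ.alg (n : ℕ) (c : F) : QQ n 0 (algebraMap F (Rt F (r + 1)) c) := by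
  have := QQ.of_th (n := n) (DL.C (wa (r + 1)) le_rfl c)
  rwa [show (C c : Rt F (r + 1)) = algebraMap F _ c from rfl, AlgHom.commutes] at this

lemma QQ.one (n : ℕ) : QQ n 0 (1 : Rt F (r + 1)) := by simpa using QQ.alg (r := r) n (1 : F)

lemma QQ.av (n : ℕ) (i : Fin (r + 1)) : QQ n 1 (av F (r + 1) i) := by
  have := QQ.of_th (n := n) (DL_wa_av (F := F) i)
  rwa [th_av] at this

lemma QQ.pow {n : ℕ} {j : ℤ} {z : Rt F (r + 1)} (hz : QQ n j z) (k : ℕ) : QQ n (k * j) (z ^ k) := by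
  induction k with
  | zero => simpa using QQ.one n
  | succ k ih => rw [pow_succ]; have := ih.mul hz; convert this using 1; push_cast; ring

lemma QQ.sum {ι : Type*} {n : ℕ} {j : ℤ} (s : Finset ι) (f : ι → Rt F (r + 1)) (hf : ∀ i ∈ s, QQ n j (f i)) :
    QQ n j (∑ i ∈ s, f i) := by
  classical
  induction s using Finset.induction_on with
  | empty => 
    refine ⟨0, 0, by simp, DL.zero _ _⟩
  | insert a s ha ih =>
    rw [Finset.sum_insert ha]
    exact (hf a (by simp)).add (ih fun i hi => hf i (by simp [hi]))

lemma QQ.neg {n : ℕ} {j : ℤ} {z : Rt F (r + 1)} (hz : QQ n j z) : QQ n j (-z) := by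
  have := (QQ.alg (r := r) n (-1 : F)).mul hz
  simpa using this

lemma QQ.xs (n : ℕ) : ∀ m j, m + j = n + r → QQ n 0 (xs F (r + 1) j) := by
  intro m
  induction m using Nat.strong_induction_on with
  | _ m ih =>
    intro j hj
    by_cases h : m ≤ r
    · have e : j = n + (⟨j - n, by omega⟩ : Fin (r + 1)) := by simp; omega
      rw [e, ← th_inr]
      exact QQ.of_th (DL.X _ _ (by simp [wa]))
    · refine QQ.cancel 1 ?_
      have h1 := xs_rec F (r + 1) j
      rw [Fin.sum_univ_succ] at h1
      have h2 : HK.av F (r + 1) 0 ^ 1 * HK.xs F (r + 1) j = HK.xs F (r + 1) (j + (r + 1)) +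
          - ∑ i : Fin r, HK.av F (r + 1) i.succ * HK.xs F (r + 1) (j + i.succ) := by
        rw [h1]; simp
      rw [h2]
      refine QQ.add ?_ (QQ.neg (QQ.sum _ _ fun i _ => ?_))
      · exact (ih (m - (r + 1)) (by omega) (j + (r + 1)) (by omega)).mono (by simp)
      · have hi := i.2
        have := (QQ.av (F := F) n i.succ).mul (ih (m - (i + 1)) (by omega) (j + i.succ) (by simp; omega))
        convert this using 1
        simp

lemma QQ.prod {ι : Type*} {n : ℕ} (s : Finset ι) (f : ι → Rt F (r + 1)) (hf : ∀ i ∈ s, QQ n 0 (f i)) :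
    QQ n 0 (∏ i ∈ s, f i) := by
  classical
  induction s using Finset.induction_on with
  | empty => exact QQ.one n
  | insert a s ha ih =>
    rw [Finset.prod_insert ha]
    have := (hf a (by simp)).mul (ih fun i hi => hf i (by simp [hi]))
    simpa using this

lemma QQ.D0 (h : ℕ) : QQ (h + (r + 1)) (-(h + 1)) (Dm (r + 1) (HK.xs F (r + 1)) 0) := by
  refine QQ.cancel (h + 1) ?_
  rw [mul_comm, a0_Dm (xs_rec F (r + 1))]
  have h1 : QQ (h + (r + 1)) 0 (Dm (r + 1) (HK.xs F (r + 1)) (h + 1)) := by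
    rw [Dm, Dt, det_apply]
    refine QQ.sum _ _ fun s _ => ?_
    have : QQ (h + (r + 1)) 0 (∏ i, (of fun i j : Fin (r + 1) => HK.xs F (r + 1) (i + (j + (h + 1)))) (s i) i) :=
      QQ.prod _ _ fun i _ => by
        have := (s i).2
        have := i.2
        exact QQ.xs _ (h + (r + 1) + r - (s i + (i + (h + 1)))) _ (by omega)
    rcases Int.units_eq_one_or (Equiv.Perm.sign s) with h | h <;> rw [h]
    · simpa using this
    · simpa using this.neg
  have h2 := (((QQ.one (F := F) (r := r) (h + (r + 1))).neg.pow r).pow (h + 1)).mul h1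
  convert h2 using 1
  push_cast; ring

lemma QQ.adjoin (h : ℕ) {y : Rt F (r + 1)}
    (hy : y ∈ Algebra.adjoin F (HK.xs F (r + 1) '' {j | j < 2 * (r + 1) + h})) : QQ (h + (r + 1)) 0 y := by
  induction hy using Algebra.adjoin_induction with
  | mem x hx =>
    obtain ⟨j, hj, rfl⟩ := hx
    simp only [Set.mem_ofPred_eq] at hj
    exact QQ.xs _ (h + (r + 1) + r - j) _ (by omega)
  | algebraMap c => exact QQ.alg _ c
  | add x y _ _ h1 h2 => exact h1.add h2
  | mul x y _ _ h1 h2 => simpa using h1.mul h2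

lemma DL_th {n N : ℕ} (hN : n + r < N) {d : ℤ} {g : Rt F (r + 1)} (hg : DL (wa (r + 1)) d g) :
    DL (wt (r + 1) N) d (Ph F (r + 1) (th F (r + 1) n g)) := by
  have : Ph F (r + 1) (th F (r + 1) n g) =
      aeval (fun i => Ph F (r + 1) (th F (r + 1) n (X i))) g := by
    have : (Ph F (r + 1)).comp (th F (r + 1) n) = aeval (fun i => Ph F (r + 1) (th F (r + 1) n (X i))) := by
      apply algHom_ext
      intro i; simp only [AlgHom.comp_apply, aeval_X]
    rw [← this]; rfl
  rw [this]
  refine DL.aeval _ (fun i => ?_) hg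
  rcases i with i | i
  · have := @th_av F _ (r + 1) n i
    have h2 := wt_av (F := F) (r + 1) N i
    simp only [HK.av] at this h2
    rw [this]; simpa [wa] using h2
  · rw [th_inr]
    have := i.2
    simpa [wa] using wt_xs (F := F) (r + 1) N (n + i) (by omega)

theorem P5 {p : ℕ} (e : ℕ) (hp : p.Prime) [ExpChar (Rt F (r + 1)) p] (h : ℕ) {j J : ℤ} {z : Rt F (r + 1)}
    (hz : QQ (h + (r + 1)) j z) (hJ : j + h * ((p ^ e : ℕ) - 1) < (p ^ e : ℕ) * (J + 1)) :
    DL (wt (r + 1) (2 * (r + 1) + h)) J (Ph F (r + 1) (Cq (p ^ e) z)) := by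
  have hq : 0 < p ^ e := pow_pos hp.pos e
  have hX : (av F (r + 1) 0) ^ (p ^ e) = expand (p ^ e) (av F (r + 1) 0) := (X_mem_Fpp e _ : _ ∈ Fpp F _ p e)
  set q := p ^ e with hqd
  set n := h + (r + 1) with hn
  obtain ⟨K, h1⟩ := hz.raise
  set M := K + n with hM
  have hle : M ≤ q * M := Nat.le_mul_of_pos_left _ hq
  obtain ⟨f, h2, h3⟩ := h1 (q * M - n) (by omega)
  have h4 : expand q (HK.av F (r + 1) 0 ^ M) * z = HK.av F (r + 1) 0 ^ n * th F (r + 1) n f := by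
    rw [← h2, map_pow, ← hX, ← pow_mul, ← mul_assoc, ← pow_add]
    congr 2; omega
  have h5 := congrArg (Cq q) h4
  rw [Cq_expand_mul hq, hqd, Cq_th e hp, ← hqd] at h5
  have h6 : DL (wa (r + 1)) (M + J - n) (Cq q f) := by
    intro m hm
    rw [coeff_Cq hq] at hm
    have := h3 _ hm
    rw [wgt_add] at this
    have e1 : wgt (wa (r + 1)) (q • m) = q * wgt (wa (r + 1)) m := by
      rw [wgt_eq_sum, wgt_eq_sum, Finset.mul_sum]
      refine Finset.sum_congr rfl fun i _ => ?_
      simp; ring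
    have e2 : wgt (wa (r + 1)) (cst (Fin (r + 1) ⊕ Fin (r + 1)) (q - 1)) = (r + 1) * (q - 1 : ℕ) := by
      rw [wgt_eq_sum, Fintype.sum_sum_type]
      simp [wa]
    rw [e1, e2] at this
    have e3 : ((q - 1 : ℕ) : ℤ) = q - 1 := by omega
    have e4 : ((q * M - n : ℕ) : ℤ) = q * M - n := by
      rw [Nat.cast_sub (by omega)]; push_cast; ring
    rw [e3, e4] at this
    have e5 : (n : ℤ) = h + (r + 1) := by rw [hn]; push_cast; ring
    have : (q : ℤ) * wgt (wa (r + 1)) m < q * (M + J - n + 1) := by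
      rw [e5] at this ⊢
      nlinarith
    have := lt_of_mul_lt_mul_left this (by positivity)
    linarith
  have h7 : DL (wt (r + 1) (2 * (r + 1) + h)) (M + J) (Ph F (r + 1) (HK.av F (r + 1) 0) ^ M * Ph F (r + 1) (Cq q z)) := by
    rw [← map_pow, ← map_mul, h5, map_mul, map_pow]
    exact ((wt_av (r + 1) _ 0).pow n).mul' (DL_th (by omega) h6) (by linarith)
  refine DL_cancel (i := (M : ℤ) * 1) ?_ (by rwa [mul_one])
  exact not_DL_pow (wt_a0 r _) M

end P5b

end HK

namespace HK

section lower

variable {F : Type*} [Field F] {p : ℕ} [ExpChar F p] {r : ℕ}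

lemma pr_mem (N : ℕ) (a : MvPolynomial (Fin N) F) :
    pr F r N a ∈ Algebra.adjoin F (xs F r '' {j | j < N}) := by
  induction a using MvPolynomial.induction_on with
  | C c => rw [show (C c : MvPolynomial (Fin N) F) = algebraMap F _ c from rfl, AlgHom.commutes]
           exact Subalgebra.algebraMap_mem _ c
  | add f g hf hg => rw [map_add]; exact Subalgebra.add_mem _ hf hg
  | mul_X f i hf =>
    rw [map_mul]
    refine Subalgebra.mul_mem _ hf ?_
    rw [pr, aeval_X]
    exact Algebra.subset_adjoin ⟨i, i.2, rfl⟩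

lemma pr_surj (N : ℕ) {y : Rt F r} (hy : y ∈ Algebra.adjoin F (xs F r '' {j | j < N})) :
    ∃ a, pr F r N a = y := by
  have : Algebra.adjoin F (xs F r '' {j | j < N}) ≤ (pr F r N).range := by
    rw [Algebra.adjoin_le_iff]
    rintro _ ⟨j, hj, rfl⟩
    exact ⟨yv F N j, pr_yv j hj⟩
  exact this hy

lemma pr_DL (N : ℕ) (a : MvPolynomial (Fin N) F) : DL (wt r N) 0 (Ph F r (pr F r N a)) := by
  have : Ph F r (pr F r N a) = aeval (fun j : Fin N => Ph F r (xs F r j)) a := by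
    have : (Ph F r).comp (pr F r N) = aeval (fun j : Fin N => Ph F r (xs F r j)) := by
      apply algHom_ext
      intro i; simp only [AlgHom.comp_apply, aeval_X, pr]
    rw [← this]; rfl
  rw [this]
  refine DL.aeval (w := fun _ => 0) _ (fun i => wt_xs _ _ _ i.2) ?_
  intro m _
  rw [wgt_eq_sum]; simp

lemma const_xs (j : ℕ) : coeff 0 (xs F r j) = 0 := by
  induction j using Nat.strong_induction_on with
  | _ j ih =>
    by_cases h : j < r
    · rw [xs_init F r ⟨j, h⟩]; simp
    · obtain ⟨k, rfl⟩ := Nat.exists_eq_add_of_le' (not_lt.mp h)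
      rw [xs_rec F r k, coeff_sum]
      refine Finset.sum_eq_zero fun i _ => ?_
      rw [← constantCoeff_eq, map_mul, av]; simp

lemma const_pr (N : ℕ) (a : MvPolynomial (Fin N) F) : coeff 0 (pr F r N a) = coeff 0 a := by
  induction a using MvPolynomial.induction_on with
  | C c => rw [show (C c : MvPolynomial (Fin N) F) = algebraMap F _ c from rfl, AlgHom.commutes]
           simp [algebraMap_eq]
  | add f g hf hg => rw [map_add, coeff_add, coeff_add, hf, hg]
  | mul_X f i hf =>
    rw [map_mul, ← constantCoeff_eq, ← constantCoeff_eq, map_mul, map_mul, constantCoeff_X, mul_zero]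
    have : constantCoeff (pr F r N (X i)) = 0 := by
      rw [pr, aeval_X, constantCoeff_eq]; exact const_xs _
    rw [this, mul_zero]

lemma fedder {n N : ℕ} (e : ℕ) (hp : p.Prime) (f : MvPolynomial (Fin N) F) :
    f ∈ Submodule.colon (Ideal.map (iterateFrobenius (MvPolynomial (Fin N) F) p e) (IM F r n N))
      (IM F r n N : Set (MvPolynomial (Fin N) F)) ↔ ∀ a ∈ IM F r n N, Cq (p ^ e) (f * a) ∈ IM F r n N := by
  have hq : 0 < p ^ e := pow_pos hp.pos e
  rw [Submodule.mem_colon, frob_IM]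
  constructor
  · intro h a ha
    have := (mem_map_expand hq _ _).mp (h a ha) 1
    rwa [one_mul] at this
  · intro h a ha
    refine (mem_map_expand hq _ _).mpr fun b => ?_
    have := h _ (Ideal.mul_mem_left _ b ha)
    convert this using 2
    rw [smul_eq_mul]; ring

lemma pr_Gof {N : ℕ} (e : ℕ) (hp : p.Prime) (G : Rt F r) (α : (Fin N → Fin (p ^ e)) → MvPolynomial (Fin N) F)
    (hα : ∀ b, pr F r N (α b) = Cq (p ^ e) (G * pr F r N (mu F b))) (a : MvPolynomial (Fin N) F) :
    pr F r N (Cq (p ^ e) (Gof α * a)) = Cq (p ^ e) (G * pr F r N a) := by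
  have hq : 0 < p ^ e := pow_pos hp.pos e
  rw [Cq_Gof hq, map_sum]
  conv_rhs => rw [Cq_decomp hq a]
  rw [map_sum, Finset.mul_sum, map_sum]
  refine Finset.sum_congr rfl fun b _ => ?_
  rw [map_mul (pr F r N), map_mul (pr F r N), pr_expand, mul_left_comm, Cq_expand_mul hq, hα, mul_comm]

lemma Dm_mem_pow {B : Type*} [CommRing B] (m : Ideal B) (s : ℕ) (x : ℕ → B) (k : ℕ) (hx : ∀ j, x j ∈ m) :
    Dm s x k ∈ m ^ s := by
  rw [Dm, Dt, det_apply]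
  refine Ideal.sum_mem _ fun σ _ => ?_
  have : ∏ i, (of fun i j : Fin s => x (i + (j + k))) (σ i) i ∈ m ^ s := by
    have := Ideal.prod_mem_prod (s := Finset.univ) (I := fun _ : Fin s => m)
      (x := fun i => (of fun i j : Fin s => x (i + (j + k))) (σ i) i) (fun i _ => hx _)
    simpa using this
  rcases Int.units_eq_one_or (Equiv.Perm.sign σ) with h | h <;> rw [h]
  · simpa using this
  · simpa using this

lemma lift_z (h N : ℕ) (hN : N = 2 * (r + 1) + h) : ∀ k m : ℕ, m ≤ k * (h + 1) →
    ∃ z ∈ (Ideal.span (Set.range (X : Fin N → MvPolynomial (Fin N) F))) ^ ((r + 1) * k),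
      pr F (r + 1) N z = Dm (r + 1) (xs F (r + 1)) 0 ^ k * av F (r + 1) 0 ^ m := by
  intro k
  induction k with
  | zero => intro m hm; exact ⟨1, by simp, by simp at hm; simp [hm]⟩
  | succ k ih =>
    intro m hm
    obtain ⟨z, hz, hz'⟩ := ih (m - min m (h + 1)) (by
      have : (k + 1) * (h + 1) = k * (h + 1) + (h + 1) := by ring
      omega)
    set m' := min m (h + 1) with hm'
    have hm2 : m' ≤ h + 1 := min_le_right _ _
    refine ⟨z * ((((-1) ^ r) ^ m') * Dm (r + 1) (yv F N) m'), ?_, ?_⟩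
    · rw [mul_add, mul_one, pow_add]
      refine Ideal.mul_mem_mul hz (Ideal.mul_mem_left _ _ (Dm_mem_pow _ _ _ _ fun j => ?_))
      unfold yv
      split_ifs
      · exact Ideal.subset_span ⟨_, rfl⟩
      · exact Ideal.zero_mem _
    · have e1 : pr F (r + 1) N (Dm (r + 1) (yv F N) m') = Dm (r + 1) (xs F (r + 1)) m' := by
        rw [Dm, ← AlgHom.coe_toRingHom, map_Dt]
        unfold Dm Dt
        congr 1
        ext i j
        simp only [AlgHom.coe_toRingHom, of_apply]
        rw [pr_yv]
        have := i.2
        have := j.2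
        omega
      rw [map_mul, map_mul, e1, hz', map_pow, map_pow, map_neg, map_one, ← a0_Dm (xs_rec F (r + 1))]
      have : m = (m - m') + m' := by omega
      conv_rhs => rw [this]
      ring

theorem lower (e h n N k : ℕ) (hp : p.Prime) (hN : N = 2 * (r + 1) + h) (hn : n = h + (r + 1)) (hh : 1 ≤ h)
    (hk : k = 2 * (p ^ e - 1) / (h + 1)) :
    ¬ (Submodule.colon (Ideal.map (iterateFrobenius (MvPolynomial (Fin N) F) p e) (IM F (r + 1) n N))
      (IM F (r + 1) n N : Set (MvPolynomial (Fin N) F)) * (Ideal.span (Set.range X)) ^ ((r + 1) * k) ≤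
      Ideal.map (iterateFrobenius (MvPolynomial (Fin N) F) p e) (Ideal.span (Set.range X))) := by
  have hq : 0 < p ^ e := pow_pos hp.pos e
  set q := p ^ e with hqd
  have hk1 : (h + 1) * k ≤ 2 * (q - 1) := by rw [hk]; exact Nat.mul_div_le _ _
  have hk2 : 2 * (q - 1) < (h + 1) * (k + 1) := by rw [hk]; exact Nat.lt_mul_div_succ _ (by omega)
  have hkq : k ≤ q - 1 := by nlinarith
  obtain ⟨b, b', hb1, hb2, hb3⟩ : ∃ b b' : ℕ, b + b' = q - 1 ∧ b + (h + 1) * k ≤ 2 * (q - 1) ∧ b' ≤ k * (h + 1) := by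
    rcases Nat.eq_zero_or_pos k with h0 | h0
    · exact ⟨q - 1, 0, by simp, by rw [h0]; omega, by simp⟩
    · exact ⟨0, q - 1, by simp, by omega, by nlinarith⟩
  set D := Dm (r + 1) (xs F (r + 1)) 0 with hD
  set a0 := av F (r + 1) 0 with ha0
  set G := D ^ (q - 1 - k) * a0 ^ b with hG
  have hker := ker_eq (F := F) (r := r + 1) (n := n) (N := N) (by omega) (by omega)
  have hφ : ∀ y : MvPolynomial (Fin N) F, ∃ a, pr F (r + 1) N a = Cq q (G * pr F (r + 1) N y) := by
    intro y
    apply pr_surj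
    have h1 : QQ (h + (r + 1)) _ (G * pr F (r + 1) N y) :=
      (((QQ.D0 h).pow (q - 1 - k)).mul ((QQ.av _ 0).pow b)).mul (QQ.adjoin h (by
        have := pr_mem (r := r + 1) N y
        rwa [show {j | j < N} = {j | j < 2 * (r + 1) + h} from by rw [hN]] at this))
    have h2 := P5 e hp h (J := 0) h1 (by
      have e1 : ((q - 1 - k : ℕ) : ℤ) = q - 1 - k := by omega
      have e2 : ((b + (h + 1) * k : ℕ) : ℤ) ≤ (2 * (q - 1) : ℕ) := by exact_mod_cast hb2
      have e3 : ((2 * (q - 1) : ℕ) : ℤ) = 2 * (q - 1) := by omega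
      rw [← hqd, e1]
      rw [e3] at e2
      push_cast at e2
      nlinarith)
    have := mem_adjoin _ _ _ h2
    rwa [← hN] at this
  choose ψ hψ using hφ
  set α : (Fin N → Fin q) → MvPolynomial (Fin N) F := fun b => ψ (mu F b) with hα
  have hGof := pr_Gof e hp G α (fun b => hψ _)
  have hf : Gof α ∈ Submodule.colon (Ideal.map (iterateFrobenius (MvPolynomial (Fin N) F) p e) (IM F (r + 1) n N))
      (IM F (r + 1) n N : Set (MvPolynomial (Fin N) F)) := by
    rw [fedder e hp]
    intro a ha
    rw [hker, RingHom.mem_ker] at ha ⊢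
    rw [hGof, ha, mul_zero, map_zero]
  obtain ⟨z, hz, hz'⟩ := lift_z (F := F) (r := r) h N hN k b' hb3
  intro hle
  have h1 := hle (Ideal.mul_mem_mul hf hz)
  rw [frob_m e hp] at h1
  have h2 := h1 (fun _ => Fin.rev ⟨0, hq⟩)
  have h3 : muR F (fun _ : Fin N => Fin.rev (⟨0, hq⟩ : Fin (p ^ e))) = 1 := by
    rw [muR, mu_eq]; simp
  rw [h3, one_mul, ← const_pr (r := r + 1), hGof, hz', coeff_Cq hq, smul_zero, zero_add] at h2
  refine P6 (F := F) (q - 1) r ?_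
  rw [← h2]
  congr 1
  rw [← hD, ← ha0, hG]
  have e1 : D ^ (q - 1) = D ^ (q - 1 - k) * D ^ k := by rw [← pow_add]; congr 1; omega
  have e2 : a0 ^ (q - 1) = a0 ^ b * a0 ^ b' := by rw [← pow_add, hb1]
  rw [e1, e2]; ring

end lower

end HK

namespace HK

section upper

variable {F : Type*} [Field F] {p : ℕ} [ExpChar F p] {r : ℕ}

lemma Ph_expand (e : ℕ) (f : Rt F r) : Ph F r (expand (p ^ e) f) = expand (p ^ e) (Ph F r f) := by
  have : (Ph F r).comp (expand (p ^ e)) = (expand (p ^ e)).comp (Ph F r) := by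
    apply algHom_ext
    intro i
    simp only [AlgHom.comp_apply, expand_X, map_pow]
    have h : Ph F r (X i) ∈ Fpp F (Fin r ⊕ Fin r) p e := by
      rcases i with i | i
      · rw [show (X (Sum.inl i) : Rt F r) = av F r i from rfl, Ph_av]
        have h2 : aof (fun k => (X (Sum.inl k) : Rt F r)) i ^ p ^ e =
            expand (p ^ e) (aof (fun k => (X (Sum.inl k) : Rt F r)) i) := by
          have h3 := map_aof (iterateFrobenius (Rt F r) p e) (fun k => (X (Sum.inl k) : Rt F r)) i
          have h4 := map_aof (expand (p ^ e) : Rt F r →ₐ[F] Rt F r).toRingHom (fun k => (X (Sum.inl k) : Rt F r)) i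
          rw [iterateFrobenius_def] at h3
          rw [AlgHom.toRingHom_eq_coe, AlgHom.coe_toRingHom] at h4
          rw [h3, h4]
          congr 1
          funext k
          rw [iterateFrobenius_def, expand_X]
        exact h2
      · rw [← xs_init, Ph_xs]
        exact Subring.sum_mem _ fun k _ => Subring.mul_mem _ (X_mem_Fpp e _) (Subring.pow_mem _ (X_mem_Fpp e _) _)
    exact h
  exact DFunLike.congr_fun this f

lemma DL_expand {σ : Type*} {w : σ → ℤ} {j : ℤ} {f : MvPolynomial σ F} (q : ℕ) (hf : DL w j f) :
    DL w (q * j) (expand q f) := by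
  have h1 : DL (fun i => (q : ℤ) * w i) (q * j) f := by
    intro m hm
    have : wgt (fun i => (q : ℤ) * w i) m = q * wgt w m := by
      simp only [wgt, Finsupp.weight_apply, Finsupp.sum, Finset.mul_sum]
      refine Finset.sum_congr rfl fun i _ => ?_
      simp only [nsmul_eq_mul]; ring
    rw [this]
    exact mul_le_mul_of_nonneg_left (hf m hm) (by positivity)
  have h2 := DL.aeval (v := w) (fun i : σ => (X i : MvPolynomial σ F) ^ q) (fun i => (DL.X w i le_rfl).pow q) h1
  exact h2

lemma const_Ph (f : Rt F (r + 1)) : coeff 0 (Ph F (r + 1) f) = coeff 0 f := by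
  have h : ((constantCoeff : Rt F (r + 1) →+* F).comp (Ph F (r + 1) : Rt F (r + 1) →+* Rt F (r + 1))) = constantCoeff := by
    apply MvPolynomial.ringHom_ext
    · intro c
      simp
    · intro i
      simp only [RingHom.comp_apply, RingHom.coe_coe, constantCoeff_X]
      rcases i with i | i
      · rw [show (X (Sum.inl i) : Rt F (r + 1)) = av F (r + 1) i from rfl, Ph_av, map_aof]
        simp only [constantCoeff_X]
        simp only [aof, pQ, map_zero, sub_zero, Finset.prod_const, Polynomial.coeff_X_pow]
        have := i.2
        simp
        omega
      · rw [← xs_init, Ph_xs]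
        simp
  exact RingHom.congr_fun h f

lemma D_expand (e : ℕ) : expand (p ^ e) (Dm r (xs F r) 0) = Dm r (xs F r) 0 ^ (p ^ e) := by
  have : Dm r (xs F r) 0 ∈ Fpp F (Fin r ⊕ Fin r) p e := Dt_mem _ _ _ _ fun i j => xs_mem_Fpp e _
  exact this.symm

lemma rep1 (e h N : ℕ) (hp : p.Prime) (hN : N = 2 * (r + 1) + h) (φ : Rt F (r + 1) → Rt F (r + 1))
    (hs : ∀ (ι : Type) (s : Finset ι) (c y : ι → Rt F (r + 1)),
      (∀ i, DL (wt (r + 1) N) 0 (Ph F (r + 1) (c i))) → (∀ i, DL (wt (r + 1) N) 0 (Ph F (r + 1) (y i))) →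
      φ (∑ i ∈ s, expand (p ^ e) (c i) * y i) = ∑ i ∈ s, c i * φ (y i)) :
    ∃ (M : ℕ) (G : Rt F (r + 1)), ∀ y, DL (wt (r + 1) N) 0 (Ph F (r + 1) y) →
      Cq (p ^ e) (G * y) = Dm (r + 1) (xs F (r + 1)) 0 ^ M * φ y := by
  have hq : 0 < p ^ e := pow_pos hp.pos e
  set D := Dm (r + 1) (xs F (r + 1)) 0 with hD
  have hD1 := (wt_D0 (F := F) r h N hN).1
  rw [← hD] at hD1
  have hDM : ∀ m : ℕ, DL (wt (r + 1) N) (-m) (Ph F (r + 1) (D ^ m)) := by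
    intro m
    rw [map_pow]
    refine (hD1.pow m).mono ?_
    have : (0 : ℤ) ≤ m * h := by positivity
    linarith
  have hclear : ∀ z : ((Fin (r + 1) ⊕ Fin (r + 1)) → Fin (p ^ e)) → Rt F (r + 1), ∃ M : ℕ, ∀ b,
      DL (wt (r + 1) N) 0 (Ph F (r + 1) (D ^ M * z b)) := by
    intro z
    choose j hj using fun b => exists_DL (wt (r + 1) N) (Ph F (r + 1) (z b))
    refine ⟨∑ b, j b, fun b => ?_⟩
    rw [map_mul]
    refine (hDM _).mul' (hj b) ?_
    have : j b ≤ ∑ b, j b := Finset.single_le_sum (fun _ _ => Nat.zero_le _) (Finset.mem_univ b)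
    have : (j b : ℤ) ≤ (∑ b, j b : ℕ) := by exact_mod_cast this
    linarith
  obtain ⟨M, hM⟩ := hclear fun b => mu F b
  have hM' : ∀ b : (Fin (r + 1) ⊕ Fin (r + 1)) → Fin (p ^ e),
      DL (wt (r + 1) N) 0 (Ph F (r + 1) (expand (p ^ e) (D ^ M) * mu F b)) := by
    intro b
    have : expand (p ^ e) (D ^ M) * mu F b = D ^ ((p ^ e - 1) * M) * (D ^ M * mu F b) := by
      rw [map_pow, hD, D_expand, ← mul_assoc, ← pow_mul, ← pow_add]
      congr 2
      obtain ⟨q', hq'⟩ := Nat.exists_eq_add_of_le' hq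
      rw [hq']; simp; ring
    rw [this, map_mul]
    exact (hDM _).mul' (hM b) (by simp; positivity)
  refine ⟨M, Gof (q := p ^ e) fun b => φ (expand (p ^ e) (D ^ M) * mu F b), fun y hy => ?_⟩
  obtain ⟨m, hm⟩ := hclear fun b => Cq (p ^ e) (muR F b * y)
  have hD0 : D ^ m ≠ 0 := pow_ne_zero _ (D0_ne_zero _)
  apply mul_left_cancel₀ hD0
  rw [Cq_Gof hq, Finset.mul_sum]
  have e1 := hs _ Finset.univ (fun b : (Fin (r + 1) ⊕ Fin (r + 1)) → Fin (p ^ e) => D ^ m * Cq (p ^ e) (muR F b * y))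
    (fun b => expand (p ^ e) (D ^ M) * mu F b) hm hM'
  have e2 := hs Unit Finset.univ (fun _ => D ^ (m + M)) (fun _ => y)
    (fun _ => (hDM _).mono (by simp)) (fun _ => hy)
  rw [Fintype.sum_unique, Fintype.sum_unique] at e2
  have e3 : ∑ b : (Fin (r + 1) ⊕ Fin (r + 1)) → Fin (p ^ e), expand (p ^ e) (D ^ m * Cq (p ^ e) (muR F b * y)) *
      (expand (p ^ e) (D ^ M) * mu F b) = expand (p ^ e) (D ^ (m + M)) * y := by
    conv_rhs => rw [Cq_decomp hq y]
    rw [Finset.mul_sum]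
    refine Finset.sum_congr rfl fun b _ => ?_
    rw [map_mul (expand (p ^ e)), pow_add, map_mul (expand (p ^ e))]; ring
  rw [e3, e2] at e1
  rw [← mul_assoc, ← pow_add, e1]
  refine Finset.sum_congr rfl fun b _ => ?_
  ring

lemma rep2 (e h N M : ℕ) (hp : p.Prime) (hN : N = 2 * (r + 1) + h) (φ : Rt F (r + 1) → Rt F (r + 1))
    (h0 : ∀ y, DL (wt (r + 1) N) 0 (Ph F (r + 1) y) → DL (wt (r + 1) N) 0 (Ph F (r + 1) (φ y)))
    (G : Rt F (r + 1)) (hG : ∀ y, DL (wt (r + 1) N) 0 (Ph F (r + 1) y) →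
      Cq (p ^ e) (G * y) = Dm (r + 1) (xs F (r + 1)) 0 ^ M * φ y) :
    DL (wt (r + 1) N) (-(((h : ℤ) - 1) * ((p ^ e : ℕ) - 1)) - (h + 1) * (p ^ e : ℕ) * M) (Ph F (r + 1) G) := by
  have hq : 0 < p ^ e := pow_pos hp.pos e
  by_contra hcon
  set D := Dm (r + 1) (xs F (r + 1)) 0 with hD
  obtain ⟨hD1, hD2⟩ := wt_D0 (F := F) r h N hN
  rw [← hD] at hD1 hD2
  set a0 := av F (r + 1) 0 with ha0
  have ha1 := wt_av (F := F) (r + 1) N 0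
  have ha2 := wt_a0 (F := F) r N
  rw [← ha0] at ha1 ha2
  have hG0 : Ph F (r + 1) G ≠ 0 := by intro h; rw [h] at hcon; exact hcon (DL.zero _ _)
  obtain ⟨g, hg1, hg2⟩ := exists_top (wt (r + 1) N) hG0
  set q := p ^ e with hqd
  have hgB : -(((h : ℤ) - 1) * ((q : ℕ) - 1)) - (h + 1) * (q : ℕ) * M < g := by
    by_contra h1
    exact hcon (hg1.mono (not_lt.mp h1))
  obtain ⟨a', b', hab⟩ : ∃ a' b' : ℕ, (a' : ℤ) - (h + 1) * b' = (1 - (h + 1) * M) - g := by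
    set x : ℤ := (1 - (h + 1) * M) - g
    refine ⟨(x + (h + 1) * x.natAbs).toNat, x.natAbs, ?_⟩
    rw [Int.toNat_of_nonneg]
    · ring
    · have : (0 : ℤ) ≤ h * x.natAbs := by positivity
      have : -x ≤ x.natAbs := by omega
      nlinarith
  have hq1 : ((q - 1 : ℕ) : ℤ) = q - 1 := by omega
  set y := G ^ (q - 1) * a0 ^ (q - 1 + q * a') * D ^ (q - 1 + q * b') with hy
  have hyD : DL (wt (r + 1) N) 0 (Ph F (r + 1) y) := by
    rw [hy, map_mul, map_mul, map_pow, map_pow, map_pow]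
    refine ((hg1.pow (q - 1)).mul (ha1.pow (q - 1 + q * a'))).mul' (hD1.pow (q - 1 + q * b')) ?_
    push_cast
    rw [hq1]
    have : (q : ℤ) * (a' - (h + 1) * b') = q * ((1 - (h + 1) * M) - g) := by rw [hab]
    linarith
  have h1 := hG y hyD
  set Gf := MvPolynomial.map (iterateFrobenius F p e) G with hGf
  have hGfe : expand q Gf = G ^ q := by
    rw [hGf, ← map_expand, hqd, map_iterateFrobenius_expand]
  set c0 := Cq q (a0 ^ (q - 1) * D ^ (q - 1)) with hc0
  have hqq : q - 1 + 1 = q := by omega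
  have h2 : Cq q (G * y) = Gf * a0 ^ a' * D ^ b' * c0 := by
    rw [hc0, ← Cq_expand_mul hq]
    congr 1
    rw [map_mul, map_mul, hGfe, map_pow, map_pow, hD, hqd, D_expand, ← hqd, ← hD,
      show expand q a0 = a0 ^ q from expand_X _ _, hy, ← pow_mul, ← pow_mul]
    have : G ^ q = G * G ^ (q - 1) := by rw [← pow_succ', hqq]
    rw [this, pow_add, pow_add]; ring
  have n1 : ¬ DL (wt (r + 1) N) (g - 1) (Ph F (r + 1) Gf) := by
    intro h3
    have h4 := DL_expand q h3
    rw [hqd, ← Ph_expand, ← hqd, hGfe, map_pow] at h4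
    refine not_DL_pow hg2 q (h4.mono ?_)
    have : (1 : ℤ) ≤ q := by omega
    linarith
  have n2 : ¬ DL (wt (r + 1) N) (0 - 1) (Ph F (r + 1) c0) := by
    intro h3
    have h4 := h3 0 (by
      rw [const_Ph, hc0, coeff_Cq hq, smul_zero, zero_add]
      exact P6 _ _)
    rw [wgt_zero] at h4
    omega
  have n3 := not_DL_mul (not_DL_mul (not_DL_mul n1 (not_DL_pow ha2 a')) (not_DL_pow hD2 b')) n2
  rw [← map_pow, ← map_pow, ← map_mul, ← map_mul, ← map_mul, ← h2, h1] at n3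
  apply n3
  rw [map_mul, map_pow]
  refine (hD1.pow M).mul' (h0 y hyD) ?_
  linarith

lemma rep3 (h N : ℕ) (hN : N = 2 * (r + 1) + h) (s : ℕ) : ∀ (B : ℤ) (G : Rt F (r + 1)),
    DL (wt (r + 1) N) B (Ph F (r + 1) G) → B + (h + 1) * (s - 1) ≤ -1 →
    ∃ G', G = Dm (r + 1) (xs F (r + 1)) 0 ^ s * G' := by
  induction s with
  | zero => intro B G _ _; exact ⟨G, by simp⟩
  | succ s ih =>
    intro B G hG hB
    push_cast at hB
    have : (0 : ℤ) ≤ (h + 1) * s := by positivity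
    obtain ⟨G', hG'⟩ := D0_dvd (hG.mono (show B ≤ -1 by linarith))
    rw [hG', map_mul] at hG
    obtain ⟨G2, hG2⟩ := ih (B + (h + 1)) G' (DL_cancel (wt_D0 (F := F) r h N hN).2 (hG.mono (by linarith)))
      (by linarith)
    exact ⟨G2, by rw [hG', hG2]; ring⟩

lemma rep (e h N k : ℕ) (hp : p.Prime) (hN : N = 2 * (r + 1) + h) (hkq : k ≤ p ^ e - 1)
    (hk : 2 * (p ^ e - 1) < (h + 1) * (k + 1)) (φ : Rt F (r + 1) → Rt F (r + 1))
    (h0 : ∀ y, DL (wt (r + 1) N) 0 (Ph F (r + 1) y) → DL (wt (r + 1) N) 0 (Ph F (r + 1) (φ y)))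
    (hs : ∀ (ι : Type) (s : Finset ι) (c y : ι → Rt F (r + 1)),
      (∀ i, DL (wt (r + 1) N) 0 (Ph F (r + 1) (c i))) → (∀ i, DL (wt (r + 1) N) 0 (Ph F (r + 1) (y i))) →
      φ (∑ i ∈ s, expand (p ^ e) (c i) * y i) = ∑ i ∈ s, c i * φ (y i)) :
    ∃ (G : Rt F (r + 1)), ∀ y, DL (wt (r + 1) N) 0 (Ph F (r + 1) y) →
      φ y = Cq (p ^ e) (Dm (r + 1) (xs F (r + 1)) 0 ^ (p ^ e - 1 - k) * G * y) := by
  have hq : 0 < p ^ e := pow_pos hp.pos e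
  obtain ⟨M, G, hG⟩ := rep1 e h N hp hN φ hs
  have h1 := rep2 e h N M hp hN φ h0 G hG
  obtain ⟨G', hG'⟩ := rep3 h N hN (p ^ e * M + (p ^ e - 1 - k)) _ G h1 (by
    have e1 : ((p ^ e - 1 - k : ℕ) : ℤ) = (p ^ e : ℕ) - 1 - k := by omega
    have e2 : ((2 * (p ^ e - 1) : ℕ) : ℤ) < ((h + 1) * (k + 1) : ℕ) := by exact_mod_cast hk
    have e3 : ((2 * (p ^ e - 1) : ℕ) : ℤ) = 2 * ((p ^ e : ℕ) - 1) := by omega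
    rw [e3] at e2
    rw [Nat.cast_add, Nat.cast_mul, e1]
    generalize ((p ^ e : ℕ) : ℤ) = Q at *
    push_cast at e2
    have : 2 * (Q - 1) + 1 ≤ (h + 1) * (k + 1) := e2
    linarith)
  refine ⟨G', fun y hy => ?_⟩
  apply mul_left_cancel₀ (pow_ne_zero M (D0_ne_zero (F := F) (r + 1)))
  rw [← hG y hy, ← Cq_expand_mul hq, hG', map_pow, D_expand]
  congr 1
  ring

end upper

end HK

namespace HK

section upper2

variable {F : Type*} [Field F] {p : ℕ} [ExpChar F p] {r : ℕ}

/-- negative x-degree -/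
def wneg (r : ℕ) : Fin r ⊕ Fin r → ℤ := Sum.elim (fun _ => 0) (fun _ => -1)

lemma wneg_any (f : Rt F r) : DL (wneg r) 0 f := by
  intro m _
  rw [wgt_eq_sum]
  refine Finset.sum_nonpos fun i _ => ?_
  rcases i with i | i <;> simp [wneg]

lemma wneg_xs (j : ℕ) : DL (wneg r) (-1) (xs F r j) := by
  induction j using Nat.strong_induction_on with
  | _ j ih =>
    by_cases h : j < r
    · rw [xs_init F r ⟨j, h⟩]; exact DL.X _ _ (by simp [wneg])
    · obtain ⟨k, rfl⟩ := Nat.exists_eq_add_of_le' (not_lt.mp h)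
      rw [xs_rec F r k]
      refine DL.sum _ _ fun i _ => (wneg_any _).mul' (ih _ ?_) (by simp)
      have := i.2; omega

lemma wneg_D : DL (wneg r) (-r) (Dm r (xs F r) 0) := by
  have := DL.det (w := wneg r) (of fun i j : Fin r => xs F r (i + (j + 0))) (-1) (fun a b => wneg_xs _)
  rw [mul_neg_one] at this
  exact this

lemma wneg_pr {N : ℕ} (k : ℕ) : ∀ a ∈ (Ideal.span (Set.range (X : Fin N → MvPolynomial (Fin N) F))) ^ k,
    DL (wneg r) (-k) (pr F r N a) := by
  induction k with
  | zero => intro a _; simpa using wneg_any _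
  | succ k ih =>
    intro a ha
    rw [pow_succ] at ha
    refine Submodule.mul_induction_on ha ?_ ?_
    · intro u hu v hv
      rw [map_mul]
      refine (ih u hu).mul' (j := -1) ?_ (by push_cast; linarith)
      refine Submodule.span_induction ?_ ?_ ?_ ?_ hv
      · rintro _ ⟨i, rfl⟩
        rw [pr, aeval_X]; exact wneg_xs _
      · rw [map_zero]; exact DL.zero _ _
      · intro x y _ _ hx hy; rw [map_add]; exact hx.add hy
      · intro c x _ hx
        rw [smul_eq_mul, map_mul]; exact (wneg_any _).mul' hx (by simp)
    · intro x y hx hy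
      rw [map_add]; exact hx.add hy

theorem upper (e h n N k : ℕ) (hp : p.Prime) (hN : N = 2 * (r + 1) + h) (hn : n = h + (r + 1)) (hh : 1 ≤ h)
    (hk : k = 2 * (p ^ e - 1) / (h + 1)) :
    Submodule.colon (Ideal.map (iterateFrobenius (MvPolynomial (Fin N) F) p e) (IM F (r + 1) n N))
      (IM F (r + 1) n N : Set (MvPolynomial (Fin N) F)) * (Ideal.span (Set.range X)) ^ ((r + 1) * k + 1) ≤
      Ideal.map (iterateFrobenius (MvPolynomial (Fin N) F) p e) (Ideal.span (Set.range X)) := by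
  have hq : 0 < p ^ e := pow_pos hp.pos e
  have hk1 : (h + 1) * k ≤ 2 * (p ^ e - 1) := by rw [hk]; exact Nat.mul_div_le _ _
  have hk2 : 2 * (p ^ e - 1) < (h + 1) * (k + 1) := by rw [hk]; exact Nat.lt_mul_div_succ _ (by omega)
  have hkq : k ≤ p ^ e - 1 := by nlinarith
  have hker := ker_eq (F := F) (r := r + 1) (n := n) (N := N) (by omega) (by omega)
  rw [Ideal.mul_le]
  intro f hf a ha
  rw [fedder e hp] at hf
  have hsurj : ∀ y, DL (wt (r + 1) N) 0 (Ph F (r + 1) y) → ∃ a, pr F (r + 1) N a = y := by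
    intro y hy
    apply pr_surj
    have := mem_adjoin (r + 1) h y (by rwa [← hN])
    rwa [← hN] at this
  set φ : Rt F (r + 1) → Rt F (r + 1) := fun y =>
    pr F (r + 1) N (Cq (p ^ e) (f * Function.invFun (pr F (r + 1) N) y)) with hφ
  have hφpr : ∀ a, φ (pr F (r + 1) N a) = pr F (r + 1) N (Cq (p ^ e) (f * a)) := by
    intro a
    have h1 : pr F (r + 1) N (Function.invFun (pr F (r + 1) N) (pr F (r + 1) N a)) = pr F (r + 1) N a :=
      Function.invFun_eq ⟨a, rfl⟩
    have h2 : Function.invFun (pr F (r + 1) N) (pr F (r + 1) N a) - a ∈ IM F (r + 1) n N := by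
      rw [hker, RingHom.mem_ker, map_sub, h1, sub_self]
    have h3 := hf _ h2
    rw [hker, RingHom.mem_ker, mul_sub, map_sub, map_sub, sub_eq_zero] at h3
    exact h3
  obtain ⟨G, hG⟩ := rep (F := F) (r := r) e h N k hp hN hkq hk2 φ (fun y _ => pr_DL N _) (by
    intro ι s c y hc hy
    choose c' hc' using fun i => hsurj _ (hc i)
    choose y' hy' using fun i => hsurj _ (hy i)
    have e1 : ∑ i ∈ s, expand (p ^ e) (c i) * y i = pr F (r + 1) N (∑ i ∈ s, expand (p ^ e) (c' i) * y' i) := by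
      rw [map_sum]
      refine Finset.sum_congr rfl fun i _ => ?_
      rw [map_mul, pr_expand, hc', hy']
    rw [e1, hφpr, Finset.mul_sum, map_sum, map_sum]
    refine Finset.sum_congr rfl fun i _ => ?_
    rw [mul_left_comm, Cq_expand_mul hq, map_mul (pr F (r + 1) N), ← hφpr, hc', hy'])
  rw [frob_m e hp]
  intro b
  rw [mul_left_comm, ← const_pr (r := r + 1), ← hφpr, hG _ (pr_DL N _), coeff_Cq hq, smul_zero, zero_add]
  have h1 := wneg_pr (r := r + 1) _ _ (Ideal.mul_mem_left _ (muR F b) ha)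
  have h2 := (((wneg_D (F := F) (r := r + 1)).pow (p ^ e - 1 - k)).mul (wneg_any G)).mul h1
  by_contra hne
  have h3 := h2 _ hne
  rw [wgt_eq_sum, Fintype.sum_sum_type] at h3
  simp only [wneg, Sum.elim_inl, Sum.elim_inr, cst_apply, mul_zero, Finset.sum_const_zero, Finset.sum_const,
    Finset.card_univ, Fintype.card_fin, nsmul_eq_mul] at h3
  have e1 : ((p ^ e - 1 : ℕ) : ℤ) = ((p ^ e - 1 - k : ℕ) : ℤ) + k := by omega
  rw [e1] at h3
  push_cast at h3
  nlinarith

end upper2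

section lim

lemma nu_lim (r h p : ℕ) (hp : p.Prime) :
    Tendsto (fun e : ℕ => (((r * (2 * (p ^ e - 1) / (h + 1)) : ℕ) : ℝ)) / (p ^ e : ℝ)) atTop
      (nhds (2 * (r : ℝ) / ((h : ℝ) + 1))) := by
  have hp1 : (1 : ℝ) < p := by exact_mod_cast hp.one_lt
  have hinv : Tendsto (fun e : ℕ => ((p : ℝ) ^ e)⁻¹) atTop (nhds 0) :=
    (tendsto_pow_atTop_atTop_of_one_lt hp1).inv_tendsto_atTop
  have hlow : Tendsto (fun e : ℕ => 2 * (r : ℝ) / ((h : ℝ) + 1) - (r * 3) * ((p : ℝ) ^ e)⁻¹) atTop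
      (nhds (2 * (r : ℝ) / ((h : ℝ) + 1))) := by
    simpa using tendsto_const_nhds.sub (hinv.const_mul ((r : ℝ) * 3))
  refine tendsto_of_tendsto_of_tendsto_of_le_of_le hlow tendsto_const_nhds ?_ ?_
  · intro e
    have hq : 0 < p ^ e := pow_pos hp.pos e
    have hqR : (0 : ℝ) < (p : ℝ) ^ e := by positivity
    have h1 : 2 * (p ^ e - 1) < (h + 1) * (2 * (p ^ e - 1) / (h + 1) + 1) := Nat.lt_mul_div_succ _ (by omega)
    have h2 : 2 * p ^ e ≤ (h + 1) * (2 * (p ^ e - 1) / (h + 1)) + 3 * (h + 1) := by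
      have : (h + 1) * (2 * (p ^ e - 1) / (h + 1) + 1) = (h + 1) * (2 * (p ^ e - 1) / (h + 1)) + (h + 1) := by ring
      omega
    have h3 : (2 : ℝ) * (p : ℝ) ^ e ≤ (h + 1) * ((2 * (p ^ e - 1) / (h + 1) : ℕ) : ℝ) + 3 * (h + 1) := by
      exact_mod_cast h2
    simp only
    push_cast [-Nat.cast_div]
    rw [le_div_iff₀ hqR, sub_mul, mul_assoc ((r : ℝ) * 3), inv_mul_cancel₀ hqR.ne', mul_one, sub_le_iff_le_add]
    rw [div_mul_eq_mul_div, div_le_iff₀ (by positivity)]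
    have hr : (0 : ℝ) ≤ r := by positivity
    nlinarith
  · intro e
    have hq : 0 < p ^ e := pow_pos hp.pos e
    have hqR : (0 : ℝ) < (p : ℝ) ^ e := by positivity
    have h1 : (h + 1) * (2 * (p ^ e - 1) / (h + 1)) ≤ 2 * p ^ e := (Nat.mul_div_le _ _).trans (by omega)
    have h3 : ((h : ℝ) + 1) * ((2 * (p ^ e - 1) / (h + 1) : ℕ) : ℝ) ≤ 2 * (p : ℝ) ^ e := by
      exact_mod_cast h1
    simp only
    rw [div_le_div_iff₀ hqR (by positivity), Nat.cast_mul]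
    have hr : (0 : ℝ) ≤ r := by positivity
    nlinarith

end lim

end HK

/-- The `F`-pure threshold of the homogeneous maximal ideal of the `t×n` Hankel determinantal
ring `R` equals `2(t-1)/(n-t+2)`; more precisely, for each `q = p^e` one has
`ν_e(m_R) = (t-1)·⌊2(q-1)/(n-t+2)⌋`, where `ν_e(m_R)` is the largest `r` with
`(I^{[q]} :_A I)·J^r ⊄ m_A^{[q]}` (here `J = m_A` is the preimage of `m_R`). -/
theorem hankel_fpt_maximal_ideal (F : Type*) [Field F] (p t n : ℕ) [CharP F p]
    (hp : p.Prime) (ht : 2 ≤ t) (htn : t ≤ n)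
    (H : Matrix (Fin t) (Fin n) (MvPolynomial (Fin (n + t - 1)) F))
    (hH : ∀ a b, H a b = X ⟨(a : ℕ) + (b : ℕ), by have := a.2; have := b.2; omega⟩)
    (I : Ideal (MvPolynomial (Fin (n + t - 1)) F))
    (hI : I = Ideal.span (Set.range fun g : Fin t → Fin n => (H.submatrix id g).det))
    (m : Ideal (MvPolynomial (Fin (n + t - 1)) F))
    (hm : m = Ideal.span (Set.range X))
    (ν : ℕ → ℕ) (hν : ∀ e, ν e = (t - 1) * (2 * (p ^ e - 1) / (n - t + 2))) :
    (∀ e : ℕ,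
      ¬ (Submodule.colon (frobeniusPower (p ^ e) I) I * m ^ (ν e)
          ≤ frobeniusPower (p ^ e) m) ∧
      Submodule.colon (frobeniusPower (p ^ e) I) I * m ^ (ν e + 1)
          ≤ frobeniusPower (p ^ e) m) ∧
    Tendsto (fun e : ℕ => (ν e : ℝ) / (p ^ e : ℝ)) atTop
      (nhds ((2 * ((t : ℝ) - 1)) / ((n : ℝ) - (t : ℝ) + 2))) := by
  obtain ⟨r, rfl⟩ := Nat.exists_eq_add_of_le' ht
  obtain ⟨h', rfl⟩ := Nat.exists_eq_add_of_le htn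
  have hE : ExpChar F p := ExpChar.prime hp
  have hN : r + 2 + h' + (r + 2) - 1 = 2 * (r + 1) + (h' + 1) := by omega
  have hn : r + 2 + h' = h' + 1 + (r + 1) := by omega
  have hfr : ∀ (e : ℕ) (J : Ideal (MvPolynomial (Fin (r + 2 + h' + (r + 2) - 1)) F)),
      frobeniusPower (p ^ e) J =
        Ideal.map (iterateFrobenius (MvPolynomial (Fin (r + 2 + h' + (r + 2) - 1)) F) p e) J := fun e J => rfl
  have hIM : I = HK.IM F (r + 1) (r + 2 + h') (r + 2 + h' + (r + 2) - 1) := by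
    rw [hI, HK.IM]
    congr 2
    funext g
    rw [HK.Dt]
    congr 1
    ext1 i j
    have h1 := i.2
    have h2 := (g j).2
    rw [Matrix.submatrix_apply, hH, of_apply, HK.yv, dif_pos (by omega)]
    rfl
  have hνe : ∀ e, ν e = (r + 1) * (2 * (p ^ e - 1) / ((h' + 1) + 1)) := by
    intro e
    rw [hν]
    congr 2
    omega
  refine ⟨fun e => ⟨?_, ?_⟩, ?_⟩
  · rw [hfr, hfr, hIM, hm, hνe]
    exact HK.lower e (h' + 1) _ _ _ hp hN hn (by omega) rfl
  · rw [hfr, hfr, hIM, hm, hνe]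
    exact HK.upper e (h' + 1) _ _ _ hp hN hn (by omega) rfl
  · simp only [hνe]
    have := HK.nu_lim (r + 1) (h' + 1) p hp
    convert this using 2
    push_cast
    congr 1 <;> ring
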